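/- arXiv:1803.02017 — 2 statements merged into one kernel-verified Lean document; each statement's English description precedes it below -/
import Mathlib

section
/- Let I ⊆ R be a monomial ideal, let f be a monomial of degree k, and let x_{i_1},…,x_{i_k} be distinct variables of R. Then: (i) depth(R/(I + (f))) ≥ depth(R/I) − 1; (ii) depth(R/I) ≤ depth(R/(I : f)); (iii) depth(R/(I + (x_{i_1},…,x_{i_k}))) ≥ depth(R/I) − k; (iv) reg(R/I) ≥ reg(R/(I : f)); (v) reg(R/(I + (f))) ≤ reg(R/I) + k − 1; (vi) depth(R/I) = depth(R/(I : f)) or depth(R/I) = depth(R/(I + (f))); (vii) if k = 1, then reg(R/I) = reg(R/(I : f)) + 1 or reg(R/I) = reg(R/(I + (f))). -/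
/-!
Write `S(I, f)` for the short exact sequence `0 → R/(I : f) → R/I → R/(I + (f)) → 0`, whose first map
is multiplication by `f`. Everything follows from its long exact sequences for `Ext(R/m, -)` (depth)
and for the graded groups `Tor(K, -)` (regularity, with the first term shifted by `deg f`), once the
two colon inequalities `depth R/I ≤ depth R/(I : f)` and `reg R/(I : f) ≤ reg R/I` are known.

*The colon inequalities.* By `KoszulReg.colon_induction` it suffices to treat a variable `f = x`. Let
`J = delX I x` be generated by the monomials of `I` not involving `x`. Then `J ⊆ I ⊆ J + (x)`,
`I + (x) = J + (x)`, and `x` is a nonzerodivisor on `R/J`. The kernel of `R/J → R/I` lies in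
`x (R/J) ≅ R/J`, so on Ext and Tor the map induced by the inclusion of the kernel factors through
multiplication by `x`, which is zero. Hence vanishing of Ext or Tor in a given degree passes from
`R/I` to `R/J` (`KoszulReg.EV_of_quot`, `KoszulReg.TV_inj`). The sequence `S(J, x)`, in which
`J : x = J`, then controls `R/(J + (x)) = R/(I + (x))`, and `S(I, x)` controls `R/(I : x)`.

*Depth.* Vanishing of `Ext^i(R/m, -)` is exactness of `Hom(P, -)` for a projective resolution `P` of
`R/m` (`KoszulReg.EV_iff`), and the needed parts of the long exact sequence are proved by diagram
chases with linear maps out of the projective modules `P_i`.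

*Regularity.* `Tor_i(K, M)_e` is replaced by the Koszul homology of the variables with coefficients in
`M`, the Koszul complex being an iterated mapping cone. `KoszulReg.CMreg_le_iff` states that
`reg R/I ≤ r` exactly when `Tor_i(K, R/I)_e = 0` for all `e > i + r`. A resolution with bounded
twists gives the vanishing by dimension shifting. Conversely, vanishing of `Tor_0` in high degrees
bounds the degrees of generators of each syzygy module, so that a resolution with the required bound
can be built step by step. That some bound `r` exists for a monomial ideal follows by induction on the
number of generators from `S(I, f)`.
-/

open MvPolynomial CategoryTheory Opposite

noncomputable section

/-- The polynomial ring `K[x_v : v ∈ σ]` over the field `K`. -/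
abbrev MvPoly (K : Type) [Field K] (σ : Type) : Type := MvPolynomial σ K

variable (K : Type) [Field K] (σ : Type)

/-- The graded maximal ideal `m = (x_v : v ∈ σ)` generated by all the variables. -/
def maxIdeal : Ideal (MvPoly K σ) := Ideal.span (Set.range MvPolynomial.X)

/-- The depth of `R/I` with respect to the graded maximal ideal, defined as
`inf { i | Ext^i(R/m, R/I) ≠ 0 }` (with value `⊤` for the zero module). -/
def depthQ (I : Ideal (MvPoly K σ)) : ℕ∞ :=
  sInf { d : ℕ∞ | ∃ i : ℕ, d = i ∧
    Nontrivial (((Ext (MvPoly K σ) (ModuleCat (MvPoly K σ)) i).obj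
      (op (ModuleCat.of (MvPoly K σ) (MvPoly K σ ⧸ maxIdeal K σ)))).obj
      (ModuleCat.of (MvPoly K σ) (MvPoly K σ ⧸ I))) }

/-- The degree-`e` homogeneous component condition, for an integer `e`
(for `e < 0` the component is zero). -/
def HomogComp (e : ℤ) (p : MvPoly K σ) : Prop :=
  if 0 ≤ e then p ∈ homogeneousSubmodule σ K e.toNat else p = 0

/-- `v` is a homogeneous element of degree `e` of the graded free module
`⊕_j R(-dg j)`. -/
def IsHomogVec {m : ℕ} (dg : Fin m → ℤ) (e : ℤ) (v : Fin m → MvPoly K σ) : Prop :=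
  ∀ j, HomogComp K σ (e - dg j) (v j)

/-- The degree-`e` homogeneous component of `R/I`. -/
def QuotComp (I : Ideal (MvPoly K σ)) (e : ℤ) : Submodule K (MvPoly K σ ⧸ I) :=
  if 0 ≤ e then
    Submodule.map (Ideal.Quotient.mkₐ K I).toLinearMap (homogeneousSubmodule σ K e.toNat)
  else ⊥

/-- A graded free resolution of `R/I` by finitely generated graded free modules
`F i = ⊕_{j < rk i} R(-dg i j)`, with degree preserving (degree zero) maps. -/
structure GradedFreeRes (I : Ideal (MvPoly K σ)) where
  rk : ℕ → ℕ
  dg : (i : ℕ) → Fin (rk i) → ℤ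
  dmap : (i : ℕ) → ((Fin (rk (i + 1)) → MvPoly K σ) →ₗ[MvPoly K σ] (Fin (rk i) → MvPoly K σ))
  aug : (Fin (rk 0) → MvPoly K σ) →ₗ[MvPoly K σ] (MvPoly K σ ⧸ I)
  aug_surj : Function.Surjective aug
  exact0 : Function.Exact (dmap 0) aug
  exactS : ∀ i, Function.Exact (dmap (i + 1)) (dmap i)
  graded : ∀ i (e : ℤ) v, IsHomogVec K σ (dg (i + 1)) e v → IsHomogVec K σ (dg i) e (dmap i v)
  aug_graded : ∀ (e : ℤ) v, IsHomogVec K σ (dg 0) e v → aug v ∈ QuotComp K σ I e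

/-- `R/I` admits a graded free resolution all of whose twists `dg i j` satisfy
`dg i j - i ≤ r`. -/
def ResBound (I : Ideal (MvPoly K σ)) (r : ℤ) : Prop :=
  ∃ F : GradedFreeRes K σ I, ∀ i j, F.dg i j - i ≤ r

open Classical in
/-- The Castelnuovo–Mumford regularity of `R/I`: the least `r` bounding the twists of
a graded free resolution of `R/I` (with the convention `⊥ = -∞` for the zero module). -/
def CMreg (I : Ideal (MvPoly K σ)) : WithBot ℤ :=
  if h : ∃ r : ℤ, ResBound K σ I r ∧ ∀ s : ℤ, ResBound K σ I s → r ≤ s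
  then ((h.choose : ℤ) : WithBot ℤ) else ⊥

variable {n : ℕ}

/-- The monomial `x^a`. -/
def mono (K : Type) [Field K] {n : ℕ} (a : Fin n →₀ ℕ) : MvPoly K (Fin n) :=
  MvPolynomial.monomial a 1

/-- A monomial ideal: an ideal generated by monomials. -/
def IsMonomialIdeal (I : Ideal (MvPoly K (Fin n))) : Prop :=
  ∃ S : Set (Fin n →₀ ℕ), I = Ideal.span (mono K '' S)

/-- A squarefree exponent vector. -/
def SqfreeExp (a : Fin n →₀ ℕ) : Prop := ∀ i, a i ≤ 1

/-- A squarefree monomial ideal: an ideal generated by squarefree monomials. -/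
def IsSqfreeMonomialIdeal (I : Ideal (MvPoly K (Fin n))) : Prop :=
  ∃ S : Set (Fin n →₀ ℕ), (∀ a ∈ S, SqfreeExp a) ∧ I = Ideal.span (mono K '' S)

end

namespace KoszulReg

/-! ### The Koszul complex as an iterated mapping cone -/

section Koszul

/-- The underlying group of the Koszul complex on `m` elements with coefficients in `M`, built as
an iterated mapping cone: `K_{m+1} = K_m ⊕ K_m e_m`. -/
def KT (M : Type) : ℕ → Type
  | 0 => M
  | m + 1 => KT M m × KT M m

instance instAddCommGroupKT (M : Type) [AddCommGroup M] : ∀ m, AddCommGroup (KT M m)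
  | 0 => inferInstanceAs (AddCommGroup M)
  | m + 1 =>
    letI := instAddCommGroupKT M m
    inferInstanceAs (AddCommGroup (KT M m × KT M m))

instance instModuleKT (R : Type) [CommRing R] (M : Type) [AddCommGroup M] [Module R M] :
    ∀ m, Module R (KT M m)
  | 0 => inferInstanceAs (Module R M)
  | m + 1 =>
    letI := instModuleKT R M m
    inferInstanceAs (Module R (KT M m × KT M m))

variable {R : Type} [CommRing R] {M : Type} [AddCommGroup M] [Module R M]
variable {M' : Type} [AddCommGroup M'] [Module R M']
variable {M'' : Type} [AddCommGroup M''] [Module R M'']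

/-- The Koszul differential for the elements `y 0, …, y (m - 1)`:
`∂ (a + b e_m) = (∂ a + y_m b) - (∂ b) e_m`. -/
def kd (M : Type) [AddCommGroup M] [Module R M] (y : ℕ → R) : ∀ m, KT M m →ₗ[R] KT M m
  | 0 => 0
  | m + 1 => LinearMap.prod (M := KT M m × KT M m)
      (kd M y m ∘ₗ LinearMap.fst R (KT M m) (KT M m) + y m • LinearMap.snd R (KT M m) (KT M m))
      (-(kd M y m ∘ₗ LinearMap.snd R (KT M m) (KT M m)))

/-- The element `a + b e_m` of `K_{m+1}`. -/
def KT.mk {M : Type} {m : ℕ} (a b : KT M m) : KT M (m + 1) := (a, b)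

theorem KT.exists_mk {M : Type} {m : ℕ} (c : KT M (m + 1)) : ∃ a b : KT M m, c = KT.mk a b :=
  ⟨c.1, c.2, rfl⟩

theorem kd_succ (y : ℕ → R) (m : ℕ) (a b : KT M m) :
    kd M y (m + 1) (KT.mk a b) = KT.mk (kd M y m a + y m • b) (-kd M y m b) := rfl

theorem KT.mk_add {M : Type} [AddCommGroup M] {m : ℕ} (a b a' b' : KT M m) :
    KT.mk a b + KT.mk a' b' = KT.mk (a + a') (b + b') := rfl

theorem KT.smul_mk {m : ℕ} (r : R) (a b : KT M m) :
    r • KT.mk a b = KT.mk (r • a) (r • b) := rfl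

theorem KT.mk_zero {M : Type} [AddCommGroup M] {m : ℕ} : KT.mk (0 : KT M m) 0 = 0 := rfl

theorem KT.mk_eq {M : Type} {m : ℕ} {a b a' b' : KT M m} (h : a = a') (h' : b = b') :
    KT.mk a b = KT.mk a' b' := by rw [h, h']

theorem KT.mk_eq_zero {M : Type} [AddCommGroup M] {m : ℕ} {a b : KT M m} (h : KT.mk a b = 0) :
    a = 0 ∧ b = 0 := Prod.mk.inj h

theorem kd_kd (y : ℕ → R) (m : ℕ) (c : KT M m) : kd M y m (kd M y m c) = 0 := by
  induction m with
  | zero => rfl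
  | succ m ih =>
    obtain ⟨a, b, rfl⟩ := KT.exists_mk c
    rw [kd_succ, kd_succ]
    refine KT.mk_eq ?_ ?_
    · rw [map_add, ih, map_smul, smul_neg]; abel
    · rw [map_neg, ih]; simp

/-- The map of Koszul complexes induced by an additive map of coefficients. -/
def kmap (φ : M →+ M') : ∀ m, KT M m →+ KT M' m
  | 0 => φ
  | m + 1 => AddMonoidHom.prodMap (kmap φ m) (kmap φ m)

theorem kmap_succ (φ : M →+ M') (m : ℕ) (a b : KT M m) :
    kmap φ (m + 1) (KT.mk a b) = KT.mk (kmap φ m a) (kmap φ m b) := rfl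

theorem kmap_smul (φ : M →+ M') (r : R) (h : ∀ v, φ (r • v) = r • φ v) (m : ℕ)
    (c : KT M m) : kmap φ m (r • c) = r • kmap φ m c := by
  induction m with
  | zero => exact h c
  | succ m ih =>
    obtain ⟨a, b, rfl⟩ := KT.exists_mk c
    rw [KT.smul_mk, kmap_succ, kmap_succ, KT.smul_mk, ih, ih]

/-- Only compatibility with the elements `y j`, `j < m`, is needed: this covers maps that are
linear over a smaller polynomial ring. -/
theorem kmap_kd (y : ℕ → R) (φ : M →+ M') (m : ℕ) (h : ∀ j < m, ∀ v, φ (y j • v) = y j • φ v)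
    (c : KT M m) : kmap φ m (kd M y m c) = kd M' y m (kmap φ m c) := by
  induction m with
  | zero => exact map_zero φ
  | succ m ih =>
    obtain ⟨a, b, rfl⟩ := KT.exists_mk c
    have ih' := ih (fun j hj => h j (by omega))
    rw [kd_succ, kmap_succ, kmap_succ, kd_succ]
    refine KT.mk_eq ?_ ?_
    · rw [map_add, ih', kmap_smul φ (y m) (h m (by omega))]
    · rw [map_neg, ih']

theorem kmap_comp (φ : M →+ M') (ψ : M' →+ M'') (m : ℕ) (c : KT M m) :
    kmap ψ m (kmap φ m c) = kmap (ψ.comp φ) m c := by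
  induction m with
  | zero => rfl
  | succ m ih =>
    obtain ⟨a, b, rfl⟩ := KT.exists_mk c
    rw [kmap_succ, kmap_succ, kmap_succ, ih, ih]

theorem kmap_id (m : ℕ) (c : KT M m) : kmap (AddMonoidHom.id M) m c = c := by
  induction m with
  | zero => rfl
  | succ m ih =>
    obtain ⟨a, b, rfl⟩ := KT.exists_mk c
    rw [kmap_succ, ih, ih]

theorem kmap_add (φ ψ : M →+ M') (m : ℕ) (c : KT M m) :
    kmap (φ + ψ) m c = kmap φ m c + kmap ψ m c := by
  induction m with
  | zero => rfl
  | succ m ih =>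
    obtain ⟨a, b, rfl⟩ := KT.exists_mk c
    rw [kmap_succ, kmap_succ, kmap_succ, ih, ih, KT.mk_add]

theorem kmap_zero (m : ℕ) (c : KT M m) : kmap (0 : M →+ M') m c = 0 := by
  induction m with
  | zero => rfl
  | succ m ih =>
    obtain ⟨a, b, rfl⟩ := KT.exists_mk c
    rw [kmap_succ, ih, ih]; rfl

theorem kmap_sum {ι : Type} (s : Finset ι) (φ : ι → M →+ M') (m : ℕ) (c : KT M m) :
    kmap (∑ j ∈ s, φ j) m c = ∑ j ∈ s, kmap (φ j) m c := by
  classical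
  induction s using Finset.induction_on with
  | empty => simp [kmap_zero]
  | insert a s ha ih => rw [Finset.sum_insert ha, Finset.sum_insert ha, kmap_add, ih]

theorem kmap_lsmul (r : R) (m : ℕ) (c : KT M m) :
    kmap (DistribSMul.toAddMonoidHom M r) m c = r • c := by
  induction m with
  | zero => rfl
  | succ m ih =>
    obtain ⟨a, b, rfl⟩ := KT.exists_mk c
    rw [kmap_succ, ih, ih]; rfl

/-- A contracting homotopy for multiplication by `y j`, `j < m`, on the Koszul complex:
left multiplication by `e_j`. -/
def kh (M : Type) [AddCommGroup M] (j : ℕ) : ∀ m, KT M m →+ KT M m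
  | 0 => 0
  | m + 1 => if j = m then
      AddMonoidHom.prod (M := KT M m × KT M m) 0 (AddMonoidHom.fst (KT M m) (KT M m))
    else AddMonoidHom.prod (M := KT M m × KT M m)
      ((kh M j m).comp (AddMonoidHom.fst (KT M m) (KT M m)))
      (-((kh M j m).comp (AddMonoidHom.snd (KT M m) (KT M m))))

theorem kh_self (m : ℕ) (a b : KT M m) : kh M m (m + 1) (KT.mk a b) = KT.mk 0 a :=
  congrArg (fun g : KT M m × KT M m →+ KT M m × KT M m => g (a, b)) (if_pos rfl)

theorem kh_succ {j m : ℕ} (h : j ≠ m) (a b : KT M m) :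
    kh M j (m + 1) (KT.mk a b) = KT.mk (kh M j m a) (-kh M j m b) :=
  congrArg (fun g : KT M m × KT M m →+ KT M m × KT M m => g (a, b)) (if_neg h)

theorem kh_smul (j : ℕ) (r : R) (m : ℕ) (c : KT M m) : kh M j m (r • c) = r • kh M j m c := by
  induction m with
  | zero => exact (smul_zero r).symm
  | succ m ih =>
    obtain ⟨a, b, rfl⟩ := KT.exists_mk c
    by_cases h : j = m
    · subst h; rw [KT.smul_mk, kh_self, kh_self, KT.smul_mk, smul_zero]
    · rw [KT.smul_mk, kh_succ h, kh_succ h, KT.smul_mk, ih, ih, smul_neg]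

theorem kd_kh (y : ℕ → R) {j m : ℕ} (hj : j < m) (c : KT M m) :
    kd M y m (kh M j m c) + kh M j m (kd M y m c) = y j • c := by
  induction m with
  | zero => omega
  | succ m ih =>
    obtain ⟨a, b, rfl⟩ := KT.exists_mk c
    by_cases h : j = m
    · subst h
      rw [kh_self, kd_succ, kd_succ, kh_self, KT.mk_add, KT.smul_mk]
      refine KT.mk_eq ?_ ?_
      · simp
      · abel
    · have := fun c => ih (c := c) (by omega)
      rw [kh_succ h, kd_succ, kd_succ, kh_succ h, KT.mk_add, KT.smul_mk]
      refine KT.mk_eq ?_ ?_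
      · rw [← this a, map_add, kh_smul, smul_neg]; abel
      · rw [← this b, map_neg, map_neg, neg_neg, neg_neg]

/-! ### Bigraded pieces of the Koszul complex and vanishing of its homology -/

/-- The piece of homological degree `i` and internal degree `e` of the Koszul complex of a module
whose internal degree `e` piece is `gr e`; every `e_j` has bidegree `(1, 1)`. -/
def kG (gr : ℤ → AddSubgroup M) : ∀ m : ℕ, ℤ → ℤ → AddSubgroup (KT M m)
  | 0, i, e => if i = 0 then gr e else ⊥
  | m + 1, i, e => AddSubgroup.prod (kG gr m i e) (kG gr m (i - 1) (e - 1))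

theorem kG_succ (gr : ℤ → AddSubgroup M) (m : ℕ) (i e : ℤ) (a b : KT M m) :
    KT.mk a b ∈ kG gr (m + 1) i e ↔
      a ∈ kG gr m i e ∧ b ∈ kG gr m (i - 1) (e - 1) := Iff.rfl

theorem kG_zero (gr : ℤ → AddSubgroup M) {i e : ℤ} (hi : i = 0) (c : KT M 0) :
    c ∈ kG gr 0 i e ↔ (id c : M) ∈ gr e :=
  iff_of_eq (congrArg (fun g : AddSubgroup M => (id c : M) ∈ g) (if_pos hi))

theorem kG_zero_ne (gr : ℤ → AddSubgroup M) {i e : ℤ} (hi : i ≠ 0) {c : KT M 0}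
    (hc : c ∈ kG gr 0 i e) : c = 0 :=
  (iff_of_eq (congrArg (fun g : AddSubgroup M => (id c : M) ∈ g) (if_neg hi))).1 hc

theorem kG_neg (gr : ℤ → AddSubgroup M) (m : ℕ) {i : ℤ} (hi : i < 0) {e : ℤ} {c : KT M m}
    (hc : c ∈ kG gr m i e) : c = 0 := by
  induction m generalizing i e with
  | zero =>
    exact kG_zero_ne gr hi.ne hc
  | succ m ih =>
    obtain ⟨a, b, rfl⟩ := KT.exists_mk c
    obtain ⟨ha, hb⟩ := (kG_succ ..).1 hc
    rw [ih hi ha, ih (by omega) hb, KT.mk_zero]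

theorem kG_shift (gr : ℤ → AddSubgroup M) (s : ℤ) (m : ℕ) (i e : ℤ) :
    kG (fun e => gr (e - s)) m i e = kG gr m i (e - s) := by
  induction m generalizing i e with
  | zero => rfl
  | succ m ih => rw [kG, kG, ih, ih, sub_right_comm e s 1]

theorem kmap_mem {gr : ℤ → AddSubgroup M} {gr' : ℤ → AddSubgroup M'} {φ : M →+ M'} {s : ℤ}
    (h : ∀ e, ∀ v ∈ gr e, φ v ∈ gr' (e + s)) (m : ℕ) {i e : ℤ} {c : KT M m}
    (hc : c ∈ kG gr m i e) : kmap φ m c ∈ kG gr' m i (e + s) := by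
  induction m generalizing i e with
  | zero =>
    by_cases hi : i = 0
    · rw [kG_zero _ hi] at hc ⊢
      exact h e c hc
    · obtain rfl := kG_zero_ne _ hi hc
      rw [map_zero]; exact zero_mem _
  | succ m ih =>
    obtain ⟨a, b, rfl⟩ := KT.exists_mk c
    obtain ⟨ha, hb⟩ := (kG_succ ..).1 hc
    refine (kG_succ ..).2 ⟨ih ha, ?_⟩
    have := ih hb
    rwa [sub_add_eq_add_sub] at this

theorem kmap_mem₀ {gr : ℤ → AddSubgroup M} {gr' : ℤ → AddSubgroup M'} {φ : M →+ M'}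
    (h : ∀ e, ∀ v ∈ gr e, φ v ∈ gr' e) (m : ℕ) {i e : ℤ} {c : KT M m}
    (hc : c ∈ kG gr m i e) : kmap φ m c ∈ kG gr' m i e := by
  have := kmap_mem (s := 0) (by simpa using h) m hc
  rwa [add_zero] at this

theorem kd_mem (y : ℕ → R) {gr : ℤ → AddSubgroup M} (m : ℕ)
    (h : ∀ j < m, ∀ e, ∀ v ∈ gr e, y j • v ∈ gr (e + 1)) {i e : ℤ} {c : KT M m}
    (hc : c ∈ kG gr m i e) : kd M y m c ∈ kG gr m (i - 1) e := by
  induction m generalizing i e with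
  | zero => exact zero_mem _
  | succ m ih =>
    have ih' := fun {i e c} => @ih (fun j hj => h j (by omega)) i e c
    obtain ⟨a, b, rfl⟩ := KT.exists_mk c
    obtain ⟨ha, hb⟩ := (kG_succ ..).1 hc
    rw [kd_succ]
    refine (kG_succ ..).2 ⟨add_mem (ih' ha) ?_, neg_mem (ih' hb)⟩
    have := kmap_mem (φ := DistribSMul.toAddMonoidHom M (y m)) (h m (by omega)) m hb
    rwa [kmap_lsmul, sub_add_cancel] at this

theorem kh_mem {gr : ℤ → AddSubgroup M} (j m : ℕ) {i e : ℤ} {c : KT M m}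
    (hc : c ∈ kG gr m i e) : kh M j m c ∈ kG gr m (i + 1) (e + 1) := by
  induction m generalizing i e with
  | zero => exact zero_mem _
  | succ m ih =>
    obtain ⟨a, b, rfl⟩ := KT.exists_mk c
    obtain ⟨ha, hb⟩ := (kG_succ ..).1 hc
    by_cases h : j = m
    · subst h
      rw [kh_self]
      refine (kG_succ ..).2 ⟨zero_mem _, ?_⟩
      simpa using ha
    · rw [kh_succ h]
      refine (kG_succ ..).2 ⟨ih ha, neg_mem ?_⟩
      have := ih hb
      simpa only [sub_add_cancel, add_sub_cancel_right] using this

/-- Vanishing of the Koszul homology `H_i(y_0, …, y_{m-1}; M)` in internal degree `e`. For the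
variables of a polynomial ring this is the vanishing of `Tor_i(K, M)_e`. -/
def TV (y : ℕ → R) (m : ℕ) (gr : ℤ → AddSubgroup M) (i e : ℤ) : Prop :=
  ∀ c ∈ kG gr m i e, kd M y m c = 0 → ∃ b ∈ kG gr m (i + 1) e, kd M y m b = c

theorem TV_neg (y : ℕ → R) (m : ℕ) (gr : ℤ → AddSubgroup M) {i : ℤ} (hi : i < 0) (e : ℤ) :
    TV y m gr i e := fun c hc _ => ⟨0, zero_mem _, by rw [kG_neg gr m hi hc, map_zero]⟩

theorem TV_shift (y : ℕ → R) (m : ℕ) (gr : ℤ → AddSubgroup M) (s i e : ℤ) :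
    TV y m (fun e => gr (e - s)) i e ↔ TV y m gr i (e - s) := by
  simp only [TV, kG_shift]

/-- The graded pieces `gr` are stable under multiplication by `y j`, `j < m`. -/
def Stable (y : ℕ → R) (m : ℕ) (gr : ℤ → AddSubgroup M) : Prop :=
  ∀ j < m, ∀ e, ∀ v ∈ gr e, y j • v ∈ gr (e + 1)

/-- A short exact sequence of graded modules, stated piece by piece. -/
structure GSES (y : ℕ → R) (m : ℕ) (gr : ℤ → AddSubgroup M) (φ : M →ₗ[R] M')
    (gr' : ℤ → AddSubgroup M') (ψ : M' →ₗ[R] M'') (gr'' : ℤ → AddSubgroup M'') : Prop where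
  st₁ : Stable y m gr
  st₂ : Stable y m gr'
  map₁ : ∀ e, ∀ v ∈ gr e, φ v ∈ gr' e
  map₂ : ∀ e, ∀ v ∈ gr' e, ψ v ∈ gr'' e
  inj : ∀ e, ∀ v ∈ gr e, φ v = 0 → v = 0
  comp : ∀ e, ∀ v ∈ gr e, ψ (φ v) = 0
  exact : ∀ e, ∀ v ∈ gr' e, ψ v = 0 → ∃ u ∈ gr e, φ u = v
  surj : ∀ e, ∀ v ∈ gr'' e, ∃ u ∈ gr' e, ψ u = v

section LES

variable {gr : ℤ → AddSubgroup M} {φ : M →ₗ[R] M'} {gr' : ℤ → AddSubgroup M'}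
    {ψ : M' →ₗ[R] M''} {gr'' : ℤ → AddSubgroup M''}

theorem kmap_surj {ψ : M' →+ M''} (h : ∀ e, ∀ v ∈ gr'' e, ∃ u ∈ gr' e, ψ u = v) (m : ℕ)
    {i e : ℤ} {c : KT M'' m} (hc : c ∈ kG gr'' m i e) :
    ∃ b ∈ kG gr' m i e, kmap ψ m b = c := by
  induction m generalizing i e with
  | zero =>
    by_cases hi : i = 0
    · rw [kG_zero _ hi] at hc
      obtain ⟨u, hu, huv⟩ := h e c hc
      exact ⟨u, (kG_zero _ hi u).2 hu, huv⟩
    · obtain rfl := kG_zero_ne _ hi hc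
      exact ⟨0, zero_mem _, map_zero ψ⟩
  | succ m ih =>
    obtain ⟨a, b, rfl⟩ := KT.exists_mk c
    obtain ⟨ha, hb⟩ := (kG_succ ..).1 hc
    obtain ⟨a', ha', rfl⟩ := ih ha
    obtain ⟨b', hb', rfl⟩ := ih hb
    exact ⟨KT.mk a' b', (kG_succ ..).2 ⟨ha', hb'⟩, rfl⟩

theorem kmap_inj {φ : M →+ M'} (h : ∀ e, ∀ v ∈ gr e, φ v = 0 → v = 0) (m : ℕ)
    {i e : ℤ} {c : KT M m} (hc : c ∈ kG gr m i e) (h0 : kmap φ m c = 0) : c = 0 := by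
  induction m generalizing i e with
  | zero =>
    by_cases hi : i = 0
    · rw [kG_zero _ hi] at hc
      exact h e c hc h0
    · exact kG_zero_ne _ hi hc
  | succ m ih =>
    obtain ⟨a, b, rfl⟩ := KT.exists_mk c
    obtain ⟨ha, hb⟩ := (kG_succ ..).1 hc
    obtain ⟨h1, h2⟩ := KT.mk_eq_zero h0
    rw [ih ha h1, ih hb h2, KT.mk_zero]

theorem kmap_exact {φ : M →+ M'} {ψ : M' →+ M''}
    (h : ∀ e, ∀ v ∈ gr' e, ψ v = 0 → ∃ u ∈ gr e, φ u = v) (m : ℕ)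
    {i e : ℤ} {c : KT M' m} (hc : c ∈ kG gr' m i e) (h0 : kmap ψ m c = 0) :
    ∃ b ∈ kG gr m i e, kmap φ m b = c := by
  induction m generalizing i e with
  | zero =>
    by_cases hi : i = 0
    · rw [kG_zero _ hi] at hc
      obtain ⟨u, hu, huv⟩ := h e c hc h0
      exact ⟨u, (kG_zero _ hi u).2 hu, huv⟩
    · obtain rfl := kG_zero_ne _ hi hc
      exact ⟨0, zero_mem _, map_zero φ⟩
  | succ m ih =>
    obtain ⟨a, b, rfl⟩ := KT.exists_mk c
    obtain ⟨ha, hb⟩ := (kG_succ ..).1 hc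
    obtain ⟨h1, h2⟩ := KT.mk_eq_zero h0
    obtain ⟨a', ha', rfl⟩ := ih ha h1
    obtain ⟨b', hb', rfl⟩ := ih hb h2
    exact ⟨KT.mk a' b', (kG_succ ..).2 ⟨ha', hb'⟩, rfl⟩

theorem kmap_kd_lin (y : ℕ → R) (φ : M →ₗ[R] M') (m : ℕ) (c : KT M m) :
    kmap (φ : M →+ M') m (kd M y m c) = kd M' y m (kmap (φ : M →+ M') m c) :=
  kmap_kd y _ m (fun j _ v => φ.map_smul (y j) v) c

theorem kmap_comp_zero {φ : M →+ M'} {ψ : M' →+ M''} (h : ∀ e, ∀ v ∈ gr e, ψ (φ v) = 0)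
    (m : ℕ) {i e : ℤ} {c : KT M m} (hc : c ∈ kG gr m i e) :
    kmap ψ m (kmap φ m c) = 0 := by
  induction m generalizing i e with
  | zero =>
    by_cases hi : i = 0
    · rw [kG_zero _ hi] at hc
      exact h e c hc
    · obtain rfl := kG_zero_ne _ hi hc
      exact (congrArg ψ (map_zero φ)).trans (map_zero ψ)
  | succ m ih =>
    obtain ⟨a, b, rfl⟩ := KT.exists_mk c
    obtain ⟨ha, hb⟩ := (kG_succ ..).1 hc
    exact KT.mk_eq (ih ha) (ih hb)

variable {y : ℕ → R} {m : ℕ}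

/-- `TV_mid`, `TV_right` and `TV_left` are the three vanishing statements read off the long exact
sequence of Koszul homology. -/
theorem TV_mid (S : GSES y m gr φ gr' ψ gr'') {i e : ℤ}
    (hA : TV y m gr i e) (hC : TV y m gr'' i e) : TV y m gr' i e := by
  intro c hc hdc
  obtain ⟨c2, hc2, hd2⟩ := hC (kmap (ψ : M' →+ M'') m c) (kmap_mem₀ S.map₂ m hc)
    (by rw [← kmap_kd_lin, hdc, map_zero])
  obtain ⟨b, hb, rfl⟩ := kmap_surj (ψ := (ψ : M' →+ M'')) S.surj m hc2
  rw [← kmap_kd_lin] at hd2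
  have hdb : kd M' y m b ∈ kG gr' m i e := by simpa using kd_mem y m S.st₂ hb
  obtain ⟨a, ha, hac⟩ := kmap_exact (φ := (φ : M →+ M')) (ψ := (ψ : M' →+ M'')) S.exact m
    (sub_mem hc hdb) (by rw [map_sub, hd2, sub_self])
  have hda : kd M y m a = 0 :=
    kmap_inj (φ := (φ : M →+ M')) S.inj m (kd_mem y m S.st₁ ha) (by
      rw [kmap_kd_lin, hac, map_sub, hdc, kd_kd, sub_self])
  obtain ⟨a', ha', rfl⟩ := hA a ha hda
  refine ⟨b + kmap (φ : M →+ M') m a', add_mem hb (kmap_mem₀ S.map₁ m ha'), ?_⟩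
  rw [map_add, ← kmap_kd_lin, hac, add_sub_cancel]

theorem TV_right (S : GSES y m gr φ gr' ψ gr'') {i e : ℤ}
    (hB : TV y m gr' i e) (hA : TV y m gr (i - 1) e) : TV y m gr'' i e := by
  intro c hc hdc
  obtain ⟨b, hb, rfl⟩ := kmap_surj (ψ := (ψ : M' →+ M'')) S.surj m hc
  rw [← kmap_kd_lin] at hdc
  obtain ⟨a, ha, hab⟩ := kmap_exact (φ := (φ : M →+ M')) (ψ := (ψ : M' →+ M'')) S.exact m
    (kd_mem y m S.st₂ hb) hdc
  obtain ⟨a', ha', rfl⟩ := hA a ha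
    (kmap_inj (φ := (φ : M →+ M')) S.inj m (kd_mem y m S.st₁ ha) (by
      rw [kmap_kd_lin, hab, kd_kd]))
  rw [sub_add_cancel] at ha'
  obtain ⟨b', hb', hbb⟩ := hB (b - kmap (φ : M →+ M') m a')
    (sub_mem hb (kmap_mem₀ S.map₁ m ha')) (by rw [map_sub, ← kmap_kd_lin, hab, sub_self])
  refine ⟨kmap (ψ : M' →+ M'') m b', kmap_mem₀ S.map₂ m hb', ?_⟩
  rw [← kmap_kd_lin, hbb, map_sub,
    kmap_comp_zero (φ := (φ : M →+ M')) (ψ := (ψ : M' →+ M'')) S.comp m ha', sub_zero]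

theorem TV_left (S : GSES y m gr φ gr' ψ gr'') {i e : ℤ}
    (hB : TV y m gr' i e) (hC : TV y m gr'' (i + 1) e) : TV y m gr i e := by
  intro a ha hda
  obtain ⟨b, hb, hba⟩ := hB (kmap (φ : M →+ M') m a) (kmap_mem₀ S.map₁ m ha)
    (by rw [← kmap_kd_lin, hda, map_zero])
  obtain ⟨c, hc, hcb⟩ := hC (kmap (ψ : M' →+ M'') m b) (kmap_mem₀ S.map₂ m hb)
    (by rw [← kmap_kd_lin, hba,
      kmap_comp_zero (φ := (φ : M →+ M')) (ψ := (ψ : M' →+ M'')) S.comp m ha])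
  obtain ⟨b', hb', rfl⟩ := kmap_surj (ψ := (ψ : M' →+ M'')) S.surj m hc
  rw [← kmap_kd_lin] at hcb
  have hdb : kd M' y m b' ∈ kG gr' m (i + 1) e := by simpa using kd_mem y m S.st₂ hb'
  obtain ⟨a', ha', haa⟩ := kmap_exact (φ := (φ : M →+ M')) (ψ := (ψ : M' →+ M'')) S.exact m
    (sub_mem hb hdb) (by rw [map_sub, hcb, sub_self])
  have hda' : kd M y m a' ∈ kG gr m i e := by simpa using kd_mem y m S.st₁ ha'
  refine ⟨a', ha', sub_eq_zero.1 (kmap_inj (φ := (φ : M →+ M')) S.inj m (sub_mem hda' ha) ?_)⟩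
  rw [map_sub, kmap_kd_lin, haa, map_sub, kd_kd, sub_zero, hba, sub_self]

/-- Let `ψ : M' → M''` be a graded surjection whose kernel is contained in `y j M'`, where `y j` is
a nonzerodivisor on `M'`. Then `H_i(M') → H_i(M'')` is injective: the map from the homology of the
kernel to that of `M'` factors through multiplication by `y j`, which is null-homotopic. -/
theorem TV_inj (st : Stable y m gr') (map₂ : ∀ e, ∀ v ∈ gr' e, ψ v ∈ gr'' e)
    (surj : ∀ e, ∀ v ∈ gr'' e, ∃ u ∈ gr' e, ψ u = v) {j : ℕ} (hj : j < m)
    (reg : ∀ v : M', y j • v = 0 → v = 0)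
    (ker : ∀ e, ∀ v ∈ gr' e, ψ v = 0 → ∃ u ∈ gr' (e - 1), y j • u = v) {i e : ℤ}
    (hC : TV y m gr'' i e) : TV y m gr' i e := by
  intro z hz hdz
  obtain ⟨c, hc, hcz⟩ := hC (kmap (ψ : M' →+ M'') m z) (kmap_mem₀ map₂ m hz)
    (by rw [← kmap_kd_lin, hdz, map_zero])
  obtain ⟨b, hb, rfl⟩ := kmap_surj (ψ := (ψ : M' →+ M'')) surj m hc
  rw [← kmap_kd_lin] at hcz
  have hdb : kd M' y m b ∈ kG gr' m i e := by simpa using kd_mem y m st hb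
  obtain ⟨w, hw, hwz⟩ := kmap_exact (gr := fun e => gr' (e - 1))
    (φ := DistribSMul.toAddMonoidHom M' (y j)) (ψ := (ψ : M' →+ M'')) ker m
    (sub_mem hz hdb) (by rw [map_sub, hcz, sub_self])
  rw [kG_shift] at hw
  rw [kmap_lsmul] at hwz
  have hdw : kd M' y m w = 0 := by
    refine kmap_inj (φ := DistribSMul.toAddMonoidHom M' (y j)) (fun _ v _ h => reg v h) m
      (kd_mem y m st hw) ?_
    rw [kmap_lsmul, ← map_smul, hwz, map_sub, hdz, kd_kd, sub_self]
  have hh := kd_kh y hj w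
  rw [hdw, map_zero, add_zero] at hh
  refine ⟨b + kh M' j m w, add_mem hb ?_, ?_⟩
  · have := kh_mem j m hw
    rwa [sub_add_cancel] at this
  · rw [map_add, hh, hwz, add_sub_cancel]

end LES

end Koszul

/-! ### Koszul homology in degree zero and of free modules -/

section HZero

variable {R : Type} [CommRing R] {M : Type} [AddCommGroup M] [Module R M]

/-- Inclusion of the homological degree zero part of the Koszul complex. -/
def kincl (M : Type) [AddCommGroup M] : ∀ m, M → KT M m
  | 0 => id
  | m + 1 => fun v => KT.mk (kincl M m v) 0

/-- Projection onto the homological degree zero part of the Koszul complex. -/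
def kproj (M : Type) [AddCommGroup M] : ∀ m, KT M m →+ M
  | 0 => AddMonoidHom.id M
  | m + 1 => (kproj M m).comp (AddMonoidHom.fst (KT M m) (KT M m))

theorem kproj_succ (m : ℕ) (a b : KT M m) : kproj M (m + 1) (KT.mk a b) = kproj M m a := rfl

theorem kproj_kincl (m : ℕ) (v : M) : kproj M m (kincl M m v) = v := by
  induction m with
  | zero => rfl
  | succ m ih => exact ih

theorem kd_kincl (y : ℕ → R) (m : ℕ) (v : M) : kd M y m (kincl M m v) = 0 := by
  induction m with
  | zero => rfl
  | succ m ih =>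
    rw [kincl, kd_succ, ih, smul_zero, map_zero, neg_zero, add_zero, KT.mk_zero]

theorem kincl_mem (gr : ℤ → AddSubgroup M) (m : ℕ) {e : ℤ} {v : M} (hv : v ∈ gr e) :
    kincl M m v ∈ kG gr m 0 e := by
  induction m with
  | zero => exact (kG_zero gr rfl _).2 hv
  | succ m ih => exact (kG_succ ..).2 ⟨ih, zero_mem _⟩

theorem kproj_mem (gr : ℤ → AddSubgroup M) (m : ℕ) {e : ℤ} {c : KT M m}
    (hc : c ∈ kG gr m 0 e) : kproj M m c ∈ gr e := by
  induction m with
  | zero => exact (kG_zero gr rfl _).1 hc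
  | succ m ih =>
    obtain ⟨a, b, rfl⟩ := KT.exists_mk c
    exact ih ((kG_succ ..).1 hc).1

theorem kproj_smul (m : ℕ) (r : R) (c : KT M m) : kproj M m (r • c) = r • kproj M m c := by
  induction m with
  | zero => rfl
  | succ m ih =>
    obtain ⟨a, b, rfl⟩ := KT.exists_mk c
    exact ih a

theorem kproj_kd_mem (y : ℕ → R) (gr : ℤ → AddSubgroup M) (m : ℕ) {e : ℤ} {c : KT M m}
    (hc : c ∈ kG gr m 1 e) : kproj M m (kd M y m c) ∈ Submodule.span R (gr (e - 1) : Set M) := by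
  induction m with
  | zero =>
    obtain rfl := kG_zero_ne _ one_ne_zero hc
    rw [map_zero, map_zero]; exact zero_mem _
  | succ m ih =>
    obtain ⟨a, b, rfl⟩ := KT.exists_mk c
    obtain ⟨ha, hb⟩ := (kG_succ ..).1 hc
    rw [kd_succ, kproj_succ, map_add, kproj_smul]
    refine add_mem (ih ha) (Submodule.smul_mem _ _ (Submodule.subset_span ?_))
    exact kproj_mem gr m (by simpa using hb)

/-- If `H_0` vanishes in degree `e`, then there are no new generators in degree `e`. -/
theorem TV.mem_span {y : ℕ → R} {gr : ℤ → AddSubgroup M} {m : ℕ} {e : ℤ}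
    (h : TV y m gr 0 e) {v : M} (hv : v ∈ gr e) :
    v ∈ Submodule.span R (gr (e - 1) : Set M) := by
  obtain ⟨b, hb, hbv⟩ := h _ (kincl_mem gr m hv) (kd_kincl y m v)
  have := kproj_kd_mem y gr m (e := e) (c := b) (by simpa using hb)
  rwa [hbv, kproj_kincl] at this

end HZero

section Free

variable {K : Type} [Field K] {n : ℕ}

/-- The sequence of variables `x_0, …, x_{n-1}` (continued by zeros). -/
noncomputable def yv (K : Type) [Field K] (n : ℕ) : ℕ → MvPoly K (Fin n) :=
  fun j => if h : j < n then X ⟨j, h⟩ else 0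

theorem yv_lt {j : ℕ} (h : j < n) : yv K n j = X ⟨j, h⟩ := dif_pos h

theorem homogComp_iff (e : ℤ) (p : MvPoly K (Fin n)) :
    HomogComp K (Fin n) e p ↔ ∀ d, coeff d p ≠ 0 → (d.degree : ℤ) = e := by
  unfold HomogComp
  split_ifs with h
  · rw [mem_homogeneousSubmodule]
    constructor
    · intro hp d hd
      by_contra hne
      exact hd (hp.coeff_eq_zero (by omega))
    · intro hp d hd
      have := hp d hd
      have hw : Finsupp.weight 1 d = d.degree := by
        rw [Finsupp.degree_eq_weight_one]; rfl
      rw [hw]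
      omega
  · constructor
    · rintro rfl d hd
      simp at hd
    · intro hp
      ext d
      by_contra hd
      have := hp d (by simpa using hd)
      omega

/-- Degree `e` polynomials in the variables `x_0, …, x_{m-1}`. -/
def grV (K : Type) [Field K] (n m : ℕ) (e : ℤ) : AddSubgroup (MvPoly K (Fin n)) where
  carrier := {p | ∀ d, coeff d p ≠ 0 → (d.degree : ℤ) = e ∧ ∀ i : Fin n, m ≤ i.val → d i = 0}
  zero_mem' := by intro d hd; simp at hd
  add_mem' := by
    intro p q hp hq d hd
    rw [coeff_add] at hd
    by_cases h : coeff d p = 0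
    · exact hq d (by rintro h'; exact hd (by rw [h, h', add_zero]))
    · exact hp d h
  neg_mem' := by
    intro p hp d hd
    exact hp d (by simpa using hd)

theorem mem_grV {m : ℕ} {e : ℤ} {p : MvPoly K (Fin n)} : p ∈ grV K n m e ↔
    ∀ d, coeff d p ≠ 0 → (d.degree : ℤ) = e ∧ ∀ i : Fin n, m ≤ i.val → d i = 0 := Iff.rfl

/-- `p ↦ (p - p|_{x = 0}) / x`, for the variable `x = x_i`. -/
noncomputable def divX (K : Type) [Field K] {n : ℕ} (i : Fin n) : MvPoly K (Fin n) →+ MvPoly K (Fin n) where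
  toFun p := divMonomial p (Finsupp.single i 1)
  map_zero' := zero_divMonomial _
  map_add' p q := add_divMonomial p q _

theorem coeff_divX (i : Fin n) (p : MvPoly K (Fin n)) (d : Fin n →₀ ℕ) :
    coeff d (divX K i p) = coeff (Finsupp.single i 1 + d) p := coeff_divMonomial _ _ _

/-- `p ↦ p|_{x = 0}`, for the variable `x = x_i`. -/
noncomputable def evX (K : Type) [Field K] {n : ℕ} (i : Fin n) : MvPoly K (Fin n) →+ MvPoly K (Fin n) :=
  AddMonoidHom.id _ - (DistribSMul.toAddMonoidHom _ (X i : MvPoly K (Fin n))).comp (divX K i)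

theorem evX_apply (i : Fin n) (p : MvPoly K (Fin n)) :
    evX K i p = modMonomial p (Finsupp.single i 1) := by
  have := divMonomial_add_modMonomial_single p i
  simp only [evX, AddMonoidHom.sub_apply, AddMonoidHom.id_apply, AddMonoidHom.comp_apply,
    DistribSMul.toAddMonoidHom_apply, smul_eq_mul]
  exact sub_eq_of_eq_add' this.symm

theorem divX_X_mul (i : Fin n) (p : MvPoly K (Fin n)) : divX K i (X i * p) = p :=
  X_mul_divMonomial i p

theorem divX_X_mul_ne {i j : Fin n} (h : j ≠ i) (p : MvPoly K (Fin n)) :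
    divX K i (X j * p) = X j * divX K i p := by
  ext d
  rw [coeff_divX, coeff_X_mul', coeff_X_mul', coeff_divX]
  have h1 : j ∈ (Finsupp.single i 1 + d).support ↔ j ∈ d.support := by
    simp [Finsupp.single_eq_of_ne h]
  by_cases hj : j ∈ d.support
  · rw [if_pos (h1.2 hj), if_pos hj]
    congr 1
    ext k
    have : 1 ≤ d j := Nat.one_le_iff_ne_zero.2 (Finsupp.mem_support_iff.1 hj)
    simp only [Finsupp.coe_tsub, Finsupp.coe_add, Pi.sub_apply, Pi.add_apply]
    by_cases hk : k = j
    · subst hk; rw [Finsupp.single_eq_of_ne h]; simp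
    · rw [Finsupp.single_eq_of_ne hk]; simp
  · rw [if_neg (fun h => hj (h1.1 h)), if_neg hj]

theorem evX_X_mul (i : Fin n) (p : MvPoly K (Fin n)) : evX K i (X i * p) = 0 := by
  rw [evX_apply, X_mul_modMonomial]

theorem evX_X_mul_ne {i j : Fin n} (h : j ≠ i) (p : MvPoly K (Fin n)) :
    evX K i (X j * p) = X j * evX K i p := by
  simp only [evX, AddMonoidHom.sub_apply, AddMonoidHom.id_apply, AddMonoidHom.comp_apply,
    DistribSMul.toAddMonoidHom_apply, smul_eq_mul, divX_X_mul_ne h]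
  ring

/-- The Koszul complex of the variables on the polynomial ring is acyclic. The operator
`(a, b) ↦ (0, divX a)` is a homotopy from the identity to `(a, b) ↦ (a|_{x_m = 0}, 0)`, which
removes the variable `x_m`. -/
theorem TV_grV (m : ℕ) (hm : m ≤ n) (i e : ℤ) (hie : i ≠ 0 ∨ e ≠ 0) :
    TV (yv K n) m (grV K n m) i e := by
  induction m generalizing i e with
  | zero =>
    intro c hc _
    suffices c = 0 from ⟨0, zero_mem _, by rw [this, map_zero]⟩
    by_cases hi : i = 0
    · have he : e ≠ 0 := hie.resolve_left (not_not.2 hi)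
      rw [kG_zero _ hi, mem_grV] at hc
      refine MvPolynomial.ext (σ := Fin n) (R := K) _ _ fun d => ?_
      by_contra hd
      obtain ⟨h1, h2⟩ := hc d hd
      have : d = 0 := Finsupp.ext fun i => h2 i (Nat.zero_le _)
      subst this
      simp at h1
      exact he h1.symm
    · exact kG_zero_ne _ hi hc
  | succ m ih =>
    intro c hc hdc
    obtain ⟨a, b, rfl⟩ := KT.exists_mk c
    obtain ⟨ha, hb⟩ := (kG_succ ..).1 hc
    rw [kd_succ] at hdc
    obtain ⟨h1, h2⟩ := KT.mk_eq_zero hdc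
    rw [neg_eq_zero] at h2
    have hmn : m < n := hm
    let v : Fin n := ⟨m, hmn⟩
    have hym : yv K n m = X v := yv_lt hmn
    have hne : ∀ j < m, ∀ hj : j < n, (⟨j, hj⟩ : Fin n) ≠ v := by
      intro j hj hj' h
      have := congrArg Fin.val h
      simp only [v] at this
      omega
    have hD : ∀ j < m, ∀ p, divX K v (yv K n j • p) = yv K n j • divX K v p := by
      intro j hj p
      rw [yv_lt (hj.trans hmn), smul_eq_mul, smul_eq_mul, divX_X_mul_ne (hne j hj _)]
    have hE : ∀ j < m, ∀ p, evX K v (yv K n j • p) = yv K n j • evX K v p := by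
      intro j hj p
      rw [yv_lt (hj.trans hmn), smul_eq_mul, smul_eq_mul, evX_X_mul_ne (hne j hj _)]
    have hda : kd _ (yv K n) m a = - (yv K n m • b) := eq_neg_of_add_eq_zero_left h1
    have hEy : kmap (evX K v) m (yv K n m • b) = 0 := by
      rw [← kmap_lsmul, kmap_comp, ← kmap_zero (M := MvPoly K (Fin n)) m b]
      congr 2
      refine AddMonoidHom.ext fun p => ?_
      simp only [AddMonoidHom.comp_apply, DistribSMul.toAddMonoidHom_apply, hym, smul_eq_mul,
        evX_X_mul, AddMonoidHom.zero_apply]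
    have hDy : kmap (divX K v) m (yv K n m • b) = b := by
      rw [← kmap_lsmul, kmap_comp]
      conv_rhs => rw [← kmap_id m b]
      congr 2
      refine AddMonoidHom.ext fun p => ?_
      simp only [AddMonoidHom.comp_apply, DistribSMul.toAddMonoidHom_apply, hym, smul_eq_mul,
        divX_X_mul, AddMonoidHom.id_apply]
    have hEmem : kmap (evX K v) m a ∈ kG (grV K n m) m i e := by
      refine kmap_mem₀ ?_ m ha
      intro e p hp d hd
      rw [evX_apply] at hd
      have hle : ¬ Finsupp.single v 1 ≤ d := fun h => hd (coeff_modMonomial_of_le _ h)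
      rw [coeff_modMonomial_of_not_le _ hle] at hd
      obtain ⟨h1, h2⟩ := hp d hd
      refine ⟨h1, fun i hi => ?_⟩
      rcases Nat.eq_or_lt_of_le hi with h | h
      · obtain rfl : i = v := Fin.ext h.symm
        by_contra h0
        exact hle (Finsupp.single_le_iff.2 (Nat.one_le_iff_ne_zero.2 h0))
      · exact h2 i h
    obtain ⟨c', hc', hdc'⟩ := ih hmn.le i e hie _ hEmem (by
      rw [← kmap_kd (yv K n) (evX K v) m hE, hda, map_neg, hEy, neg_zero])
    refine ⟨KT.mk c' (kmap (divX K v) m a), (kG_succ ..).2 ⟨?_, ?_⟩, ?_⟩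
    · rw [← kmap_id m c']
      exact kmap_mem₀ (gr := grV K n m) (gr' := grV K n (m + 1)) (φ := AddMonoidHom.id _)
        (fun e p hp d hd => ⟨(hp d hd).1, fun i hi => (hp d hd).2 i (by omega)⟩) m hc'
    · rw [add_sub_cancel_right]
      refine kmap_mem (s := -1) ?_ m ha
      intro e p hp d hd
      rw [coeff_divX] at hd
      obtain ⟨h1, h2⟩ := hp _ hd
      refine ⟨?_, fun i hi => ?_⟩
      · rw [map_add, Finsupp.degree_single] at h1
        push_cast at h1
        omega
      · have := h2 i hi
        rw [Finsupp.add_apply] at this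
        omega
    · rw [kd_succ, hdc', ← kmap_kd (yv K n) (divX K v) m hD, hda, map_neg, hDy, neg_neg]
      refine KT.mk_eq ?_ rfl
      rw [← kmap_lsmul, kmap_comp, ← kmap_add]
      conv_rhs => rw [← kmap_id m a]
      congr 2
      rw [evX, hym, sub_add_cancel]

/-- The degree `e` piece of the graded free module `⊕_j R(-dg j)`. -/
def grF (K : Type) [Field K] (n : ℕ) {r : ℕ} (dg : Fin r → ℤ) (e : ℤ) :
    AddSubgroup (Fin r → MvPoly K (Fin n)) where
  carrier := {v | IsHomogVec K (Fin n) dg e v}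
  zero_mem' := fun j => by rw [homogComp_iff]; intro d hd; simp at hd
  add_mem' := fun {p q} hp hq j => by
    have hp := (homogComp_iff _ _).1 (hp j)
    have hq := (homogComp_iff _ _).1 (hq j)
    rw [homogComp_iff]
    intro d hd
    rw [Pi.add_apply, coeff_add] at hd
    by_cases h : coeff d (p j) = 0
    · exact hq d (by rintro h'; exact hd (by rw [h, h', add_zero]))
    · exact hp d h
  neg_mem' := fun {p} hp j => by
    have hp := (homogComp_iff _ _).1 (hp j)
    rw [homogComp_iff]
    intro d hd
    exact hp d (by simpa using hd)

theorem mem_grF {r : ℕ} {dg : Fin r → ℤ} {e : ℤ} {v : Fin r → MvPoly K (Fin n)} :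
    v ∈ grF K n dg e ↔ IsHomogVec K (Fin n) dg e v := Iff.rfl

theorem mem_grF_iff {r : ℕ} {dg : Fin r → ℤ} {e : ℤ} {v : Fin r → MvPoly K (Fin n)} :
    v ∈ grF K n dg e ↔ ∀ j d, coeff d (v j) ≠ 0 → (d.degree : ℤ) = e - dg j := by
  rw [mem_grF]
  exact forall_congr' fun j => homogComp_iff _ _

theorem mem_grV_n {e : ℤ} {p : MvPoly K (Fin n)} :
    p ∈ grV K n n e ↔ ∀ d, coeff d p ≠ 0 → (d.degree : ℤ) = e := by
  rw [mem_grV]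
  exact forall_congr' fun d => imp_congr_right fun _ =>
    and_iff_left fun i hi => absurd i.2 (by omega)

/-- Koszul homology of a graded free module. -/
theorem TV_grF {r : ℕ} (dg : Fin r → ℤ) (i e : ℤ) (h : i ≠ 0 ∨ ∀ j, e ≠ dg j) :
    TV (yv K n) n (grF K n dg) i e := by
  intro c hc hdc
  have key : ∀ j, ∃ b ∈ kG (grV K n n) n (i + 1) (e - dg j),
      kd _ (yv K n) n b = kmap (Pi.evalAddMonoidHom (fun _ => MvPoly K (Fin n)) j) n c := by
    intro j
    refine TV_grV n le_rfl i (e - dg j) (h.imp id fun h => sub_ne_zero.2 (h j)) _ ?_ ?_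
    · have := kmap_mem (φ := Pi.evalAddMonoidHom (fun _ => MvPoly K (Fin n)) j)
        (gr' := grV K n n) (s := - dg j) (fun e v hv => mem_grV_n.2 (mem_grF_iff.1 hv j)) n hc
      exact this
    · rw [← kmap_kd _ _ _ (fun _ _ _ => rfl), hdc, map_zero]
  choose b hb hdb using key
  refine ⟨∑ j, kmap (AddMonoidHom.single (fun _ => MvPoly K (Fin n)) j) n (b j),
    sum_mem fun j _ => ?_, ?_⟩
  · have := kmap_mem (φ := AddMonoidHom.single (fun _ => MvPoly K (Fin n)) j)
        (gr' := grF K n dg) (s := dg j) (fun e v hv => mem_grF_iff.2 fun k d hd => ?_) n (hb j)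
    · rwa [sub_add_cancel] at this
    · by_cases hk : k = j
      · subst hk
        simp only [AddMonoidHom.single_apply, Pi.single_eq_same] at hd
        have := mem_grV_n.1 hv d hd
        omega
      · simp [Pi.single_eq_of_ne hk] at hd
  · rw [map_sum]
    have : ∀ j, kd _ (yv K n) n (kmap (AddMonoidHom.single (fun _ => MvPoly K (Fin n)) j) n (b j))
        = kmap ((AddMonoidHom.single (fun _ => MvPoly K (Fin n)) j).comp
            (Pi.evalAddMonoidHom (fun _ => MvPoly K (Fin n)) j)) n c := by
      intro j
      rw [← kmap_kd, hdb, kmap_comp]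
      intro l _ v
      exact Pi.single_smul (f := fun _ => MvPoly K (Fin n)) j (yv K n l) v
    rw [Finset.sum_congr rfl fun j _ => this j, ← kmap_sum]
    conv_rhs => rw [← kmap_id n c]
    congr 2
    refine AddMonoidHom.ext fun v => ?_
    rw [AddMonoidHom.finsetSum_apply]
    exact Finset.univ_sum_single v

end Free

section MonomialIdeals

variable {K : Type} [Field K] {n : ℕ}

/-! ### Monomial ideals -/

/-- An ideal containing every monomial that occurs in one of its elements; this is the form in
which the notion of monomial ideal is used below. -/
def MC (I : Ideal (MvPoly K (Fin n))) : Prop :=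
  ∀ p ∈ I, ∀ d, coeff d p ≠ 0 → mono K d ∈ I

theorem mono_add (a b : Fin n →₀ ℕ) : mono K (a + b) = mono K a * mono K b := by
  simp [mono, monomial_mul]

theorem mono_mem_of_le {I : Ideal (MvPoly K (Fin n))} {a d : Fin n →₀ ℕ} (h : a ≤ d)
    (ha : mono K a ∈ I) : mono K d ∈ I := by
  obtain ⟨c, rfl⟩ := exists_add_of_le h
  rw [mono_add]
  exact I.mul_mem_right _ ha

theorem mem_of_mono {I : Ideal (MvPoly K (Fin n))} {p : MvPoly K (Fin n)}
    (h : ∀ d, coeff d p ≠ 0 → mono K d ∈ I) : p ∈ I := by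
  rw [p.as_sum]
  refine sum_mem fun d hd => ?_
  have : monomial d (coeff d p) = C (coeff d p) * mono K d := by
    rw [mono, C_mul_monomial, mul_one]
  rw [this]
  exact I.mul_mem_left _ (h d (mem_support_iff.1 hd))

theorem MC_of_isMonomialIdeal {I : Ideal (MvPoly K (Fin n))} (hI : IsMonomialIdeal K I) :
    MC I := by
  obtain ⟨S, rfl⟩ := hI
  intro p hp d hd
  obtain ⟨a, ha, had⟩ := mem_ideal_span_monomial_image.1 hp d (mem_support_iff.2 hd)
  exact mono_mem_of_le had (Ideal.subset_span ⟨a, ha, rfl⟩)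

theorem coeff_add_mul_mono (p : MvPoly K (Fin n)) (b d : Fin n →₀ ℕ) :
    coeff (d + b) (p * mono K b) = coeff d p := by
  rw [mono, coeff_mul_monomial, mul_one]

theorem mem_colon {I : Ideal (MvPoly K (Fin n))} {f p : MvPoly K (Fin n)} :
    p ∈ I.colon (Ideal.span {f}) ↔ p * f ∈ I := by
  rw [Ideal.span, Submodule.mem_colon_span_singleton, smul_eq_mul]

theorem MC.colon {I : Ideal (MvPoly K (Fin n))} (hI : MC I) (b : Fin n →₀ ℕ) :
    MC (I.colon (Ideal.span {mono K b})) := by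
  intro p hp d hd
  rw [mem_colon] at hp ⊢
  rw [← mono_add]
  exact hI _ hp _ (by rwa [coeff_add_mul_mono])

theorem mem_add_span {I : Ideal (MvPoly K (Fin n))} {f p : MvPoly K (Fin n)} :
    p ∈ I + Ideal.span {f} ↔ ∃ q ∈ I, ∃ g, p = q + g * f := by
  rw [Submodule.add_eq_sup, Submodule.mem_sup]
  constructor
  · rintro ⟨q, hq, z, hz, rfl⟩
    obtain ⟨g, rfl⟩ := Ideal.mem_span_singleton'.1 hz
    exact ⟨q, hq, g, rfl⟩
  · rintro ⟨q, hq, g, rfl⟩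
    exact ⟨q, hq, _, Ideal.mem_span_singleton'.2 ⟨g, rfl⟩, rfl⟩

theorem le_add_span (I : Ideal (MvPoly K (Fin n))) (f : MvPoly K (Fin n)) :
    I ≤ I + Ideal.span {f} := fun p hp => mem_add_span.2 ⟨p, hp, 0, by ring⟩

theorem MC.of_mem_add {I : Ideal (MvPoly K (Fin n))} (hI : MC I) {b : Fin n →₀ ℕ}
    {p : MvPoly K (Fin n)} (hp : p ∈ I + Ideal.span {mono K b}) {d : Fin n →₀ ℕ}
    (hd : coeff d p ≠ 0) : mono K d ∈ I ∨ b ≤ d := by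
  obtain ⟨q, hq, g, rfl⟩ := mem_add_span.1 hp
  by_cases h : coeff d q = 0
  · right
    rw [coeff_add, h, zero_add, mono, coeff_mul_monomial'] at hd
    by_contra hb
    exact hd (if_neg hb)
  · exact Or.inl (hI q hq d h)

theorem MC.add {I : Ideal (MvPoly K (Fin n))} (hI : MC I) (b : Fin n →₀ ℕ) :
    MC (I + Ideal.span {mono K b}) := by
  intro p hp d hd
  rcases hI.of_mem_add hp hd with h | h
  · exact le_add_span _ _ h
  · exact mono_mem_of_le h (mem_add_span.2 ⟨0, zero_mem _, 1, by ring⟩)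

/-- The ideal generated by the monomials of `I` that do not involve `x_j` (for a monomial
ideal `I`). It is described by the exponents of the monomials it contains. -/
def delX (I : Ideal (MvPoly K (Fin n))) (j : Fin n) : Ideal (MvPoly K (Fin n)) where
  carrier := {p | ∀ d, coeff d p ≠ 0 → mono K (d.erase j) ∈ I}
  zero_mem' := by intro d hd; simp at hd
  add_mem' := by
    intro p q hp hq d hd
    rw [coeff_add] at hd
    by_cases h : coeff d p = 0
    · exact hq d (by rintro h'; exact hd (by rw [h, h', add_zero]))
    · exact hp d h
  smul_mem' := by
    intro q p hp d hd
    rw [smul_eq_mul, coeff_mul] at hd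
    obtain ⟨⟨u, v⟩, huv, hne⟩ := Finset.exists_ne_zero_of_sum_ne_zero hd
    obtain rfl := Finset.HasAntidiagonal.mem_antidiagonal.1 huv
    have := hp v (right_ne_zero_of_mul hne)
    rw [Finsupp.erase_add, mono_add]
    exact I.mul_mem_left _ this

theorem mem_delX {I : Ideal (MvPoly K (Fin n))} {j : Fin n} {p : MvPoly K (Fin n)} :
    p ∈ delX I j ↔ ∀ d, coeff d p ≠ 0 → mono K (d.erase j) ∈ I := Iff.rfl

theorem mono_mem_delX {I : Ideal (MvPoly K (Fin n))} {j : Fin n} {d : Fin n →₀ ℕ} :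
    mono K d ∈ delX I j ↔ mono K (d.erase j) ∈ I := by
  rw [mem_delX]
  constructor
  · intro h
    exact h d (by simp [mono])
  · intro h d' hd'
    rw [mono, coeff_monomial] at hd'
    obtain rfl : d = d' := by
      by_contra hne
      exact hd' (if_neg hne)
    exact h

theorem erase_le (d : Fin n →₀ ℕ) (j : Fin n) : d.erase j ≤ d := by
  intro i
  by_cases h : i = j
  · subst h; simp
  · rw [Finsupp.erase_ne h]

theorem MC_delX (I : Ideal (MvPoly K (Fin n))) (j : Fin n) : MC (delX I j) :=
  fun _ hp d hd => mono_mem_delX.2 (hp d hd)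

theorem delX_le (I : Ideal (MvPoly K (Fin n))) (j : Fin n) : delX I j ≤ I :=
  fun _ hp => mem_of_mono fun d hd => mono_mem_of_le (erase_le d j) (hp d hd)

theorem delX_reg {I : Ideal (MvPoly K (Fin n))} {j : Fin n} {p : MvPoly K (Fin n)}
    (h : p * mono K (Finsupp.single j 1) ∈ delX I j) : p ∈ delX I j := by
  intro d hd
  have := h (d + Finsupp.single j 1) (by rwa [coeff_add_mul_mono])
  rwa [Finsupp.erase_add, Finsupp.erase_single, add_zero] at this

theorem MC.mono_mem_delX_or {I : Ideal (MvPoly K (Fin n))} (hI : MC I) (j : Fin n)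
    {p : MvPoly K (Fin n)} (hp : p ∈ I) {d : Fin n →₀ ℕ} (hd : coeff d p ≠ 0) :
    mono K d ∈ delX I j ∨ Finsupp.single j 1 ≤ d := by
  by_cases h : d j = 0
  · left
    rw [mono_mem_delX, Finsupp.erase_of_notMem_support (by simpa using h)]
    exact hI p hp d hd
  · right
    exact Finsupp.single_le_iff.2 (Nat.one_le_iff_ne_zero.2 h)

theorem delX_colon (I : Ideal (MvPoly K (Fin n))) (j : Fin n) :
    (delX I j).colon (Ideal.span {mono K (Finsupp.single j 1)}) = delX I j := by
  ext p
  rw [mem_colon]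
  exact ⟨delX_reg, fun h => Ideal.mul_mem_right _ _ h⟩

theorem MC.le_delX_add {I : Ideal (MvPoly K (Fin n))} (hI : MC I) (j : Fin n) :
    I ≤ delX I j + Ideal.span {mono K (Finsupp.single j 1)} := by
  intro p hp
  refine mem_of_mono fun d hd => ?_
  rcases hI.mono_mem_delX_or j hp hd with h | h
  · exact le_add_span _ _ h
  · exact mono_mem_of_le h (mem_add_span.2 ⟨0, zero_mem _, 1, by ring⟩)

theorem MC.delX_add {I : Ideal (MvPoly K (Fin n))} (hI : MC I) (j : Fin n) :
    delX I j + Ideal.span {mono K (Finsupp.single j 1)} =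
      I + Ideal.span {mono K (Finsupp.single j 1)} := by
  rw [Submodule.add_eq_sup, Submodule.add_eq_sup]
  apply le_antisymm
  · exact sup_le_sup_right (delX_le I j) _
  · exact sup_le (hI.le_delX_add j) le_sup_right

theorem colon_mono_add (I : Ideal (MvPoly K (Fin n))) (a b : Fin n →₀ ℕ) :
    I.colon (Ideal.span {mono K (a + b)}) =
      (I.colon (Ideal.span {mono K a})).colon (Ideal.span {mono K b}) := by
  ext p
  rw [mem_colon, mem_colon, mem_colon, mono_add, mul_assoc, mul_comm (mono K b)]

theorem colon_mono_zero (I : Ideal (MvPoly K (Fin n))) :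
    I.colon (Ideal.span {mono K (0 : Fin n →₀ ℕ)}) = I := by
  ext p
  rw [mem_colon]
  simp [mono]

/-- Multiplication by `f`, as a map `R/(I : f) → R/I`. -/
noncomputable def mulQ (I : Ideal (MvPoly K (Fin n))) (f : MvPoly K (Fin n)) :
    (MvPoly K (Fin n) ⧸ I.colon (Ideal.span {f})) →ₗ[MvPoly K (Fin n)] (MvPoly K (Fin n) ⧸ I) :=
  Submodule.mapQ _ _ (LinearMap.mulRight (MvPoly K (Fin n)) f) (fun _ hp => mem_colon.1 hp)

theorem mulQ_mk (I : Ideal (MvPoly K (Fin n))) (f p : MvPoly K (Fin n)) :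
    mulQ I f (Ideal.Quotient.mk _ p) = Ideal.Quotient.mk I (p * f) := rfl

theorem mulQ_injective (I : Ideal (MvPoly K (Fin n))) (f : MvPoly K (Fin n)) :
    Function.Injective (mulQ I f) := by
  rw [injective_iff_map_eq_zero]
  intro v hv
  obtain ⟨p, rfl⟩ := Ideal.Quotient.mk_surjective v
  rw [mulQ_mk, Ideal.Quotient.eq_zero_iff_mem] at hv
  exact Ideal.Quotient.eq_zero_iff_mem.2 (mem_colon.2 hv)

/-- The projection `R/I → R/J` for `I ≤ J`. -/
noncomputable def projQ {I J : Ideal (MvPoly K (Fin n))} (h : I ≤ J) :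
    (MvPoly K (Fin n) ⧸ I) →ₗ[MvPoly K (Fin n)] (MvPoly K (Fin n) ⧸ J) :=
  Submodule.mapQ _ _ LinearMap.id h

theorem projQ_mk {I J : Ideal (MvPoly K (Fin n))} (h : I ≤ J) (p : MvPoly K (Fin n)) :
    projQ h (Ideal.Quotient.mk _ p) = Ideal.Quotient.mk J p := rfl

theorem projQ_surjective {I J : Ideal (MvPoly K (Fin n))} (h : I ≤ J) :
    Function.Surjective (projQ h) := by
  intro v
  obtain ⟨p, rfl⟩ := Ideal.Quotient.mk_surjective v
  exact ⟨Ideal.Quotient.mk _ p, rfl⟩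

theorem mulQ_projQ_exact (I : Ideal (MvPoly K (Fin n))) (f : MvPoly K (Fin n)) :
    Function.Exact (mulQ I f) (projQ (le_add_span I f)) := by
  intro v
  obtain ⟨p, rfl⟩ := Ideal.Quotient.mk_surjective v
  rw [projQ_mk, Ideal.Quotient.eq_zero_iff_mem, mem_add_span]
  constructor
  · rintro ⟨q, hq, g, rfl⟩
    refine ⟨Ideal.Quotient.mk _ g, ?_⟩
    rw [mulQ_mk, map_add, Ideal.Quotient.eq_zero_iff_mem.2 hq, zero_add]
  · rintro ⟨u, hu⟩
    obtain ⟨g, rfl⟩ := Ideal.Quotient.mk_surjective u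
    rw [mulQ_mk, Ideal.Quotient.eq] at hu
    exact ⟨p - g * f, by rw [← neg_sub]; exact I.neg_mem hu, g, by ring⟩

/-! ### The grading of `R/I` -/

/-- The degree `e` piece of `R/I`. -/
noncomputable def grQ (I : Ideal (MvPoly K (Fin n))) (e : ℤ) : AddSubgroup (MvPoly K (Fin n) ⧸ I) :=
  (QuotComp K (Fin n) I e).toAddSubgroup

theorem mem_grQ {I : Ideal (MvPoly K (Fin n))} {e : ℤ} {v : MvPoly K (Fin n) ⧸ I} :
    v ∈ grQ I e ↔ ∃ p ∈ grV K n n e, Ideal.Quotient.mk I p = v := by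
  have hH : ∀ p, p ∈ grV K n n e ↔ HomogComp K (Fin n) e p := fun p => by
    rw [mem_grV_n, homogComp_iff]
  simp only [hH]
  unfold HomogComp grQ QuotComp
  split_ifs with h
  · rfl
  · simp only [Submodule.mem_toAddSubgroup, Submodule.mem_bot, exists_eq_left, map_zero]
    exact eq_comm

theorem grV_mul_mono {p : MvPoly K (Fin n)} {e : ℤ} (hp : p ∈ grV K n n e) (b : Fin n →₀ ℕ) :
    p * mono K b ∈ grV K n n (e + b.degree) := by
  rw [mem_grV_n] at hp ⊢
  intro d hd
  rw [mono, coeff_mul_monomial'] at hd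
  split_ifs at hd with h
  · have := hp _ (left_ne_zero_of_mul hd)
    obtain ⟨c, rfl⟩ := exists_add_of_le h
    rw [add_tsub_cancel_left] at this
    rw [map_add]
    push_cast
    omega
  · exact absurd rfl hd

theorem grV_divMonomial {p : MvPoly K (Fin n)} {e : ℤ} (hp : p ∈ grV K n n e)
    (b : Fin n →₀ ℕ) : divMonomial p b ∈ grV K n n (e - b.degree) := by
  rw [mem_grV_n] at hp ⊢
  intro d hd
  rw [coeff_divMonomial] at hd
  have := hp _ hd
  rw [map_add] at this
  push_cast at this
  omega

theorem yv_eq_mono {j : ℕ} (h : j < n) : yv K n j = mono K (Finsupp.single ⟨j, h⟩ 1) := yv_lt h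

theorem stable_grQ (I : Ideal (MvPoly K (Fin n))) : Stable (yv K n) n (grQ I) := by
  intro j hj e v hv
  obtain ⟨p, hp, rfl⟩ := mem_grQ.1 hv
  refine mem_grQ.2 ⟨p * mono K (Finsupp.single ⟨j, hj⟩ 1), ?_, ?_⟩
  · have := grV_mul_mono hp (Finsupp.single ⟨j, hj⟩ 1)
    rwa [Finsupp.degree_single, Nat.cast_one] at this
  · rw [yv_eq_mono hj, mul_comm]
    rfl

theorem stable_shift {R M : Type} [CommRing R] [AddCommGroup M] [Module R M] {y : ℕ → R} {m : ℕ}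
    {gr : ℤ → AddSubgroup M} (h : Stable y m gr) (s : ℤ) :
    Stable y m fun e => gr (e - s) := by
  intro j hj e v hv
  have := h j hj _ v hv
  rwa [sub_add_eq_add_sub] at this

theorem projQ_mem_grQ {I J : Ideal (MvPoly K (Fin n))} (h : I ≤ J) (e : ℤ)
    (v : MvPoly K (Fin n) ⧸ I) (hv : v ∈ grQ I e) : projQ h v ∈ grQ J e := by
  obtain ⟨p, hp, rfl⟩ := mem_grQ.1 hv
  exact mem_grQ.2 ⟨p, hp, rfl⟩

theorem projQ_surj_grQ {I J : Ideal (MvPoly K (Fin n))} (h : I ≤ J) (e : ℤ)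
    (v : MvPoly K (Fin n) ⧸ J) (hv : v ∈ grQ J e) : ∃ u ∈ grQ I e, projQ h u = v := by
  obtain ⟨p, hp, rfl⟩ := mem_grQ.1 hv
  exact ⟨_, mem_grQ.2 ⟨p, hp, rfl⟩, rfl⟩

/-- If all monomials of `p` lie in `I` or are divisible by `x^b`, then `p` agrees modulo `I` with
`(p / x^b) x^b`. -/
theorem mk_divMonomial {I : Ideal (MvPoly K (Fin n))} {p : MvPoly K (Fin n)} {b : Fin n →₀ ℕ}
    (h : ∀ d, coeff d p ≠ 0 → mono K d ∈ I ∨ b ≤ d) :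
    Ideal.Quotient.mk I (divMonomial p b * mono K b) = Ideal.Quotient.mk I p := by
  rw [Ideal.Quotient.eq, ← neg_mem_iff, neg_sub]
  refine mem_of_mono fun d hd => ?_
  rw [coeff_sub, mono, coeff_mul_monomial', coeff_divMonomial, mul_one] at hd
  split_ifs at hd with hb
  · rw [add_tsub_cancel_of_le hb, sub_self] at hd
    exact absurd rfl hd
  · rw [sub_zero] at hd
    exact (h d hd).resolve_right hb

theorem GSES_colon {I : Ideal (MvPoly K (Fin n))} (hI : MC I) (b : Fin n →₀ ℕ) :
    GSES (yv K n) n (fun e => grQ (I.colon (Ideal.span {mono K b})) (e - b.degree))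
      (mulQ I (mono K b)) (grQ I) (projQ (le_add_span I (mono K b)))
      (grQ (I + Ideal.span {mono K b})) where
  st₁ := stable_shift (stable_grQ _) _
  st₂ := stable_grQ _
  map₁ := by
    intro e v hv
    obtain ⟨p, hp, rfl⟩ := mem_grQ.1 hv
    have := grV_mul_mono hp b
    rw [sub_add_cancel] at this
    exact mem_grQ.2 ⟨_, this, rfl⟩
  map₂ := projQ_mem_grQ _
  inj := fun e v _ h => mulQ_injective I _ (h.trans (map_zero _).symm)
  comp := fun e v _ => (mulQ_projQ_exact I (mono K b) _).2 ⟨v, rfl⟩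
  exact := by
    intro e v hv h0
    obtain ⟨p, hp, rfl⟩ := mem_grQ.1 hv
    rw [projQ_mk, Ideal.Quotient.eq_zero_iff_mem] at h0
    refine ⟨_, mem_grQ.2 ⟨divMonomial p b, grV_divMonomial hp b, rfl⟩, ?_⟩
    rw [mulQ_mk]
    exact mk_divMonomial fun d hd => hI.of_mem_add h0 hd
  surj := projQ_surj_grQ _

/-- Passing from `I` to the ideal generated by the monomials of `I` without `x_j` preserves
vanishing of graded Tor groups. -/
theorem TV_delX {I : Ideal (MvPoly K (Fin n))} (hI : MC I) (j : Fin n) {i e : ℤ}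
    (h : TV (yv K n) n (grQ I) i e) : TV (yv K n) n (grQ (delX I j)) i e := by
  have hy : yv K n j.val = mono K (Finsupp.single j 1) := yv_eq_mono j.2
  refine TV_inj (ψ := projQ (delX_le I j)) (stable_grQ _) (projQ_mem_grQ _) (projQ_surj_grQ _)
    j.2 ?_ ?_ h
  · intro v hv
    obtain ⟨p, rfl⟩ := Ideal.Quotient.mk_surjective v
    rw [hy] at hv
    refine Ideal.Quotient.eq_zero_iff_mem.2 (delX_reg (I := I) (j := j) ?_)
    rw [mul_comm]
    exact Ideal.Quotient.eq_zero_iff_mem.1 hv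
  · intro e v hv h0
    obtain ⟨p, hp, rfl⟩ := mem_grQ.1 hv
    rw [projQ_mk, Ideal.Quotient.eq_zero_iff_mem] at h0
    refine ⟨_, mem_grQ.2 ⟨divMonomial p (Finsupp.single j 1), ?_, rfl⟩, ?_⟩
    · have := grV_divMonomial hp (Finsupp.single j 1)
      rwa [Finsupp.degree_single, Nat.cast_one] at this
    · rw [hy, ← mk_divMonomial (I := delX I j) (p := p) (b := Finsupp.single j 1)
        fun d hd => hI.mono_mem_delX_or j h0 hd, mul_comm]
      rfl

end MonomialIdeals

/-! ### Homogeneous decompositions -/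

section Decomposition

variable {R : Type} [CommRing R] {M : Type} [AddCommGroup M] [Module R M]
variable {M' : Type} [AddCommGroup M'] [Module R M']

/-- Every element of the submodule `N` is a finite sum of homogeneous elements of `N`. -/
def GSpan (gr : ℤ → AddSubgroup M) (N : Submodule R M) : Prop :=
  ∀ v ∈ N, ∃ (S : Finset ℤ) (w : ℤ → M), (∀ e, w e ∈ gr e) ∧ (∀ e, w e ∈ N) ∧
    v = ∑ e ∈ S, w e

/-- The graded pieces are independent. -/
def GInd (gr : ℤ → AddSubgroup M) : Prop :=
  ∀ (S : Finset ℤ) (w : ℤ → M), (∀ e, w e ∈ gr e) → ∑ e ∈ S, w e = 0 → ∀ e ∈ S, w e = 0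

variable {gr : ℤ → AddSubgroup M} {gr' : ℤ → AddSubgroup M'}

theorem GSpan_ker (h : GSpan gr (⊤ : Submodule R M)) (h' : GInd gr') (φ : M →ₗ[R] M')
    (hφ : ∀ e, ∀ v ∈ gr e, φ v ∈ gr' e) : GSpan gr (LinearMap.ker φ) := by
  classical
  intro v hv
  obtain ⟨S, w, hw, -, rfl⟩ := h v trivial
  rw [LinearMap.mem_ker, map_sum] at hv
  have h0 := h' S (fun e => φ (w e)) (fun e => hφ e _ (hw e)) hv
  refine ⟨S, fun e => if e ∈ S then w e else 0, fun e => ?_, fun e => ?_, ?_⟩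
  · dsimp only
    split_ifs
    · exact hw e
    · exact zero_mem _
  · dsimp only
    split_ifs with he
    · exact h0 e he
    · exact zero_mem _
  · exact Finset.sum_congr rfl fun e he => (if_pos he).symm

/-- A homogeneous element in the range of a graded map has a homogeneous preimage. -/
theorem GSpan.lift (h : GSpan gr (⊤ : Submodule R M)) (h' : GInd gr') (φ : M →ₗ[R] M')
    (hφ : ∀ e, ∀ v ∈ gr e, φ v ∈ gr' e) {e : ℤ} {v : M'} (hv : v ∈ gr' e)
    (hv' : v ∈ LinearMap.range φ) : ∃ u ∈ gr e, φ u = v := by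
  classical
  obtain ⟨u, rfl⟩ := hv'
  obtain ⟨S, w, hw, -, hu⟩ := h u trivial
  let w' : ℤ → M := fun a => if a ∈ S then w a else 0
  have hw' : ∀ a, w' a ∈ gr a := by
    intro a
    simp only [w']
    split_ifs
    · exact hw a
    · exact zero_mem _
  refine ⟨w' e, hw' e, ?_⟩
  have hsum : u = ∑ a ∈ insert e S, w' a := by
    rw [hu, ← Finset.sum_subset (Finset.subset_insert e S)]
    · exact Finset.sum_congr rfl fun a ha => (if_pos ha).symm
    · intro a _ ha
      exact if_neg ha
  have := h' (insert e S) (fun a => φ (w' a) - if a = e then φ u else 0) (fun a => by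
    refine sub_mem (hφ a _ (hw' a)) ?_
    split_ifs with ha
    · rw [ha]; exact hv
    · exact zero_mem _) (by
    rw [Finset.sum_sub_distrib, ← map_sum, ← hsum, Finset.sum_ite_eq', if_pos
      (Finset.mem_insert_self e S), sub_self]) e (Finset.mem_insert_self e S)
  rw [if_pos rfl] at this
  exact sub_eq_zero.1 this

end Decomposition

section Res

variable {K : Type} [Field K] {n : ℕ}

theorem GSpan_grF {r : ℕ} (dg : Fin r → ℤ) :
    GSpan (grF K n dg) (⊤ : Submodule (MvPoly K (Fin n)) (Fin r → MvPoly K (Fin n))) := by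
  classical
  intro v _
  refine ⟨Finset.univ.biUnion fun j => (v j).support.image fun d => (d.degree : ℤ) + dg j,
    fun e j => if 0 ≤ e - dg j then homogeneousComponent (e - dg j).toNat (v j) else 0,
    fun e => mem_grF_iff.2 ?_, fun _ => trivial, ?_⟩
  · intro j d hd
    dsimp only at hd
    split_ifs at hd with h
    · rw [coeff_homogeneousComponent] at hd
      split_ifs at hd with h'
      · omega
      · exact absurd rfl hd
    · simp at hd
  · funext j
    rw [Finset.sum_apply]
    refine MvPolynomial.ext _ _ fun d => ?_
    rw [coeff_sum]
    have : ∀ e : ℤ, coeff d (if 0 ≤ e - dg j then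
        homogeneousComponent (e - dg j).toNat (v j) else 0) =
        if (d.degree : ℤ) + dg j = e then coeff d (v j) else 0 := by
      intro e
      split_ifs with h h' h'
      · rw [coeff_homogeneousComponent, if_pos (by omega)]
      · rw [coeff_homogeneousComponent, if_neg (by omega)]
      · omega
      · simp
    rw [Finset.sum_congr rfl fun e _ => this e, Finset.sum_ite_eq]
    split_ifs with h
    · rfl
    · by_contra hne
      refine h (Finset.mem_biUnion.2 ⟨j, Finset.mem_univ _, Finset.mem_image.2 ⟨d, ?_, rfl⟩⟩)
      exact mem_support_iff.2 hne

theorem GInd_grF {r : ℕ} (dg : Fin r → ℤ) : GInd (grF K n dg) := by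
  intro S w hw h0 e he
  funext j
  refine MvPolynomial.ext _ _ fun d => ?_
  by_contra hne
  have h1 : coeff d ((∑ e ∈ S, w e) j) = coeff d (w e j) := by
    rw [Finset.sum_apply, coeff_sum]
    refine Finset.sum_eq_single_of_mem e he fun a _ hae => ?_
    by_contra hd
    have h1 := mem_grF_iff.1 (hw a) j d hd
    have h2 := mem_grF_iff.1 (hw e) j d hne
    omega
  rw [h0] at h1
  exact hne h1.symm

theorem GInd_grQ {I : Ideal (MvPoly K (Fin n))} (hI : MC I) : GInd (grQ I) := by
  intro S w hw h0 e he
  choose p hp hpw using fun e => mem_grQ.1 (hw e)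
  have h1 : ∑ e ∈ S, p e ∈ I := by
    rw [← Ideal.Quotient.eq_zero_iff_mem, map_sum, ← h0]
    exact Finset.sum_congr rfl fun e _ => hpw e
  rw [← hpw e, Ideal.Quotient.eq_zero_iff_mem]
  refine mem_of_mono fun d hd => hI _ h1 d ?_
  rw [coeff_sum, Finset.sum_eq_single_of_mem e he]
  · exact hd
  · intro a _ hae
    by_contra hd'
    have h1 := mem_grV_n.1 (hp a) d hd'
    have h2 := mem_grV_n.1 (hp e) d hd
    omega

theorem smul_mem_grF {r : ℕ} {dg : Fin r → ℤ} {p : MvPoly K (Fin n)} {a c : ℤ}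
    {v : Fin r → MvPoly K (Fin n)} (hp : HomogComp K (Fin n) a p) (hv : v ∈ grF K n dg c) :
    p • v ∈ grF K n dg (a + c) := by
  rw [mem_grF_iff] at hv ⊢
  rw [homogComp_iff] at hp
  intro j d hd
  rw [Pi.smul_apply, smul_eq_mul, coeff_mul] at hd
  obtain ⟨⟨u, w⟩, huw, hne⟩ := Finset.exists_ne_zero_of_sum_ne_zero hd
  obtain rfl := Finset.HasAntidiagonal.mem_antidiagonal.1 huw
  have h1 := hp u (left_ne_zero_of_mul hne)
  have h2 := hv j w (right_ne_zero_of_mul hne)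
  rw [map_add]
  push_cast
  omega

theorem homogComp_yv {j : ℕ} (hj : j < n) : HomogComp K (Fin n) 1 (yv K n j) := by
  rw [homogComp_iff, yv_eq_mono hj]
  intro d hd
  rw [mono, coeff_monomial] at hd
  split_ifs at hd with h
  · rw [← h, Finsupp.degree_single, Nat.cast_one]
  · exact absurd rfl hd

theorem stable_grF {r : ℕ} (dg : Fin r → ℤ) : Stable (yv K n) n (grF K n dg) := by
  intro j hj e v hv
  rw [add_comm]
  exact smul_mem_grF (homogComp_yv hj) hv

/-- The degree `e` piece of a submodule `N` of a graded free module. -/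
noncomputable def grN {r : ℕ} (dg : Fin r → ℤ)
    (N : Submodule (MvPoly K (Fin n)) (Fin r → MvPoly K (Fin n))) (e : ℤ) :
    AddSubgroup (Fin r → MvPoly K (Fin n)) :=
  N.toAddSubgroup ⊓ grF K n dg e

theorem mem_grN {r : ℕ} {dg : Fin r → ℤ}
    {N : Submodule (MvPoly K (Fin n)) (Fin r → MvPoly K (Fin n))} {e : ℤ}
    {v : Fin r → MvPoly K (Fin n)} : v ∈ grN dg N e ↔ v ∈ N ∧ v ∈ grF K n dg e := Iff.rfl

/-- The short exact sequence `ker φ → F → im φ` of a graded map out of a free module. -/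
theorem GSES_ker {r : ℕ} (dg : Fin r → ℤ) {M' : Type} [AddCommGroup M']
    [Module (MvPoly K (Fin n)) M'] {gr' : ℤ → AddSubgroup M'} (hind : GInd gr')
    (φ : (Fin r → MvPoly K (Fin n)) →ₗ[MvPoly K (Fin n)] M')
    (hφ : ∀ e, ∀ v ∈ grF K n dg e, φ v ∈ gr' e) {gr'' : ℤ → AddSubgroup M'}
    (h : ∀ e v, v ∈ gr'' e ↔ v ∈ LinearMap.range φ ∧ v ∈ gr' e) :
    GSES (yv K n) n (grN dg (LinearMap.ker φ)) LinearMap.id (grF K n dg) φ gr'' where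
  st₁ := fun j hj e v hv =>
    mem_grN.2 ⟨Submodule.smul_mem _ _ hv.1, stable_grF dg j hj e v hv.2⟩
  st₂ := stable_grF dg
  map₁ := fun _ _ hv => hv.2
  map₂ := fun e v hv => (h e _).2 ⟨⟨v, rfl⟩, hφ e v hv⟩
  inj := fun _ _ _ h => h
  comp := fun _ _ hv => hv.1
  exact := fun _ v hv h0 => ⟨v, mem_grN.2 ⟨h0, hv⟩, rfl⟩
  surj := fun e v hv => (GSpan_grF dg).lift hind φ hφ ((h e v).1 hv).2 ((h e v).1 hv).1

/-! ### Regularity through Koszul homology -/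

/-- `Tor_i(K, R/I)_e = 0` for all `e > i + r`. -/
def RV (I : Ideal (MvPoly K (Fin n))) (r : ℤ) : Prop :=
  ∀ i e : ℤ, e > i + r → TV (yv K n) n (grQ I) i e

/-- The syzygy modules of a free resolution, as submodules of the `F_s`. -/
noncomputable def syz {I : Ideal (MvPoly K (Fin n))} (F : GradedFreeRes K (Fin n) I) :
    ∀ s, Submodule (MvPoly K (Fin n)) (Fin (F.rk s) → MvPoly K (Fin n))
  | 0 => LinearMap.ker F.aug
  | s + 1 => LinearMap.ker (F.dmap s)

theorem range_dmap {I : Ideal (MvPoly K (Fin n))} (F : GradedFreeRes K (Fin n) I) (s : ℕ) :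
    LinearMap.range (F.dmap s) = syz F s := by
  cases s with
  | zero => exact (LinearMap.exact_iff.1 F.exact0).symm
  | succ s => exact (LinearMap.exact_iff.1 (F.exactS s)).symm

/-- Dimension shifting along the resolution, by induction on the homological degree `i - 1`. -/
theorem TV_syz {I : Ideal (MvPoly K (Fin n))} (F : GradedFreeRes K (Fin n) I) {r : ℤ}
    (hF : ∀ i j, F.dg i j - i ≤ r) (i : ℕ) : ∀ (s : ℕ) (e : ℤ), e > i - 1 + s + 1 + r →
      TV (yv K n) n (grN (F.dg s) (syz F s)) ((i : ℤ) - 1) e := by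
  induction i with
  | zero => exact fun s e _ => TV_neg _ _ _ (by simp) _
  | succ i ih =>
    intro s e he
    push_cast at he ⊢
    have S : GSES (yv K n) n (grN (F.dg (s + 1)) (syz F (s + 1))) LinearMap.id
        (grF K n (F.dg (s + 1))) (F.dmap s) (grN (F.dg s) (syz F s)) :=
      GSES_ker _ (GInd_grF (F.dg s)) (F.dmap s) (F.graded s) (fun e v => by
        rw [range_dmap]; exact mem_grN)
    refine TV_right S (TV_grF _ _ _ ?_) ?_
    · right
      intro j
      have := hF (s + 1) j
      push_cast at this
      omega
    · have := ih (s + 1) e (by push_cast; omega)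
      rwa [add_sub_cancel_right]

theorem RV_of_resBound {I : Ideal (MvPoly K (Fin n))} (hI : MC I) {r : ℤ}
    (h : ResBound K (Fin n) I r) : RV I r := by
  obtain ⟨F, hF⟩ := h
  intro i e he
  by_cases hi : i < 0
  · exact TV_neg _ _ _ hi _
  obtain ⟨i, rfl⟩ := Int.eq_ofNat_of_zero_le (not_lt.1 hi)
  have S : GSES (yv K n) n (grN (F.dg 0) (syz F 0)) LinearMap.id
      (grF K n (F.dg 0)) F.aug (grQ I) :=
    GSES_ker _ (GInd_grQ hI) F.aug F.aug_graded (fun e v =>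
      ⟨fun hv => ⟨F.aug_surj v, hv⟩, fun hv => hv.2⟩)
  refine TV_right S (TV_grF _ _ _ ?_) (TV_syz F hF i 0 e (by simp; omega))
  right
  intro j
  have := hF 0 j
  simp at this
  omega

/-- A stage in the construction of a free resolution: a graded submodule of a graded free module
whose Koszul homology vanishes above the line of slope one through `t + s`. -/
structure RState (K : Type) [Field K] (n : ℕ) (t : ℤ) (s : ℕ) where
  m : ℕ
  dg : Fin m → ℤ
  N : Submodule (MvPoly K (Fin n)) (Fin m → MvPoly K (Fin n))
  homog : GSpan (grF K n dg) N
  tv : ∀ i e : ℤ, e > i + t + s → TV (yv K n) n (grN dg N) i e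

/-- Since `H_0` vanishes above degree `t + s`, the submodule is generated in degrees at most
`t + s`. -/
theorem RState.span_eq {t : ℤ} {s : ℕ} (A : RState K n t s) :
    Submodule.span (MvPoly K (Fin n)) {v | ∃ e ≤ t + s, v ∈ grN A.dg A.N e} = A.N := by
  set B : Set (Fin A.m → MvPoly K (Fin n)) := {v | ∃ e ≤ t + s, v ∈ grN A.dg A.N e} with hB
  apply le_antisymm
  · rw [Submodule.span_le]
    rintro v ⟨e, _, hv⟩
    exact hv.1
  · have key : ∀ (k : ℕ) (e : ℤ), e ≤ t + s + k → ∀ v ∈ grN A.dg A.N e,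
        v ∈ Submodule.span (MvPoly K (Fin n)) B := by
      intro k
      induction k with
      | zero =>
        intro e he v hv
        exact Submodule.subset_span ⟨e, by simpa using he, hv⟩
      | succ k ih =>
        intro e he v hv
        by_cases hle : e ≤ t + s
        · exact Submodule.subset_span ⟨e, hle, hv⟩
        · have := (A.tv 0 e (by omega)).mem_span hv
          refine (Submodule.span_le.2 ?_) this
          intro u hu
          exact ih (e - 1) (by push_cast at he; omega) u hu
    intro v hv
    obtain ⟨S, w, hw, hwN, rfl⟩ := A.homog v hv
    exact sum_mem fun e _ => key (e - t - s).toNat e (by omega) _ (mem_grN.2 ⟨hwN e, hw e⟩)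

/-- One step of the resolution: a graded free cover with generators of degree at most `t + s`,
whose kernel is the next stage. -/
theorem RState.step {t : ℤ} {s : ℕ} (A : RState K n t s) :
    ∃ (B : RState K n t (s + 1)) (φ : (Fin B.m → MvPoly K (Fin n)) →ₗ[MvPoly K (Fin n)]
        (Fin A.m → MvPoly K (Fin n))), (∀ j, B.dg j ≤ t + s) ∧
      (∀ e v, IsHomogVec K (Fin n) B.dg e v → IsHomogVec K (Fin n) A.dg e (φ v)) ∧
      LinearMap.range φ = A.N ∧ LinearMap.ker φ = B.N := by
  have hfg : (Submodule.span (MvPoly K (Fin n))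
      {v | ∃ e ≤ t + s, v ∈ grN A.dg A.N e}).FG := IsNoetherian.noetherian _
  obtain ⟨T, hT, hspan⟩ := Submodule.fg_span_iff_fg_span_finset_subset _ |>.1 hfg
  rw [A.span_eq] at hspan
  let g : Fin T.card → (Fin A.m → MvPoly K (Fin n)) := fun j => (T.equivFin.symm j).1
  choose dg hdg hmem using fun j => hT (T.equivFin.symm j).2
  let φ := Fintype.linearCombination (MvPoly K (Fin n)) g
  have hrange : LinearMap.range φ = A.N := by
    rw [Fintype.range_linearCombination, hspan]
    congr 1
    ext v
    constructor
    · rintro ⟨j, rfl⟩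
      exact (T.equivFin.symm j).2
    · intro hv
      exact ⟨T.equivFin ⟨v, hv⟩, by simp [g]⟩
  have hgr : ∀ e, ∀ v ∈ grF K n dg e, φ v ∈ grF K n A.dg e := by
    intro e v hv
    rw [Fintype.linearCombination_apply]
    refine sum_mem fun j _ => ?_
    have := smul_mem_grF (hv j) (hmem j).2
    rwa [sub_add_cancel] at this
  have S : GSES (yv K n) n (grN dg (LinearMap.ker φ)) LinearMap.id
      (grF K n dg) φ (grN A.dg A.N) :=
    GSES_ker _ (GInd_grF A.dg) φ hgr (fun e v => by rw [hrange]; exact mem_grN)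
  refine ⟨⟨T.card, dg, LinearMap.ker φ, GSpan_ker (GSpan_grF dg) (GInd_grF A.dg) φ hgr, ?_⟩,
    φ, hdg, hgr, hrange, rfl⟩
  intro i e he
  push_cast at he
  refine TV_left S (TV_grF _ _ _ ?_) (A.tv _ _ (by omega))
  by_cases hi : i = 0
  · right
    intro j
    have := hdg j
    omega
  · exact Or.inl hi

/-- The stages of the resolution starting from a given one. -/
noncomputable def RState.seq {t : ℤ} (A : RState K n t 0) : ∀ s, RState K n t s
  | 0 => A
  | s + 1 => (RState.seq A s).step.choose

/-- The maps between consecutive stages. -/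
noncomputable def RState.map {t : ℤ} (A : RState K n t 0) (s : ℕ) :
    (Fin (A.seq (s + 1)).m → MvPoly K (Fin n)) →ₗ[MvPoly K (Fin n)]
      (Fin (A.seq s).m → MvPoly K (Fin n)) :=
  (A.seq s).step.choose_spec.choose

theorem RState.map_spec {t : ℤ} (A : RState K n t 0) (s : ℕ) :
    (∀ j, (A.seq (s + 1)).dg j ≤ t + s) ∧
      (∀ e v, IsHomogVec K (Fin n) (A.seq (s + 1)).dg e v →
        IsHomogVec K (Fin n) (A.seq s).dg e (A.map s v)) ∧
      LinearMap.range (A.map s) = (A.seq s).N ∧ LinearMap.ker (A.map s) = (A.seq (s + 1)).N :=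
  (A.seq s).step.choose_spec.choose_spec

theorem eq_zero_of_mem_grQ_neg {I : Ideal (MvPoly K (Fin n))} {e : ℤ} (he : e < 0)
    {v : MvPoly K (Fin n) ⧸ I} (hv : v ∈ grQ I e) : v = 0 := by
  unfold grQ QuotComp at hv
  rw [if_neg (by omega)] at hv
  exact hv

theorem RV.nonneg {I : Ideal (MvPoly K (Fin n))} (hI : I ≠ ⊤) {r : ℤ} (h : RV I r) : 0 ≤ r := by
  by_contra hr
  have h1 : Ideal.Quotient.mk I 1 ∈ grQ I 0 := by
    refine mem_grQ.2 ⟨1, mem_grV_n.2 fun d hd => ?_, rfl⟩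
    rw [coeff_one] at hd
    split_ifs at hd with h
    · rw [← h]; simp
    · exact absurd rfl hd
  have h2 := (h 0 0 (by omega)).mem_span h1
  have h3 : Submodule.span (MvPoly K (Fin n)) (grQ I (0 - 1) : Set (MvPoly K (Fin n) ⧸ I)) = ⊥ := by
    rw [Submodule.span_eq_bot]
    exact fun v hv => eq_zero_of_mem_grQ_neg (by omega) hv
  rw [h3, Submodule.mem_bot, Ideal.Quotient.eq_zero_iff_mem] at h2
  exact hI ((Ideal.eq_top_iff_one I).2 h2)

/-- The augmentation `R → R/I`, with `R` written as a free module of rank one. -/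
noncomputable def aug₁ (I : Ideal (MvPoly K (Fin n))) :
    (Fin 1 → MvPoly K (Fin n)) →ₗ[MvPoly K (Fin n)] (MvPoly K (Fin n) ⧸ I) :=
  (Submodule.mkQ I).comp (LinearMap.proj 0)

theorem aug₁_apply (I : Ideal (MvPoly K (Fin n))) (v : Fin 1 → MvPoly K (Fin n)) :
    aug₁ I v = Ideal.Quotient.mk I (v 0) := rfl

theorem aug₁_surj (I : Ideal (MvPoly K (Fin n))) : Function.Surjective (aug₁ I) := by
  intro v
  obtain ⟨p, rfl⟩ := Ideal.Quotient.mk_surjective v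
  exact ⟨fun _ => p, rfl⟩

theorem aug₁_graded (I : Ideal (MvPoly K (Fin n))) (e : ℤ) (v : Fin 1 → MvPoly K (Fin n))
    (hv : IsHomogVec K (Fin n) (fun _ => 0) e v) : aug₁ I v ∈ QuotComp K (Fin n) I e := by
  refine mem_grQ.2 ⟨v 0, mem_grV_n.2 ?_, rfl⟩
  have := (homogComp_iff _ _).1 (hv 0)
  rwa [sub_zero] at this

theorem resBound_of_RV {I : Ideal (MvPoly K (Fin n))} (hI : MC I) (hne : I ≠ ⊤) {r : ℤ}
    (h : RV I r) : ResBound K (Fin n) I r := by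
  have hr := h.nonneg hne
  have S : GSES (yv K n) n (grN (fun _ => 0) (LinearMap.ker (aug₁ I))) LinearMap.id
      (grF K n (fun _ => 0)) (aug₁ I) (grQ I) :=
    GSES_ker _ (GInd_grQ hI) (aug₁ I) (aug₁_graded I) (fun e v =>
      ⟨fun hv => ⟨aug₁_surj I v, hv⟩, fun hv => hv.2⟩)
  let A : RState K n (r + 1) 0 :=
    { m := 1
      dg := fun _ => 0
      N := LinearMap.ker (aug₁ I)
      homog := GSpan_ker (GSpan_grF _) (GInd_grQ hI) _ (aug₁_graded I)
      tv := fun i e he => by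
        refine TV_left S (TV_grF _ _ _ ?_) (h _ _ (by simp at he; omega))
        by_cases hi : i = 0
        · right
          intro j
          simp at he
          omega
        · exact Or.inl hi }
  have hstep := A.map_spec
  refine ⟨{ rk := fun s => (A.seq s).m
            dg := fun s => (A.seq s).dg
            dmap := A.map
            aug := aug₁ I
            aug_surj := aug₁_surj I
            exact0 := LinearMap.exact_iff.2 (hstep 0).2.2.1.symm
            exactS := fun s => LinearMap.exact_iff.2 ?_
            graded := fun s => (hstep s).2.1
            aug_graded := aug₁_graded I }, ?_⟩
  · exact (hstep s).2.2.2.trans (hstep (s + 1)).2.2.1.symm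
  · intro s j
    cases s with
    | zero => simpa [A, RState.seq] using hr
    | succ s =>
      have := (hstep s).1 j
      push_cast
      omega

theorem resBound_top (r : ℤ) : ResBound K (Fin n) (⊤ : Ideal (MvPoly K (Fin n))) r := by
  have : Subsingleton (MvPoly K (Fin n) ⧸ (⊤ : Ideal (MvPoly K (Fin n)))) :=
    Ideal.Quotient.subsingleton_iff.2 rfl
  refine ⟨{ rk := fun _ => 0
            dg := fun _ _ => 0
            dmap := fun _ => 0
            aug := 0
            aug_surj := fun v => ⟨0, Subsingleton.elim _ _⟩
            exact0 := fun v => ⟨fun _ => ⟨0, Subsingleton.elim _ _⟩, fun _ => rfl⟩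
            exactS := fun i v => ⟨fun _ => ⟨0, Subsingleton.elim _ _⟩, fun _ => rfl⟩
            graded := fun _ _ _ _ j => j.elim0
            aug_graded := fun _ _ _ => zero_mem _ }, fun i j => j.elim0⟩

theorem RV_top (r : ℤ) : RV (⊤ : Ideal (MvPoly K (Fin n))) r :=
  RV_of_resBound (fun _ _ _ _ => Submodule.mem_top) (resBound_top r)

theorem resBound_iff_RV {I : Ideal (MvPoly K (Fin n))} (hI : MC I) {r : ℤ} :
    ResBound K (Fin n) I r ↔ RV I r := by
  refine ⟨RV_of_resBound hI, fun h => ?_⟩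
  by_cases hne : I = ⊤
  · subst hne; exact resBound_top r
  · exact resBound_of_RV hI hne h

theorem RV.of_le {I : Ideal (MvPoly K (Fin n))} {r s : ℤ} (h : RV I r) (hrs : r ≤ s) : RV I s :=
  fun i e he => h i e (by omega)

theorem RV.mid {I : Ideal (MvPoly K (Fin n))} (hI : MC I) {b : Fin n →₀ ℕ} {r s : ℤ}
    (h1 : RV (I.colon (Ideal.span {mono K b})) s) (h2 : RV (I + Ideal.span {mono K b}) r)
    (h : s + b.degree ≤ r) : RV I r := fun i e he =>
  TV_mid (GSES_colon hI b) ((TV_shift ..).2 (h1 _ _ (by omega))) (h2 _ _ (by omega))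

theorem RV.right {I : Ideal (MvPoly K (Fin n))} (hI : MC I) {b : Fin n →₀ ℕ} {r s : ℤ}
    (h1 : RV (I.colon (Ideal.span {mono K b})) s) (h2 : RV I r)
    (h : s + b.degree - 1 ≤ r) : RV (I + Ideal.span {mono K b}) r := fun i e he =>
  TV_right (GSES_colon hI b) (h2 _ _ (by omega)) ((TV_shift ..).2 (h1 _ _ (by omega)))

theorem RV.left {I : Ideal (MvPoly K (Fin n))} (hI : MC I) {b : Fin n →₀ ℕ} {r r' s : ℤ}
    (h1 : RV I r) (h2 : RV (I + Ideal.span {mono K b}) r')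
    (h : r ≤ s + b.degree) (h' : r' + 1 ≤ s + b.degree) :
    RV (I.colon (Ideal.span {mono K b})) s := fun i e he => by
  have := TV_left (GSES_colon hI b) (h1 i (e + b.degree) (by omega)) (h2 _ _ (by omega))
  have := (TV_shift ..).1 this
  rwa [add_sub_cancel_right] at this

theorem RV_bot : RV (⊥ : Ideal (MvPoly K (Fin n))) 0 := by
  refine RV_of_resBound (fun p hp d hd => ?_) ?_
  · rw [Ideal.mem_bot] at hp
    subst hp
    simp at hd
  have hker : ∀ v, aug₁ (⊥ : Ideal (MvPoly K (Fin n))) v = 0 → v = 0 := by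
    intro v hv
    rw [aug₁_apply, Ideal.Quotient.eq_zero_iff_mem, Ideal.mem_bot] at hv
    funext j
    rw [Subsingleton.elim j 0, hv]
    rfl
  refine ⟨{ rk := fun s => Nat.casesOn s 1 fun _ => 0
            dg := fun _ _ => 0
            dmap := fun _ => 0
            aug := aug₁ ⊥
            aug_surj := aug₁_surj ⊥
            exact0 := fun v => ⟨fun h => ⟨0, (hker v h).symm⟩, ?_⟩
            exactS := fun i v => ⟨fun _ => ⟨0, ?_⟩, fun _ => rfl⟩
            graded := fun _ e _ _ => (grF K n (fun _ => 0) e).zero_mem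
            aug_graded := aug₁_graded ⊥ }, fun i j => by simp⟩
  · rintro ⟨u, rfl⟩
    exact map_zero _
  · funext j
    exact j.elim0

theorem colon_span (S : Set (Fin n →₀ ℕ)) (a : Fin n →₀ ℕ) :
    (Ideal.span (mono K '' S)).colon (Ideal.span {mono K a}) =
      Ideal.span (mono K '' ((fun s => s - a) '' S)) := by
  have hM : MC (Ideal.span (mono K '' S)) := MC_of_isMonomialIdeal ⟨S, rfl⟩
  apply le_antisymm
  · intro p hp
    refine mem_of_mono fun d hd => ?_
    have h1 := hM.colon a p hp d hd
    rw [mem_colon, ← mono_add] at h1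
    obtain ⟨s, hs, hsd⟩ := mem_ideal_span_monomial_image.1 h1 (d + a)
      (mem_support_iff.2 (by simp [mono]))
    exact mono_mem_of_le (tsub_le_iff_right.2 hsd) (Ideal.subset_span ⟨_, ⟨s, hs, rfl⟩, rfl⟩)
  · rw [Ideal.span_le]
    rintro _ ⟨_, ⟨s, hs, rfl⟩, rfl⟩
    rw [SetLike.mem_coe, mem_colon, ← mono_add]
    exact mono_mem_of_le le_tsub_add (Ideal.subset_span ⟨s, hs, rfl⟩)

/-- Finiteness of the regularity, by induction on the number of generators: adjoining `x^a` to an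
ideal uses the colon by `x^a`, which has no more generators. -/
theorem exists_RV_finset (k : ℕ) : ∀ S : Finset (Fin n →₀ ℕ), S.card ≤ k →
    ∃ r, RV (Ideal.span (mono K '' (S : Set (Fin n →₀ ℕ)))) r := by
  classical
  induction k with
  | zero =>
    intro S hS
    obtain rfl : S = ∅ := Finset.card_eq_zero.1 (Nat.le_zero.1 hS)
    refine ⟨0, ?_⟩
    rw [Finset.coe_empty, Set.image_empty, Ideal.span_empty]
    exact RV_bot
  | succ k ih =>
    intro S hS
    rcases S.eq_empty_or_nonempty with rfl | ⟨a, ha⟩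
    · exact ih ∅ (by simp)
    · have hcard : (S.erase a).card ≤ k := by
        rw [Finset.card_erase_of_mem ha]; omega
      obtain ⟨r, hr⟩ := ih (S.erase a) hcard
      obtain ⟨s, hs⟩ := ih ((S.erase a).image fun s => s - a)
        (Finset.card_image_le.trans hcard)
      rw [Finset.coe_image, ← colon_span] at hs
      refine ⟨max r (s + a.degree - 1), ?_⟩
      have := RV.right (MC_of_isMonomialIdeal ⟨_, rfl⟩) hs (hr.of_le (le_max_left _ _))
        (le_max_right _ _)
      convert this using 1
      rw [Submodule.add_eq_sup, ← Ideal.span_union, ← Set.image_singleton, ← Set.image_union]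
      congr 2
      ext d
      by_cases hd : d = a <;> simp [hd, ha]

theorem exists_RV {I : Ideal (MvPoly K (Fin n))} (hI : MC I) : ∃ r, RV I r := by
  classical
  have hspan : I = Ideal.span (mono K '' {d | mono K d ∈ I}) := by
    apply le_antisymm
    · intro p hp
      exact mem_of_mono fun d hd => Ideal.subset_span ⟨d, hI p hp d hd, rfl⟩
    · rw [Ideal.span_le]
      rintro _ ⟨d, hd, rfl⟩
      exact hd
  have hfg : (Submodule.span (MvPoly K (Fin n)) (mono K '' {d | mono K d ∈ I})).FG :=
    IsNoetherian.noetherian _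
  obtain ⟨T, hT, hTs⟩ := Submodule.fg_span_iff_fg_span_finset_subset _ |>.1 hfg
  obtain ⟨S, -, rfl⟩ := Finset.subset_set_image_iff.1 hT
  obtain ⟨r, hr⟩ := exists_RV_finset (K := K) S.card S le_rfl
  refine ⟨r, ?_⟩
  rw [hspan, Ideal.span, hTs, Finset.coe_image]
  exact hr

/-- The regularity is the least `r` such that `Tor_i(K, R/I)_e = 0` for all `e > i + r`. -/
theorem CMreg_le_iff {I : Ideal (MvPoly K (Fin n))} (hI : MC I) (r : ℤ) :
    CMreg K (Fin n) I ≤ (r : WithBot ℤ) ↔ RV I r := by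
  unfold CMreg
  by_cases hne : I = ⊤
  · subst hne
    rw [dif_neg]
    · exact iff_of_true bot_le (RV_top r)
    · rintro ⟨r, -, hr⟩
      have := hr (r - 1) (resBound_top _)
      omega
  · have hex : ∃ r : ℤ, ResBound K (Fin n) I r ∧ ∀ s : ℤ, ResBound K (Fin n) I s → r ≤ s := by
      refine Int.exists_least_of_bdd ⟨0, fun z hz => ?_⟩ ?_
      · exact ((resBound_iff_RV hI).1 hz).nonneg hne
      · obtain ⟨r, hr⟩ := exists_RV hI
        exact ⟨r, (resBound_iff_RV hI).2 hr⟩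
    rw [dif_pos hex, WithBot.coe_le_coe]
    constructor
    · intro h
      exact ((resBound_iff_RV hI).1 hex.choose_spec.1).of_le h
    · intro h
      exact hex.choose_spec.2 r ((resBound_iff_RV hI).2 h)

end Res

/-! ### The regularity inequalities -/

section Regularity

variable {K : Type} [Field K] {n : ℕ}

/-- A property of monomial ideals inherited by colons by a variable is inherited by colons by
a monomial. -/
theorem colon_induction {Q : Ideal (MvPoly K (Fin n)) → Prop}
    (h : ∀ I, MC I → Q I → ∀ j : Fin n, Q (I.colon (Ideal.span {mono K (Finsupp.single j 1)})))
    (b : Fin n →₀ ℕ) : ∀ I, MC I → Q I → Q (I.colon (Ideal.span {mono K b})) := by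
  induction b using Finsupp.induction_linear with
  | zero =>
    intro I _ hQ
    rwa [colon_mono_zero]
  | add a b iha ihb =>
    intro I hI hQ
    rw [colon_mono_add]
    exact ihb _ (hI.colon a) (iha I hI hQ)
  | single j k =>
    induction k with
    | zero =>
      intro I _ hQ
      rwa [Finsupp.single_zero, colon_mono_zero]
    | succ k ih =>
      intro I hI hQ
      rw [Finsupp.single_add, colon_mono_add]
      exact h _ (hI.colon _) (ih I hI hQ) j

theorem RV.colon {I : Ideal (MvPoly K (Fin n))} (hI : MC I) {r : ℤ} (h : RV I r)
    (b : Fin n →₀ ℕ) : RV (I.colon (Ideal.span {mono K b})) r := by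
  refine colon_induction (Q := fun I => RV I r) ?_ b I hI h
  intro I hI h j
  -- `x_j` is regular modulo `delX I j`, and `delX I j + (x_j) = I + (x_j)`.
  have h1 : RV (delX I j) r := fun i e he => TV_delX hI j (h i e he)
  have h2 : RV (delX I j + Ideal.span {mono K (Finsupp.single j 1)}) r :=
    RV.right (MC_delX I j) (by rw [delX_colon]; exact h1) h1 (by simp)
  rw [hI.delX_add] at h2
  exact RV.left hI h h2 (by simp) (by simp)

theorem le_of_forall_int {a c : WithBot ℤ} (h : ∀ r : ℤ, a ≤ r → c ≤ r) : c ≤ a := by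
  cases a with
  | bot =>
    cases c with
    | bot => exact le_rfl
    | coe c =>
      have := h (c - 1) bot_le
      rw [WithBot.coe_le_coe] at this
      omega
  | coe a => exact h a le_rfl

theorem CMreg_colon_le {I : Ideal (MvPoly K (Fin n))} (hI : MC I) (b : Fin n →₀ ℕ) :
    CMreg K (Fin n) (I.colon (Ideal.span {mono K b})) ≤ CMreg K (Fin n) I := by
  refine le_of_forall_int fun r hr => ?_
  rw [CMreg_le_iff hI] at hr
  exact (CMreg_le_iff (hI.colon b) r).2 (hr.colon hI b)

theorem CMreg_add_le {I : Ideal (MvPoly K (Fin n))} (hI : MC I) (b : Fin n →₀ ℕ) :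
    CMreg K (Fin n) (I + Ideal.span {mono K b}) ≤
      CMreg K (Fin n) I + (((b.degree : ℤ) - 1 : ℤ) : WithBot ℤ) := by
  refine le_of_forall_int fun r hr => (CMreg_le_iff (hI.add b) r).2 ?_
  have h1 : CMreg K (Fin n) I ≤ ((r - (b.degree - 1) : ℤ) : WithBot ℤ) := by
    generalize CMreg K (Fin n) I = a at hr ⊢
    cases a with
    | bot => exact bot_le
    | coe a =>
      rw [← WithBot.coe_add, WithBot.coe_le_coe] at hr
      rw [WithBot.coe_le_coe]
      omega
  rw [CMreg_le_iff hI] at h1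
  by_cases hb : b.degree = 0
  · -- here `x^b = 1`, so the sum is the unit ideal
    obtain rfl : b = 0 := (Finsupp.degree_eq_zero_iff b).1 hb
    have : I + Ideal.span {mono K (0 : Fin n →₀ ℕ)} = ⊤ :=
      (Ideal.eq_top_iff_one _).2 (mem_add_span.2 ⟨0, zero_mem _, 1, by simp [mono]⟩)
    rw [this]
    exact RV_top r
  · exact RV.right hI (h1.colon hI b) (h1.of_le (by omega)) (by omega)

theorem CMreg_dichotomy {I : Ideal (MvPoly K (Fin n))} (hI : MC I) {b : Fin n →₀ ℕ}
    (hb : b.degree = 1) :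
    CMreg K (Fin n) I = CMreg K (Fin n) (I.colon (Ideal.span {mono K b})) + 1 ∨
      CMreg K (Fin n) I = CMreg K (Fin n) (I + Ideal.span {mono K b}) := by
  have hle1 := CMreg_colon_le hI b
  have hle2 := CMreg_add_le hI b
  rw [hb] at hle2
  cases hr : CMreg K (Fin n) I with
  | bot =>
    left
    rw [hr, le_bot_iff] at hle1
    rw [hle1, WithBot.bot_add]
  | coe r =>
    rw [hr] at hle2
    by_cases heq : CMreg K (Fin n) (I + Ideal.span {mono K b}) = (r : WithBot ℤ)
    · exact Or.inr heq.symm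
    left
    have hlt : ∀ {c : WithBot ℤ} {s : ℤ}, c ≤ s → c ≠ s → c ≤ ((s - 1 : ℤ) : WithBot ℤ) := by
      intro c s h1 h2
      cases c with
      | bot => exact bot_le
      | coe c =>
        rw [WithBot.coe_le_coe] at h1 ⊢
        have : c ≠ s := fun h => h2 (congrArg _ h)
        omega
    have h1 : RV (I + Ideal.span {mono K b}) (r - 1) :=
      (CMreg_le_iff (hI.add b) _).1 (hlt (by simpa using hle2) heq)
    have h0 : RV I r := (CMreg_le_iff hI r).1 hr.le
    have h2 : RV (I.colon (Ideal.span {mono K b})) (r - 1) :=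
      RV.left hI h0 h1 (by omega) (by omega)
    have h3 : CMreg K (Fin n) (I.colon (Ideal.span {mono K b})) = ((r - 1 : ℤ) : WithBot ℤ) := by
      by_contra hne
      have h4 := hlt ((CMreg_le_iff (hI.colon b) _).2 h2) hne
      rw [CMreg_le_iff (hI.colon b)] at h4
      have h5 : RV I (r - 1) := RV.mid hI h4 h1 (by omega)
      rw [← CMreg_le_iff hI, hr, WithBot.coe_le_coe] at h5
      omega
    rw [h3, ← WithBot.coe_one, ← WithBot.coe_add, sub_add_cancel]

end Regularity

/-! ### Vanishing of Ext through a projective resolution -/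

section Cochains

variable {R : Type} [CommRing R] {P : ℕ → Type} [∀ i, AddCommGroup (P i)] [∀ i, Module R (P i)]
  (d : ∀ i j, P i →ₗ[R] P j)
variable {A B C : Type} [AddCommGroup A] [Module R A] [AddCommGroup B] [Module R B]
  [AddCommGroup C] [Module R C]

/-- Exactness in degree `i` of the complex `Hom(P, Y)`. In degree `0` the map `d 0 (0 - 1)`
is `d 0 0`, which vanishes for a chain complex, so the condition reads `φ = 0`. -/
def EV (i : ℕ) (Y : Type) [AddCommGroup Y] [Module R Y] : Prop :=
  ∀ φ : P i →ₗ[R] Y, φ ∘ₗ d (i + 1) i = 0 → ∃ ψ : P (i - 1) →ₗ[R] Y, φ = ψ ∘ₗ d i (i - 1)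

/-- A linear map into `B` with values in the image of the injection `f` factors through `f`. -/
theorem factor_inj {M : Type} [AddCommGroup M] [Module R M] {f : A →ₗ[R] B}
    (hf : Function.Injective f) (φ : M →ₗ[R] B) (h : ∀ m, ∃ a, f a = φ m) :
    ∃ χ : M →ₗ[R] A, f ∘ₗ χ = φ := by
  choose c hc using h
  refine ⟨⟨⟨c, fun x y => hf ?_⟩, fun r x => hf ?_⟩, LinearMap.ext hc⟩
  · rw [hc, map_add, map_add, hc, hc]
  · simp only [RingHom.id_apply]
    rw [hc, map_smul, map_smul, hc]

variable [∀ i, Module.Projective R (P i)]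

/-- `EV_middle`, `EV_right` and `EV_left` are the three vanishing statements read off the long exact
sequence of Ext. -/
theorem EV_middle {f : A →ₗ[R] B} {g : B →ₗ[R] C} (hf : Function.Injective f)
    (hg : Function.Surjective g) (hfg : Function.Exact f g)
    (hd : ∀ i, d i (i - 1) ∘ₗ d (i + 1) i = 0) {i : ℕ} (hA : EV d i A) (hC : EV d i C) :
    EV d i B := by
  intro φ hφ
  obtain ⟨ψ, hψ⟩ := hC (g ∘ₗ φ) (by rw [LinearMap.comp_assoc, hφ, LinearMap.comp_zero])
  obtain ⟨ψ', rfl⟩ := Module.projective_lifting_property g ψ hg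
  obtain ⟨χ, hχ⟩ := factor_inj hf (φ - ψ' ∘ₗ d i (i - 1)) fun m => (hfg _).1 (by
    have := LinearMap.congr_fun hψ m
    simp only [LinearMap.comp_apply] at this
    simp [this])
  obtain ⟨θ, hθ⟩ := hA χ (by
    rw [← LinearMap.cancel_left hf, ← LinearMap.comp_assoc, hχ, LinearMap.sub_comp, hφ,
      LinearMap.comp_assoc, hd, LinearMap.comp_zero, LinearMap.comp_zero, sub_zero])
  refine ⟨ψ' + f ∘ₗ θ, ?_⟩
  rw [LinearMap.add_comp, LinearMap.comp_assoc _ _ f, ← hθ, hχ, add_sub_cancel]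

theorem EV_right {f : A →ₗ[R] B} {g : B →ₗ[R] C} (hf : Function.Injective f)
    (hg : Function.Surjective g) (hfg : Function.Exact f g)
    (hd : ∀ i, d i (i - 1) ∘ₗ d (i + 1) i = 0) {i : ℕ} (hB : EV d i B) (hA : EV d (i + 1) A) :
    EV d i C := by
  intro φ hφ
  obtain ⟨φ', rfl⟩ := Module.projective_lifting_property g φ hg
  obtain ⟨χ, hχ⟩ := factor_inj hf (φ' ∘ₗ d (i + 1) i) fun m => (hfg _).1
    (LinearMap.congr_fun hφ m)
  obtain ⟨θ, hθ⟩ := hA χ (by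
    rw [← LinearMap.cancel_left hf, ← LinearMap.comp_assoc, hχ, LinearMap.comp_assoc]
    have : d (i + 1) i ∘ₗ d (i + 1 + 1) (i + 1) = 0 := hd (i + 1)
    rw [this, LinearMap.comp_zero, LinearMap.comp_zero])
  change P i →ₗ[R] A at θ
  change χ = θ ∘ₗ d (i + 1) i at hθ
  obtain ⟨ψ, hψ⟩ := hB (φ' - f ∘ₗ θ) (by
    rw [LinearMap.sub_comp, LinearMap.comp_assoc _ _ f, ← hθ, hχ, sub_self])
  refine ⟨g ∘ₗ ψ, ?_⟩
  rw [LinearMap.comp_assoc, ← hψ, LinearMap.comp_sub, ← LinearMap.comp_assoc,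
    hfg.linearMap_comp_eq_zero, LinearMap.zero_comp]
  simp

theorem EV_left {f : A →ₗ[R] B} {g : B →ₗ[R] C} (hf : Function.Injective f)
    (hg : Function.Surjective g) (hfg : Function.Exact f g) (h0 : d 0 0 = 0)
    (hd : ∀ i, d i (i - 1) ∘ₗ d (i + 1) i = 0) {i : ℕ} (hB : EV d i B)
    (hC : ∀ j, j + 1 = i → EV d j C) : EV d i A := by
  intro φ hφ
  obtain ⟨ψ, hψ⟩ := hB (f ∘ₗ φ) (by rw [LinearMap.comp_assoc, hφ, LinearMap.comp_zero])
  obtain _ | j := i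
  · refine ⟨0, ?_⟩
    have h0' : d 0 (0 - 1) = 0 := h0
    rw [h0', LinearMap.comp_zero] at hψ
    rw [← LinearMap.cancel_left hf, hψ, LinearMap.zero_comp, LinearMap.comp_zero]
  · change P j →ₗ[R] B at ψ
    change f ∘ₗ φ = ψ ∘ₗ d (j + 1) j at hψ
    obtain ⟨θ, hθ⟩ := hC j rfl (g ∘ₗ ψ) (by
      rw [LinearMap.comp_assoc, ← hψ, ← LinearMap.comp_assoc, hfg.linearMap_comp_eq_zero,
        LinearMap.zero_comp])
    obtain ⟨θ', rfl⟩ := Module.projective_lifting_property g θ hg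
    obtain ⟨χ, hχ⟩ := factor_inj hf (ψ - θ' ∘ₗ d j (j - 1)) fun m => (hfg _).1 (by
      have := LinearMap.congr_fun hθ m
      simp only [LinearMap.comp_apply] at this
      simp [this])
    refine ⟨χ, ?_⟩
    change φ = χ ∘ₗ d (j + 1) j
    rw [← LinearMap.cancel_left hf, hψ, ← LinearMap.comp_assoc, hχ, LinearMap.sub_comp,
      LinearMap.comp_assoc _ _ θ', hd, LinearMap.comp_zero, sub_zero]

/-- If `x` is null-homotopic on `P` and a nonzerodivisor on `B`, vanishing of cohomology passes
from a quotient `C` of `B` to `B` as soon as the kernel of `B → C` lies in `xB`. -/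
theorem EV_of_quot {x : R} (hx : ∀ i, ∃ (h : P i →ₗ[R] P (i + 1)) (h' : P (i - 1) →ₗ[R] P i),
      x • LinearMap.id = d (i + 1) i ∘ₗ h + h' ∘ₗ d i (i - 1))
    {g : B →ₗ[R] C} (hg : Function.Surjective g) (hxB : ∀ v : B, x • v = 0 → v = 0)
    (hker : ∀ v, g v = 0 → ∃ w, x • w = v)
    (hd : ∀ i, d i (i - 1) ∘ₗ d (i + 1) i = 0) {i : ℕ} (hC : EV d i C) : EV d i B := by
  intro φ hφ
  have hinj : Function.Injective (x • (LinearMap.id : B →ₗ[R] B)) := by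
    rw [← LinearMap.ker_eq_bot, LinearMap.ker_eq_bot']
    exact hxB
  obtain ⟨ψ, hψ⟩ := hC (g ∘ₗ φ) (by rw [LinearMap.comp_assoc, hφ, LinearMap.comp_zero])
  obtain ⟨ψ', rfl⟩ := Module.projective_lifting_property g ψ hg
  obtain ⟨χ, hχ⟩ := factor_inj hinj (φ - ψ' ∘ₗ d i (i - 1)) fun m => hker _ (by
    have := LinearMap.congr_fun hψ m
    simp only [LinearMap.comp_apply] at this
    simp [this])
  have hχd : χ ∘ₗ d (i + 1) i = 0 := by
    rw [← LinearMap.cancel_left hinj, ← LinearMap.comp_assoc, hχ, LinearMap.sub_comp, hφ,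
      LinearMap.comp_assoc, hd, LinearMap.comp_zero, LinearMap.comp_zero, sub_zero]
  obtain ⟨h, h', hh⟩ := hx i
  have h1 : (x • (LinearMap.id : B →ₗ[R] B)) ∘ₗ χ = (χ ∘ₗ h') ∘ₗ d i (i - 1) := by
    have : (x • (LinearMap.id : B →ₗ[R] B)) ∘ₗ χ = χ ∘ₗ (x • LinearMap.id) := by
      ext; simp
    rw [this, hh, LinearMap.comp_add, ← LinearMap.comp_assoc, hχd, LinearMap.zero_comp, zero_add,
      LinearMap.comp_assoc]
  refine ⟨ψ' + χ ∘ₗ h', ?_⟩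
  rw [LinearMap.add_comp, ← h1, hχ, add_sub_cancel]

end Cochains

section Bridge

variable {R : Type} [CommRing R] {M : ModuleCat.{0} R} (P : ProjectiveResolution M)

/-- Exactness of `Hom(P, Y)` in degree `i`, for a projective resolution `P` of `M`, is the vanishing
of `Ext^i(M, Y)`. -/
theorem EV_iff (i : ℕ) (Y : ModuleCat.{0} R) :
    EV (fun i j => (P.complex.d i j).hom) i Y ↔
      ¬ Nontrivial (((Ext R (ModuleCat R) i).obj (op M)).obj Y) := by
  have hprev : (ComplexShape.up ℕ).prev i = i - 1 := by
    cases i <;> simp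
  rw [not_nontrivial_iff_subsingleton, ← ModuleCat.isZero_iff_subsingleton,
    (P.isoExt i Y).isZero_iff, ← HomologicalComplex.exactAt_iff_isZero_homology,
    HomologicalComplex.exactAt_iff' _ (i - 1) i (i + 1) hprev (by simp),
    ShortComplex.moduleCat_exact_iff]
  constructor
  · intro h (φ : P.complex.X i ⟶ Y) hφ
    obtain ⟨ψ, hψ⟩ := h φ.hom (congrArg ModuleCat.Hom.hom
      (show P.complex.d (i + 1) i ≫ φ = 0 from hφ))
    exact ⟨ModuleCat.ofHom ψ, show P.complex.d i (i - 1) ≫ ModuleCat.ofHom ψ = φ from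
      ModuleCat.hom_ext hψ.symm⟩
  · intro h φ hφ
    obtain ⟨(ψ : P.complex.X (i - 1) ⟶ Y), hψ⟩ := h (ModuleCat.ofHom φ)
      (show P.complex.d (i + 1) i ≫ ModuleCat.ofHom φ = 0 from ModuleCat.hom_ext hφ)
    exact ⟨ψ.hom, (congrArg ModuleCat.Hom.hom
      (show P.complex.d i (i - 1) ≫ ψ = ModuleCat.ofHom φ from hψ)).symm⟩

theorem res_projective (i : ℕ) : Module.Projective R (P.complex.X i) :=
  (IsProjective.iff_projective _).2 (P.projective i)

theorem res_d_zero : (P.complex.d 0 0).hom = 0 := by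
  rw [P.complex.shape 0 0 (by simp)]
  rfl

theorem res_d_comp_d (i : ℕ) :
    (P.complex.d i (i - 1)).hom ∘ₗ (P.complex.d (i + 1) i).hom = 0 := by
  rw [← ModuleCat.hom_comp, P.complex.d_comp_d]
  rfl

/-- An element of the annihilator of `M` acts null-homotopically on a projective resolution. -/
theorem res_homotopy {x : R} (hx : ∀ m : M, x • m = 0) (i : ℕ) :
    ∃ (h : P.complex.X i →ₗ[R] P.complex.X (i + 1))
      (h' : P.complex.X (i - 1) →ₗ[R] P.complex.X i),
      x • LinearMap.id = (P.complex.d (i + 1) i).hom ∘ₗ h + h' ∘ₗ (P.complex.d i (i - 1)).hom := by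
  let F : P.complex ⟶ P.complex := x • 𝟙 _
  have hF : F ≫ P.π = 0 := by
    rw [show F ≫ P.π = x • P.π by simp [F]]
    refine HomologicalComplex.to_single_hom_ext (ModuleCat.hom_ext (LinearMap.ext fun v => ?_))
    exact hx (P.π.f 0 v)
  let H := ProjectiveResolution.liftHomotopyZero F hF
  have hc := H.comm i
  refine ⟨(H.hom i (i + 1)).hom, (H.hom (i - 1) i).hom, ?_⟩
  have h1 : F.f i = H.hom i (i + 1) ≫ P.complex.d (i + 1) i
      + P.complex.d i (i - 1) ≫ H.hom (i - 1) i := by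
    rw [hc]
    cases i with
    | zero =>
      rw [Homotopy.dNext_zero_chainComplex, Homotopy.prevD_chainComplex]
      simp
    | succ j =>
      rw [Homotopy.dNext_succ_chainComplex, Homotopy.prevD_chainComplex,
        HomologicalComplex.zero_f, add_zero]
      exact add_comm _ _
  have := congrArg ModuleCat.Hom.hom h1
  simpa [F] using this

end Bridge

/-! ### The depth inequalities -/

section Depth

variable {K : Type} [Field K] {n : ℕ}

/-- `Ext^i(R/m, R/I) = 0`. -/
def ExtV (I : Ideal (MvPoly K (Fin n))) (i : ℕ) : Prop :=
  ¬ Nontrivial (((Ext (MvPoly K (Fin n)) (ModuleCat (MvPoly K (Fin n))) i).obj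
      (op (ModuleCat.of (MvPoly K (Fin n)) (MvPoly K (Fin n) ⧸ maxIdeal K (Fin n))))).obj
      (ModuleCat.of (MvPoly K (Fin n)) (MvPoly K (Fin n) ⧸ I)))

theorem le_depthQ_iff {I : Ideal (MvPoly K (Fin n))} {d : ℕ∞} :
    d ≤ depthQ K (Fin n) I ↔ ∀ i : ℕ, (i : ℕ∞) < d → ExtV I i := by
  rw [depthQ, le_sInf_iff]
  constructor
  · intro h i hi hn
    exact absurd (h i ⟨i, rfl, hn⟩) (not_le.2 hi)
  · rintro h _ ⟨i, rfl, hn⟩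
    by_contra hi
    exact h i (not_le.1 hi) hn

variable (K n) in
/-- A fixed projective resolution of `R/m`. -/
noncomputable def resK : ProjectiveResolution
    (ModuleCat.of (MvPoly K (Fin n)) (MvPoly K (Fin n) ⧸ maxIdeal K (Fin n))) :=
  projectiveResolution _

theorem ExtV_iff (I : Ideal (MvPoly K (Fin n))) (i : ℕ) :
    ExtV I i ↔ EV (fun i j => ((resK K n).complex.d i j).hom) i (MvPoly K (Fin n) ⧸ I) :=
  (EV_iff (resK K n) i (ModuleCat.of _ (MvPoly K (Fin n) ⧸ I))).symm

instance resK_projective (i : ℕ) :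
    Module.Projective (MvPoly K (Fin n)) ((resK K n).complex.X i) :=
  res_projective _ i

theorem ExtV_middle {I : Ideal (MvPoly K (Fin n))} (f : MvPoly K (Fin n)) {i : ℕ}
    (h1 : ExtV (I.colon (Ideal.span {f})) i) (h2 : ExtV (I + Ideal.span {f}) i) : ExtV I i := by
  rw [ExtV_iff] at *
  exact EV_middle _ (mulQ_injective I f) (projQ_surjective _) (mulQ_projQ_exact I f)
    (res_d_comp_d _) h1 h2

theorem ExtV_add {I : Ideal (MvPoly K (Fin n))} (f : MvPoly K (Fin n)) {i : ℕ}
    (h1 : ExtV I i) (h2 : ExtV (I.colon (Ideal.span {f})) (i + 1)) :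
    ExtV (I + Ideal.span {f}) i := by
  rw [ExtV_iff] at *
  exact EV_right _ (mulQ_injective I f) (projQ_surjective _) (mulQ_projQ_exact I f)
    (res_d_comp_d _) h1 h2

theorem ExtV_colon {I : Ideal (MvPoly K (Fin n))} (f : MvPoly K (Fin n)) {i : ℕ}
    (h1 : ExtV I i) (h2 : ∀ j, j + 1 = i → ExtV (I + Ideal.span {f}) j) :
    ExtV (I.colon (Ideal.span {f})) i := by
  simp only [ExtV_iff] at *
  exact EV_left _ (mulQ_injective I f) (projQ_surjective _) (mulQ_projQ_exact I f)
    (res_d_zero _) (res_d_comp_d _) h1 h2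

/-- Since `x_j` is a nonzerodivisor on `R/J` for `J = delX I j`, and `J ≤ I ≤ J + (x_j)`, the
vanishing of `Ext^i(R/m, -)` passes from `R/I` to `R/J`. -/
theorem ExtV_delX {I : Ideal (MvPoly K (Fin n))} (hI : MC I) (j : Fin n) {i : ℕ}
    (h : ExtV I i) : ExtV (delX I j) i := by
  rw [ExtV_iff] at *
  refine EV_of_quot _ (x := mono K (Finsupp.single j 1)) (res_homotopy _ fun m => ?_)
    (projQ_surjective (delX_le (I := I) (j := j))) (fun v hv => ?_) (fun v hv => ?_)
    (res_d_comp_d _) h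
  · obtain ⟨p, rfl⟩ := Ideal.Quotient.mk_surjective m
    refine Ideal.Quotient.eq_zero_iff_mem.2 (Ideal.mul_mem_right _ _ ?_)
    exact Ideal.subset_span ⟨j, rfl⟩
  · obtain ⟨p, rfl⟩ := Ideal.Quotient.mk_surjective v
    refine Ideal.Quotient.eq_zero_iff_mem.2 (delX_reg ?_)
    rw [mul_comm]
    exact Ideal.Quotient.eq_zero_iff_mem.1 hv
  · obtain ⟨p, rfl⟩ := Ideal.Quotient.mk_surjective v
    rw [projQ_mk, Ideal.Quotient.eq_zero_iff_mem] at hv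
    obtain ⟨q, hq, g, rfl⟩ := mem_add_span.1 (hI.le_delX_add j hv)
    refine ⟨Ideal.Quotient.mk _ g, ?_⟩
    rw [map_add, Ideal.Quotient.eq_zero_iff_mem.2 hq, zero_add, mul_comm]
    rfl

/-- With `J = delX I j` one has `I + (x_j) = J + (x_j)`, so the vanishing for `R/(I + (x_j))` in
degrees below `d - 1` comes from that for `R/J`. -/
theorem ExtV_colon_var {d : ℕ∞} {I : Ideal (MvPoly K (Fin n))} (hI : MC I)
    (h : ∀ i : ℕ, (i : ℕ∞) < d → ExtV I i) (j : Fin n) (i : ℕ) (hi : (i : ℕ∞) < d) :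
    ExtV (I.colon (Ideal.span {mono K (Finsupp.single j 1)})) i := by
  refine ExtV_colon _ (h i hi) ?_
  rintro i rfl
  rw [← hI.delX_add]
  refine ExtV_add _ (ExtV_delX hI j (h i (lt_trans ?_ hi))) ?_
  · exact_mod_cast Nat.lt_succ_self i
  · rw [delX_colon]
    exact ExtV_delX hI j (h _ hi)

theorem depthQ_le_colon {I : Ideal (MvPoly K (Fin n))} (hI : MC I) (b : Fin n →₀ ℕ) :
    depthQ K (Fin n) I ≤ depthQ K (Fin n) (I.colon (Ideal.span {mono K b})) :=
  le_depthQ_iff.2 <| colon_induction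
    (Q := fun J => ∀ i : ℕ, (i : ℕ∞) < depthQ K (Fin n) I → ExtV J i)
    (fun _ hJ h j i hi => ExtV_colon_var hJ h j i hi) b I hI (le_depthQ_iff.1 le_rfl)

theorem depthQ_add_ge {I : Ideal (MvPoly K (Fin n))} (hI : MC I) (b : Fin n →₀ ℕ) :
    depthQ K (Fin n) I - 1 ≤ depthQ K (Fin n) (I + Ideal.span {mono K b}) := by
  refine le_depthQ_iff.2 fun i hi => ?_
  have hi' : ((i + 1 : ℕ) : ℕ∞) < depthQ K (Fin n) I := by
    push_cast
    exact lt_tsub_iff_right.1 hi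
  refine ExtV_add _ (le_depthQ_iff.1 le_rfl i (lt_trans ?_ hi'))
    (le_depthQ_iff.1 (depthQ_le_colon hI b) _ hi')
  exact_mod_cast Nat.lt_succ_self i

theorem depthQ_add_vars {I : Ideal (MvPoly K (Fin n))} (hI : MC I) (T : Finset (Fin n)) :
    depthQ K (Fin n) I - (T.card : ℕ∞) ≤ depthQ K (Fin n)
      (I + Ideal.span ((fun i => (MvPolynomial.X i : MvPoly K (Fin n))) '' ↑T)) := by
  suffices h : MC (I + Ideal.span ((fun i => (MvPolynomial.X i : MvPoly K (Fin n))) '' ↑T)) ∧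
      depthQ K (Fin n) I - (T.card : ℕ∞) ≤ depthQ K (Fin n)
      (I + Ideal.span ((fun i => (MvPolynomial.X i : MvPoly K (Fin n))) '' ↑T)) from h.2
  induction T using Finset.induction_on with
  | empty => simpa using hI
  | insert j T hj ih =>
    have hE : I + Ideal.span ((fun i => (MvPolynomial.X i : MvPoly K (Fin n))) '' ↑(insert j T))
        = (I + Ideal.span ((fun i => (MvPolynomial.X i : MvPoly K (Fin n))) '' ↑T))
          + Ideal.span {mono K (Finsupp.single j 1)} := by
      rw [Finset.coe_insert, Set.image_insert_eq, Set.insert_eq, Ideal.span_union, add_assoc,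
        add_comm (Ideal.span _) (Ideal.span _)]
      rfl
    rw [hE]
    refine ⟨ih.1.add _, le_trans ?_ (depthQ_add_ge ih.1 _)⟩
    rw [Finset.card_insert_of_notMem hj, Nat.cast_add, Nat.cast_one, ← tsub_tsub]
    exact tsub_le_tsub_right ih.2 1

theorem depthQ_dichotomy {I : Ideal (MvPoly K (Fin n))} (hI : MC I) (b : Fin n →₀ ℕ) :
    depthQ K (Fin n) I = depthQ K (Fin n) (I.colon (Ideal.span {mono K b})) ∨
      depthQ K (Fin n) I = depthQ K (Fin n) (I + Ideal.span {mono K b}) := by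
  refine or_iff_not_imp_left.2 fun hne => ?_
  have hlt := lt_of_le_of_ne (depthQ_le_colon hI b) hne
  have hV : ∀ i : ℕ, (i : ℕ∞) ≤ depthQ K (Fin n) I →
      ExtV (I.colon (Ideal.span {mono K b})) i := fun i hi =>
    le_depthQ_iff.1 le_rfl i (lt_of_le_of_lt hi hlt)
  refine le_antisymm (le_depthQ_iff.2 fun i hi => ?_) (le_of_not_gt fun hgt => ?_)
  · refine ExtV_add _ (le_depthQ_iff.1 le_rfl i hi) (hV _ ?_)
    push_cast
    exact Order.add_one_le_of_lt hi
  · -- All `Ext^i(R/m, R/I)` with `i ≤ depth (R/I)` would vanish.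
    have hle : depthQ K (Fin n) I + 1 ≤ depthQ K (Fin n) I := le_depthQ_iff.2 fun i hi => by
      have hi' := (ENat.lt_add_one_iff hlt.ne_top).1 hi
      exact ExtV_middle _ (hV i hi') (le_depthQ_iff.1 le_rfl i (lt_of_le_of_lt hi' hgt))
    exact absurd ((ENat.add_one_le_iff hlt.ne_top).1 hle) (lt_irrefl _)

end Depth

end KoszulReg

/-- depth and regularity inequalities for an arbitrary monomial ideal
`I`, a monomial `f` of degree `k` and distinct variables `x_{i_1}, …, x_{i_k}`. -/
theorem stmt4 (K : Type) [Field K] (n : ℕ) (I : Ideal (MvPoly K (Fin n)))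
    (hI : IsMonomialIdeal K I) (b : Fin n →₀ ℕ) (f : MvPoly K (Fin n)) (hf : f = mono K b)
    (k : ℕ) (hk : k = b.sum fun _ m => m)
    (T : Finset (Fin n)) (hT : T.card = k) :
    (depthQ K (Fin n) (I + Ideal.span {f}) ≥ depthQ K (Fin n) I - 1) ∧
    (depthQ K (Fin n) I ≤ depthQ K (Fin n) (I.colon (Ideal.span {f}))) ∧
    (depthQ K (Fin n)
        (I + Ideal.span ((fun i => (MvPolynomial.X i : MvPoly K (Fin n))) '' ↑T)) ≥
      depthQ K (Fin n) I - (k : ℕ∞)) ∧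
    (CMreg K (Fin n) I ≥ CMreg K (Fin n) (I.colon (Ideal.span {f}))) ∧
    (CMreg K (Fin n) (I + Ideal.span {f}) ≤
      CMreg K (Fin n) I + (((k : ℤ) - 1 : ℤ) : WithBot ℤ)) ∧
    (depthQ K (Fin n) I = depthQ K (Fin n) (I.colon (Ideal.span {f})) ∨
      depthQ K (Fin n) I = depthQ K (Fin n) (I + Ideal.span {f})) ∧
    (k = 1 →
      (CMreg K (Fin n) I = CMreg K (Fin n) (I.colon (Ideal.span {f})) + 1 ∨
        CMreg K (Fin n) I = CMreg K (Fin n) (I + Ideal.span {f}))) := by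
  subst hf
  have hdeg : b.degree = k := hk.symm
  have hM := KoszulReg.MC_of_isMonomialIdeal hI
  refine ⟨KoszulReg.depthQ_add_ge hM b, KoszulReg.depthQ_le_colon hM b, ?_,
    KoszulReg.CMreg_colon_le hM b, ?_, KoszulReg.depthQ_dichotomy hM b, fun h1 => ?_⟩
  · rw [← hT]
    exact KoszulReg.depthQ_add_vars hM T
  · rw [← hdeg]
    exact KoszulReg.CMreg_add_le hM b
  · exact KoszulReg.CMreg_dichotomy hM (hdeg.trans h1)
end

section
/- Let I ⊆ R be a monomial ideal and let x_i be a variable occurring in G(I). Set q = max{deg_{x_i}(x^a) : x^a ∈ G(I)}, B_i = {x^a ∈ G(I) : deg_{x_i}(x^a) = q}, A_i = G(I) \ B_i, p = max{deg_{x_i}(x^a) : x^a ∈ A_i}, and L = ({x^a/x_i : x^a ∈ B_i} ∪ A_i). Then: (a) if p ≥ 1 and q − p ≥ 2, then depth(R/I) = depth(R/L); (b) if p ≥ 0 and q − p = 1, then depth(R/L) ≥ depth(R/I); (c) if p = 0 and q ≥ 2, then depth(R/I) = depth(R/({x^a/x_i^{q−1} : x^a ∈ B_i} ∪ A_i)).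 -/
/-!
Write `x = x_i`, `k = R/m`, and `Q_I = I/xI`. The first point is that the depth of `R/I` is
determined by the vanishing of `Ext(k, Q_I)`.

* For a proper monomial ideal `I`, the maps `Ext^j(k, I) → Ext^j(k, R)` all vanish: for `j < n` the
  target is zero, and for `j ≥ n` the functor `Ext^j(k, -)` is right exact (`k` has projective
  dimension at most `n`), so that the map factors through multiplications by elements of `I ⊆ m`,
  which kill `k`. Hence `Ext^j(k, R/I) = 0` iff `Ext^j(k, R) = 0` and `Ext^{j+1}(k, I) = 0`
  (`extVan_quot_iff`).
* As `x` kills `k`, the sequence `0 → I → I → Q_I → 0` shows that `Ext^j(k, Q_I) = 0` iff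
  `Ext^j(k, I) = 0` and `Ext^{j+1}(k, I) = 0` (`extVan_subQuot_iff`). Since `Ext^0(k, I) = 0`, the
  two points together express `depth R/I ≥ d` through `R` and `Q_I` (`forall_extVan_quot_iff`).

Let `L` arise from `I` by dividing the generators of top degree `q` in `x` by `x`. There are two
short exact sequences
`0 → L/I → Q_I → I/xL → 0` (the first map is multiplication by `x`) and
`0 → I/xL → Q_L → L/I → 0`.
The first one always splits, by the map that takes the component of `x`-degree `q` and divides it
by `x`. Hence if `Ext^j(k, Q_I)` vanishes then so does `Ext^j(k, Q_L)`, and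
`depth R/I ≤ depth R/L`. If no generator of `I` has `x`-degree `q - 1`, then the second sequence
splits too, by the map that removes the component of `x`-degree `q - 1`; so `Q_I` and `Q_L` have
the same vanishing, and the depths agree. The last claim iterates this equality.

Everything about `I` and `L` that enters is a relation between the exponent sets of their
monomials, isolated in the structure `Step`.
-/

open MvPolynomial CategoryTheory Opposite

/-! ### Vanishing of Ext -/

/-- The Ext modules defined through left derived functors vanish exactly when the Ext groups of the
derived category do; both are computed by a projective resolution of `X`. -/
theorem ext_subsingleton_iff {R : Type} [CommRing R] (X Y : ModuleCat.{0} R) (j : ℕ) :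
    Subsingleton (((_root_.Ext R (ModuleCat.{0} R) j).obj (op X)).obj Y) ↔
      Subsingleton (Abelian.Ext X Y j) := by
  let P := projectiveResolution X
  rw [((P.isoExt (R := R) j Y).toLinearEquiv.toEquiv).subsingleton_congr,
    ← ModuleCat.isZero_iff_subsingleton,
    ← HomologicalComplex.exactAt_iff_isZero_homology]
  rcases j with _ | j
  · rw [HomologicalComplex.exactAt_iff' _ 0 0 1 (by simp) (by simp),
      ShortComplex.moduleCat_exact_iff, Abelian.Ext.homEquiv₀.subsingleton_congr]
    constructor
    · intro h
      refine subsingleton_of_forall_eq 0 fun f => ?_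
      let f' : ((ChainComplex.single₀ (ModuleCat.{0} R)).obj X).X 0 ⟶ Y := f
      have h0 : P.complex.d 1 0 ≫ P.π.f 0 ≫ f' = 0 := by
        rw [← Category.assoc, P.complex_d_comp_π_f_zero, Limits.zero_comp]
      obtain ⟨g, hg⟩ := h (P.π.f 0 ≫ f' : P.complex.X 0 ⟶ Y) h0
      have hz : ∀ g : P.complex.X 0 ⟶ Y, P.complex.d 0 0 ≫ g = 0 := fun g => by
        rw [P.complex.shape 0 0 (by simp), Limits.zero_comp]
      have hg' : P.π.f 0 ≫ f' = 0 := hg.symm.trans (hz g)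
      exact (cancel_epi (P.π.f 0)).1 (hg'.trans Limits.comp_zero.symm)
    · intro h f hf
      refine ⟨(0 : P.complex.X 0 ⟶ Y), ?_⟩
      have hf' : P.complex.d 1 0 ≫ (f : P.complex.X 0 ⟶ Y) = 0 := hf
      have h1 := P.exact₀.g_desc (k := f) hf'
      have h2 : P.exact₀.desc f hf' = 0 := Subsingleton.elim (α := X ⟶ Y) _ _
      rw [h2, Limits.comp_zero] at h1
      have h3 : P.complex.d 0 0 ≫ (0 : P.complex.X 0 ⟶ Y) = f := by
        rw [Limits.comp_zero]; exact h1
      exact h3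
  · rw [HomologicalComplex.exactAt_iff' _ j (j+1) (j+2) (by simp) (by simp),
      ShortComplex.moduleCat_exact_iff]
    constructor
    · intro h
      refine subsingleton_of_forall_eq 0 fun α => ?_
      obtain ⟨f, hf, rfl⟩ := P.extMk_surjective α (j+2) rfl
      rw [P.extMk_eq_zero_iff f _ rfl hf j rfl]
      exact h f hf
    · intro h f hf
      exact (P.extMk_eq_zero_iff f _ rfl hf j rfl).1 (Subsingleton.elim _ _)

section extVanishing
variable {R : Type} [CommRing R] (X : ModuleCat.{0} R)

/-- The vanishing of `Ext^j(X, M)`. -/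
def ExtVan (M : Type) [AddCommGroup M] [Module R M] (j : ℕ) : Prop :=
  Subsingleton (Abelian.Ext X (ModuleCat.of R M) j)

variable {X} {M N P : Type} [AddCommGroup M] [Module R M] [AddCommGroup N] [Module R N]
  [AddCommGroup P] [Module R P] {f : M →ₗ[R] N} {g : N →ₗ[R] P}

theorem shortExact_of (hf : Function.Injective f) (hfg : Function.Exact f g)
    (hg : Function.Surjective g) :
    (ShortComplex.mk (ModuleCat.ofHom f) (ModuleCat.ofHom g)
      (by ext x; exact hfg.apply_apply_eq_zero x)).ShortExact :=
  ModuleCat.shortComplex_shortExact _ hfg hf hg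

theorem ExtVan.mid {j : ℕ} (hf : Function.Injective f) (hfg : Function.Exact f g)
    (hg : Function.Surjective g) (h1 : ExtVan X M j) (h3 : ExtVan X P j) : ExtVan X N j := by
  refine subsingleton_of_forall_eq 0 fun x => ?_
  obtain ⟨y, rfl⟩ := Abelian.Ext.covariant_sequence_exact₂ X (shortExact_of hf hfg hg) x
    (h3.elim _ _)
  rw [h1.elim y 0, Abelian.Ext.zero_comp]

theorem ExtVan.retract {j : ℕ} (s : M →ₗ[R] N) (r : N →ₗ[R] M) (h : r ∘ₗ s = LinearMap.id)
    (hN : ExtVan X N j) : ExtVan X M j := by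
  refine subsingleton_of_forall_eq 0 fun x => ?_
  have h1 : ModuleCat.ofHom s ≫ ModuleCat.ofHom r = 𝟙 (ModuleCat.of R M) := by
    rw [← ModuleCat.ofHom_comp, h]; rfl
  rw [← Abelian.Ext.comp_mk₀_id x, ← h1, ← Abelian.Ext.mk₀_comp_mk₀,
    ← Abelian.Ext.comp_assoc_of_second_deg_zero,
    hN.elim (x.comp (Abelian.Ext.mk₀ (ModuleCat.ofHom s)) (add_zero _)) 0, Abelian.Ext.zero_comp]

theorem ExtVan.congr {j : ℕ} (e : M ≃ₗ[R] N) : ExtVan X M j ↔ ExtVan X N j :=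
  ⟨ExtVan.retract e.symm.toLinearMap e.toLinearMap (by ext; simp),
   ExtVan.retract e.toLinearMap e.symm.toLinearMap (by ext; simp)⟩

/-- An element `r` that kills `X` kills `Ext(X, Y)`. -/
theorem comp_smul_eq_zero {j : ℕ} {r : R} (hr : ∀ x : X, r • x = 0) {Y Z : ModuleCat.{0} R}
    (u : Abelian.Ext X Y j) (f : Y ⟶ Z) :
    u.comp (Abelian.Ext.mk₀ (r • f)) (add_zero _) = 0 := by
  have h0 : r • (𝟙 X : X ⟶ X) = 0 := by ext x; exact hr x
  rw [Abelian.Ext.mk₀_smul, Abelian.Ext.comp_smul, ← Abelian.Ext.smul_comp]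
  have : r • u = 0 := by
    conv_lhs => rw [← Abelian.Ext.mk₀_id_comp u]
    rw [← Abelian.Ext.smul_comp, ← Abelian.Ext.mk₀_smul, h0, Abelian.Ext.mk₀_zero,
      Abelian.Ext.zero_comp]
  rw [this, Abelian.Ext.zero_comp]

/-- If the first map of a short exact sequence is zero on `Ext(X, -)`, the long exact sequence breaks
up into short ones. -/
theorem extVan_iff_of_zero {j : ℕ} (hf : Function.Injective f) (hfg : Function.Exact f g)
    (hg : Function.Surjective g)
    (h0 : ∀ j, ∀ u : Abelian.Ext X (ModuleCat.of R M) j,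
      u.comp (Abelian.Ext.mk₀ (ModuleCat.ofHom f)) (add_zero _) = 0) :
    ExtVan X P j ↔ ExtVan X N j ∧ ExtVan X M (j + 1) := by
  have hS := shortExact_of hf hfg hg
  constructor
  · intro h
    constructor
    · refine subsingleton_of_forall_eq 0 fun x => ?_
      obtain ⟨y, rfl⟩ := Abelian.Ext.covariant_sequence_exact₂ X hS x (h.elim _ _)
      exact h0 j y
    · refine subsingleton_of_forall_eq 0 fun x => ?_
      obtain ⟨y, rfl⟩ := Abelian.Ext.covariant_sequence_exact₁ X hS x (h0 _ x) rfl
      rw [h.elim y 0, Abelian.Ext.zero_comp]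
  · rintro ⟨h1, h2⟩
    refine subsingleton_of_forall_eq 0 fun x => ?_
    obtain ⟨y, rfl⟩ := Abelian.Ext.covariant_sequence_exact₃ X hS x rfl (h2.elim _ _)
    rw [h1.elim y 0, Abelian.Ext.zero_comp]

theorem extVan_zero_of_inj {M' : Type} [AddCommGroup M'] [Module R M'] (k : M →ₗ[R] M')
    (hf : Function.Injective k)
    (h0 : ∀ u : Abelian.Ext X (ModuleCat.of R M) 0,
      u.comp (Abelian.Ext.mk₀ (ModuleCat.ofHom k)) (add_zero _) = 0) : ExtVan X M 0 := by
  have : Mono (ModuleCat.ofHom k) := (ModuleCat.mono_iff_injective _).2 hf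
  refine subsingleton_of_forall_eq 0 fun x => ?_
  apply Abelian.Ext.postcomp_mk₀_injective_of_mono X (ModuleCat.ofHom k)
  rw [map_zero]; exact h0 x

theorem extVan_iff_of_split {j : ℕ} (hf : Function.Injective f) (hfg : Function.Exact f g)
    (hg : Function.Surjective g) (r : N →ₗ[R] M) (hr : r ∘ₗ f = LinearMap.id) :
    ExtVan X N j ↔ ExtVan X M j ∧ ExtVan X P j := by
  refine ⟨fun h => ⟨h.retract f r hr, ?_⟩, fun h => ExtVan.mid hf hfg hg h.1 h.2⟩
  have h' := ((Function.Exact.split_tfae' hfg).out 1 0 :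
    (Function.Surjective g ∧ ∃ l, l ∘ₗ f = LinearMap.id) ↔
      (Function.Injective f ∧ ∃ l, g ∘ₗ l = LinearMap.id))
  obtain ⟨-, l, hl⟩ := h'.1 ⟨hg, r, hr⟩
  exact h.retract l g hl

theorem extVan_iff_of_smul {j : ℕ} {x : R} (hx : ∀ y : X, x • y = 0) {g : M →ₗ[R] P}
    (hinj : ∀ m : M, x • m = 0 → m = 0) (hfg : ∀ m, g m = 0 ↔ ∃ m', x • m' = m)
    (hg : Function.Surjective g) :
    ExtVan X P j ↔ ExtVan X M j ∧ ExtVan X M (j + 1) := by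
  refine extVan_iff_of_zero (f := LinearMap.lsmul R M x) ?_ ?_ hg ?_
  · exact (injective_iff_map_eq_zero _).2 hinj
  · exact hfg
  · intro j u
    exact comp_smul_eq_zero hx u (𝟙 _)

theorem extVan_zero_of_smul {x : R} (hx : ∀ y : X, x • y = 0)
    (hinj : ∀ m : M, x • m = 0 → m = 0) : ExtVan X M 0 :=
  extVan_zero_of_inj (LinearMap.lsmul R M x) ((injective_iff_map_eq_zero _).2 hinj)
    fun u => comp_smul_eq_zero hx u (𝟙 _)

/-- In degrees `j` at least the projective dimension of `X`, the functor `Ext^j(X, -)` is right exact.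
So a class in `Ext^j(X, I)` lifts along a presentation `R^k → I`, and the composite `R^k → I → R`
is a combination of coordinate functions with coefficients in `I`, which kills `Ext`. -/
theorem comp_subtype_eq_zero {j d : ℕ} (hd : HasProjectiveDimensionLT X (d + 1)) (hj : d ≤ j)
    (I : Ideal R) (hfg : I.FG) (hI : ∀ r ∈ I, ∀ x : X, r • x = 0)
    (u : Abelian.Ext X (ModuleCat.of R I) j) :
    u.comp (Abelian.Ext.mk₀ (ModuleCat.ofHom I.subtype)) (add_zero _) = 0 := by
  have : Module.Finite R I := Module.Finite.iff_fg.2 hfg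
  obtain ⟨k, π, hπ⟩ := Module.Finite.exists_fin' R I
  have hS := shortExact_of (f := (LinearMap.ker π).subtype) (g := π)
    (Submodule.subtype_injective _) (LinearMap.exact_subtype_ker_map π) hπ
  obtain ⟨v, rfl⟩ := Abelian.Ext.covariant_sequence_exact₃ X hS u rfl
    (Abelian.Ext.eq_zero_of_hasProjectiveDimensionLT _ (d + 1) (by lia))
  have hsum : ModuleCat.ofHom π ≫ ModuleCat.ofHom I.subtype =
      ∑ l : Fin k, ((π (Pi.single l 1) : I) : R) •
        ModuleCat.ofHom (LinearMap.proj (R := R) (φ := fun _ : Fin k => R) l) := by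
    apply ModuleCat.hom_ext
    rw [ModuleCat.hom_sum]
    refine LinearMap.pi_ext' fun l => LinearMap.ext_ring ?_
    simp [Pi.single_apply]
  have := Abelian.Ext.comp_assoc_of_second_deg_zero v
    (Abelian.Ext.mk₀ (ModuleCat.ofHom π)) (Abelian.Ext.mk₀ (ModuleCat.ofHom I.subtype))
    (add_zero j)
  refine this.trans ?_
  rw [Abelian.Ext.mk₀_comp_mk₀, hsum, Abelian.Ext.mk₀_sum, Abelian.Ext.comp_sum]
  exact Finset.sum_eq_zero fun l _ => comp_smul_eq_zero (hI _ (π (Pi.single l 1)).2) v _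
end extVanishing

noncomputable section

/-! ### The residue field of the polynomial ring -/

section polynomial
variable (K : Type) [Field K] {n : ℕ}

/-- The residue field `R/m`, as an object of the category of modules. -/
abbrev resField (K : Type) [Field K] (n : ℕ) : ModuleCat.{0} (MvPoly K (Fin n)) :=
  ModuleCat.of (MvPoly K (Fin n)) (MvPoly K (Fin n) ⧸ maxIdeal K (Fin n))

theorem smul_resField {r : MvPoly K (Fin n)} (hr : r ∈ maxIdeal K (Fin n))
    (y : resField K n) : r • y = 0 := by
  obtain ⟨y, rfl⟩ := Ideal.Quotient.mk_surjective (I := maxIdeal K (Fin n)) y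
  exact Ideal.Quotient.eq_zero_iff_mem.2 (Ideal.mul_mem_right _ _ hr)

theorem X_mem_maxIdeal (l : Fin n) : (X l : MvPoly K (Fin n)) ∈ maxIdeal K (Fin n) :=
  Ideal.subset_span ⟨l, rfl⟩

/-- The ideal generated by the variables `x_l` with `l ∈ s`. -/
def varIdeal (s : Finset (Fin n)) : Ideal (MvPoly K (Fin n)) :=
  Ideal.span (X '' (s : Set (Fin n)))

/-- The variables form a regular sequence, in any order. -/
theorem mem_varIdeal_of_X_mul {s : Finset (Fin n)} {k : Fin n} (hk : k ∉ s)
    {f : MvPoly K (Fin n)} (h : X k * f ∈ varIdeal K s) : f ∈ varIdeal K s := by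
  rw [varIdeal, mem_ideal_span_X_image] at h ⊢
  intro m hm
  obtain ⟨l, hl, hne⟩ := h (Finsupp.single k 1 + m) (by
    rw [mem_support_iff, coeff_X_mul]; exact mem_support_iff.1 hm)
  refine ⟨l, hl, ?_⟩
  have : k ≠ l := by rintro rfl; exact hk hl
  simpa [Finsupp.single_apply, this] using hne

theorem varIdeal_le_insert (s : Finset (Fin n)) (k : Fin n) :
    varIdeal K s ≤ varIdeal K (insert k s) :=
  Ideal.span_mono (Set.image_mono (by simp))

/-- The projection from the quotient by the variables in `s` to the quotient by one more variable. -/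
def varQuot (s : Finset (Fin n)) (k : Fin n) :
    (MvPoly K (Fin n) ⧸ varIdeal K s) →ₗ[MvPoly K (Fin n)]
      (MvPoly K (Fin n) ⧸ varIdeal K (insert k s)) :=
  Submodule.factor (varIdeal_le_insert K s k)

theorem varQuot_surjective (s : Finset (Fin n)) (k : Fin n) :
    Function.Surjective (varQuot K s k) := Submodule.factor_surjective (varIdeal_le_insert K s k)

theorem varQuot_eq_zero (s : Finset (Fin n)) (k : Fin n) (m : MvPoly K (Fin n) ⧸ varIdeal K s) :
    varQuot K s k m = 0 ↔ ∃ m', (X k : MvPoly K (Fin n)) • m' = m := by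
  obtain ⟨f, rfl⟩ := Submodule.Quotient.mk_surjective _ m
  have h1 : varQuot K s k (Submodule.Quotient.mk f) = 0 ↔ f ∈ varIdeal K (insert k s) :=
    Submodule.Quotient.mk_eq_zero _
  rw [h1]
  constructor
  · intro h
    rw [varIdeal, Finset.coe_insert, Set.image_insert_eq, Ideal.mem_span_insert] at h
    obtain ⟨a, z, hz, rfl⟩ := h
    refine ⟨Submodule.Quotient.mk a, ?_⟩
    rw [← Submodule.Quotient.mk_smul, Submodule.Quotient.eq, smul_eq_mul]
    have : X k * a - (a * X k + z) = -z := by ring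
    rw [this]
    exact neg_mem hz
  · rintro ⟨m', hm'⟩
    obtain ⟨a, rfl⟩ := Submodule.Quotient.mk_surjective _ m'
    rw [← Submodule.Quotient.mk_smul, Submodule.Quotient.eq, smul_eq_mul] at hm'
    have h2 := varIdeal_le_insert K s k hm'
    have h3 : (X k : MvPoly K (Fin n)) * a ∈ varIdeal K (insert k s) :=
      Ideal.mul_mem_right _ _ (Ideal.subset_span ⟨k, by simp, rfl⟩)
    simpa using sub_mem h3 h2

theorem X_smul_varQuot {s : Finset (Fin n)} {k : Fin n} (hk : k ∉ s)
    (m : MvPoly K (Fin n) ⧸ varIdeal K s) (h : (X k : MvPoly K (Fin n)) • m = 0) : m = 0 := by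
  obtain ⟨f, rfl⟩ := Submodule.Quotient.mk_surjective _ m
  rw [← Submodule.Quotient.mk_smul, Submodule.Quotient.mk_eq_zero] at h
  exact (Submodule.Quotient.mk_eq_zero _).2 (mem_varIdeal_of_X_mul K hk h)

/-- The depth of `R/(x_l : l ∈ s)` is at least `n - |s|`. -/
theorem extVan_varQuot (j : ℕ) : ∀ s : Finset (Fin n), j + s.card < n →
    ExtVan (resField K n) (MvPoly K (Fin n) ⧸ varIdeal K s) j := by
  induction j with
  | zero =>
    intro s hs
    obtain ⟨k, hk⟩ : ∃ k, k ∉ s := by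
      by_contra! h
      rw [Finset.eq_univ_iff_forall.2 h] at hs
      simp at hs
    exact extVan_zero_of_smul (smul_resField K (X_mem_maxIdeal K k)) (X_smul_varQuot K hk)
  | succ j ih =>
    intro s hs
    obtain ⟨k, hk⟩ : ∃ k, k ∉ s := by
      by_contra! h
      rw [Finset.eq_univ_iff_forall.2 h] at hs
      simp at hs
    have h := ih (insert k s) (by rw [Finset.card_insert_of_notMem hk]; lia)
    exact ((extVan_iff_of_smul (smul_resField K (X_mem_maxIdeal K k)) (X_smul_varQuot K hk)
      (varQuot_eq_zero K s k) (varQuot_surjective K s k)).1 h).2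

/-- The quotient by no variables is the ring itself. -/
def quotVarEmpty : (MvPoly K (Fin n) ⧸ varIdeal K (∅ : Finset (Fin n))) ≃ₗ[MvPoly K (Fin n)]
    MvPoly K (Fin n) :=
  Submodule.quotEquivOfEqBot _ (by simp [varIdeal])

theorem extVan_self {j : ℕ} (hj : j < n) :
    ExtVan (resField K n) (MvPoly K (Fin n)) j :=
  (ExtVan.congr (quotVarEmpty K)).1 (extVan_varQuot K j ∅ (by simpa using hj))

theorem pd_varQuot (s : Finset (Fin n)) :
    HasProjectiveDimensionLT (ModuleCat.of (MvPoly K (Fin n)) (MvPoly K (Fin n) ⧸ varIdeal K s))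
      (s.card + 1) := by
  induction s using Finset.induction_on with
  | empty =>
    have : Module.Projective (MvPoly K (Fin n)) (MvPoly K (Fin n) ⧸ varIdeal K ∅) :=
      Module.Projective.of_equiv (quotVarEmpty K).symm
    rw [Finset.card_empty, zero_add, ← projective_iff_hasProjectiveDimensionLT_one]
    exact (IsProjective.iff_projective (R := MvPoly K (Fin n))
      (MvPoly K (Fin n) ⧸ varIdeal K ∅)).1 this
  | insert k s hk ih =>
    rw [Finset.card_insert_of_notMem hk]
    have hS := shortExact_of
      (f := LinearMap.lsmul (MvPoly K (Fin n)) (MvPoly K (Fin n) ⧸ varIdeal K s) (X k))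
      ((injective_iff_map_eq_zero _).2 (X_smul_varQuot K hk))
      (varQuot_eq_zero K s k) (varQuot_surjective K s k)
    exact hS.hasProjectiveDimensionLT_X₃ _ ih
      (hasProjectiveDimensionLT_of_ge _ (s.card + 1) _ (by lia))

theorem pd_resField : HasProjectiveDimensionLT (resField K n) (n + 1) := by
  have h := pd_varQuot K (Finset.univ : Finset (Fin n))
  have e : varIdeal K (Finset.univ : Finset (Fin n)) = maxIdeal K (Fin n) := by
    simp [varIdeal, maxIdeal]
  rw [e] at h
  simpa using h

/-- The inclusion of `I` in `R` is zero on `Ext(R/m, -)`: below degree `n` because the target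
vanishes, from degree `n` on by right exactness. -/
theorem extVan_quot_iff {I : Ideal (MvPoly K (Fin n))} (hI : I ≤ maxIdeal K (Fin n)) (j : ℕ) :
    ExtVan (resField K n) (MvPoly K (Fin n) ⧸ I) j ↔
      ExtVan (resField K n) (MvPoly K (Fin n)) j ∧ ExtVan (resField K n) I (j + 1) := by
  refine extVan_iff_of_zero (f := I.subtype) (g := Submodule.mkQ I)
    (Submodule.subtype_injective _) (LinearMap.exact_subtype_mkQ I) (Submodule.mkQ_surjective _) ?_
  intro j u
  rcases lt_or_ge j n with hj | hj
  · exact (extVan_self K hj).elim _ _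
  · exact comp_subtype_eq_zero (pd_resField K) hj I (IsNoetherian.noetherian I)
      (fun r hr => smul_resField K (hI hr)) u

end polynomial

/-! ### Subquotients of a ring -/

section subquotients
variable {R : Type} [CommRing R] {I J I' J' : Ideal R}

/-- The subquotient `I / (I ∩ J)` of the ring. -/
abbrev SubQuot (J I : Ideal R) : Type := ↥I ⧸ Submodule.comap (Submodule.subtype I) J

/-- The class of `f ∈ I` in `I / (I ∩ J)`. -/
def SubQuot.mk (J : Ideal R) {I : Ideal R} (f : R) (hf : f ∈ I) : SubQuot J I :=
  Submodule.Quotient.mk ⟨f, hf⟩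

theorem SubQuot.exists_rep (z : SubQuot J I) : ∃ f, ∃ hf : f ∈ I, SubQuot.mk J f hf = z := by
  obtain ⟨⟨f, hf⟩, rfl⟩ := Submodule.Quotient.mk_surjective _ z
  exact ⟨f, hf, rfl⟩

theorem SubQuot.mk_eq_zero {f : R} {hf : f ∈ I} : SubQuot.mk J f hf = 0 ↔ f ∈ J :=
  Submodule.Quotient.mk_eq_zero _

theorem SubQuot.mk_eq_mk {f g : R} {hf : f ∈ I} {hg : g ∈ I} :
    SubQuot.mk J f hf = SubQuot.mk J g hg ↔ f - g ∈ J :=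
  Submodule.Quotient.eq _

/-- An additive map `φ : R → R` carrying `I` to `I'` and `I ∩ J` to `J'` that is `R`-linear on `I`
modulo `J'` induces an `R`-linear map of subquotients. -/
def SubQuot.map (φ : R →+ R) (h1 : ∀ f ∈ I, φ f ∈ I')
    (h2 : ∀ r, ∀ f ∈ I, φ (r * f) - r * φ f ∈ J') (h3 : ∀ f ∈ I, f ∈ J → φ f ∈ J') :
    SubQuot J I →ₗ[R] SubQuot J' I' :=
  Submodule.liftQ _
    { toFun := fun f => SubQuot.mk J' (φ f) (h1 _ f.2)
      map_add' := fun f g => by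
        refine SubQuot.mk_eq_mk.2 ?_ |>.trans (Submodule.Quotient.mk_add _)
        simp
      map_smul' := fun r f => by
        refine SubQuot.mk_eq_mk.2 ?_ |>.trans (Submodule.Quotient.mk_smul _ _ _)
        exact h2 r f f.2 }
    (fun f hf => SubQuot.mk_eq_zero.2 (h3 f f.2 hf))

theorem SubQuot.map_mk {φ : R →+ R} {h1 : ∀ f ∈ I, φ f ∈ I'}
    {h2 : ∀ r, ∀ f ∈ I, φ (r * f) - r * φ f ∈ J'} {h3 : ∀ f ∈ I, f ∈ J → φ f ∈ J'}
    {f : R} {hf : f ∈ I} :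
    SubQuot.map φ h1 h2 h3 (SubQuot.mk J f hf) = SubQuot.mk J' (φ f) (h1 f hf) := rfl

/-- The map of subquotients induced by the identity of `R`. -/
def SubQuot.incl (hI : I ≤ I') (hJ : ∀ f ∈ I, f ∈ J → f ∈ J') : SubQuot J I →ₗ[R] SubQuot J' I' :=
  SubQuot.map (AddMonoidHom.id R) hI (by simp) hJ

/-- The map of subquotients induced by multiplication by `x`. -/
def SubQuot.mulMap (x : R) (hI : ∀ f ∈ I, x * f ∈ I') (hJ : ∀ f ∈ I, f ∈ J → x * f ∈ J') :
    SubQuot J I →ₗ[R] SubQuot J' I' :=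
  SubQuot.map (AddMonoidHom.mulLeft x) hI
    (fun r f _ => by simp [mul_left_comm]) hJ

end subquotients

/-! ### Monomial ideals and lowering the top degree of a variable -/

section monomialIdeals
variable {K : Type} [Field K] {n : ℕ}

/-- `I` is the monomial ideal whose monomials are the `x^m` with `m ∈ U`. -/
def IsMon (I : Ideal (MvPoly K (Fin n))) (U : Set (Fin n →₀ ℕ)) : Prop :=
  ∀ f, f ∈ I ↔ ∀ m, coeff m f ≠ 0 → m ∈ U

/-- The ideal `x_i I`. -/
def xMul (i : Fin n) (I : Ideal (MvPoly K (Fin n))) : Ideal (MvPoly K (Fin n)) :=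
  Ideal.span {X i} * I

theorem mem_xMul {i : Fin n} {I : Ideal (MvPoly K (Fin n))} {f : MvPoly K (Fin n)} :
    f ∈ xMul i I ↔ ∃ g ∈ I, X i * g = f := Ideal.mem_span_singleton_mul

theorem X_mul_mem_xMul {i : Fin n} {I : Ideal (MvPoly K (Fin n))} {f : MvPoly K (Fin n)} :
    X i * f ∈ xMul i I ↔ f ∈ I := by
  rw [mem_xMul]
  refine ⟨?_, fun h => ⟨f, h, rfl⟩⟩
  rintro ⟨g, hg, h⟩
  rwa [← mul_left_cancel₀ (X_ne_zero i) h]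

theorem xMul_mono {i : Fin n} {I J : Ideal (MvPoly K (Fin n))} (h : I ≤ J) :
    xMul i I ≤ xMul i J := Ideal.mul_mono_right h

theorem IsMon.xMul {i : Fin n} {I : Ideal (MvPoly K (Fin n))} {U : Set (Fin n →₀ ℕ)}
    (hI : IsMon I U) : IsMon (xMul i I) {m | ∃ u ∈ U, Finsupp.single i 1 + u = m} := by
  intro f
  rw [mem_xMul]
  constructor
  · rintro ⟨g, hg, rfl⟩ m hm
    rw [coeff_X_mul'] at hm
    split_ifs at hm with h
    · refine ⟨m - Finsupp.single i 1, (hI g).1 hg _ hm, ?_⟩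
      rw [add_comm, tsub_add_cancel_of_le]
      simpa [Nat.one_le_iff_ne_zero] using h
    · exact absurd rfl hm
  · intro h
    refine ⟨f.divMonomial (Finsupp.single i 1), (hI _).2 fun m hm => ?_, ?_⟩
    · rw [coeff_divMonomial] at hm
      obtain ⟨u, hu, he⟩ := h _ hm
      rwa [← add_left_cancel he]
    · ext m
      rw [coeff_X_mul']
      split_ifs with hi
      · rw [coeff_divMonomial, add_comm, tsub_add_cancel_of_le]
        simpa [Nat.one_le_iff_ne_zero] using hi
      · by_contra hm
        obtain ⟨u, hu, rfl⟩ := h m (Ne.symm hm)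
        simp at hi

/-- The component of `x_i`-degree `k`. -/
def xComp (i : Fin n) (k : ℕ) : MvPoly K (Fin n) →+ MvPoly K (Fin n) :=
  (weightedHomogeneousComponent (Pi.single i 1 : Fin n → ℕ) k).toAddMonoidHom

theorem coeff_xComp (i : Fin n) (k : ℕ) (f : MvPoly K (Fin n)) (m : Fin n →₀ ℕ) :
    coeff m (xComp i k f) = if m i = k then coeff m f else 0 := by
  have : coeff m (xComp i k f) = _ :=
    coeff_weightedHomogeneousComponent (w := (Pi.single i 1 : Fin n → ℕ)) k f m
  rw [this, Finsupp.weight_single_one_apply]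

/-- `f ↦` (component of `x_i`-degree `k + 1` of `f`) / `x_i`. -/
def xLower (i : Fin n) (k : ℕ) : MvPoly K (Fin n) →+ MvPoly K (Fin n) :=
  AddMonoidHom.mk' (fun f => (xComp i (k + 1) f).divMonomial (Finsupp.single i 1))
    (fun f g => by rw [map_add, add_divMonomial])

theorem coeff_xLower (i : Fin n) (k : ℕ) (f : MvPoly K (Fin n)) (m : Fin n →₀ ℕ) :
    coeff m (xLower i k f) = if m i = k then coeff (Finsupp.single i 1 + m) f else 0 := by
  have : coeff m (xLower i k f) = _ := coeff_divMonomial (Finsupp.single i 1) (xComp i (k + 1) f) m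
  rw [this, coeff_xComp]
  simp [add_comm 1 (m i)]

/-- `f ↦ f -` (component of `x_i`-degree `k` of `f`). -/
def dropComp (i : Fin n) (k : ℕ) : MvPoly K (Fin n) →+ MvPoly K (Fin n) :=
  AddMonoidHom.id _ - xComp i k

theorem coeff_dropComp (i : Fin n) (k : ℕ) (f : MvPoly K (Fin n)) (m : Fin n →₀ ℕ) :
    coeff m (dropComp i k f) = if m i = k then 0 else coeff m f := by
  have : dropComp i k f = f - xComp i k f := rfl
  rw [this, coeff_sub, coeff_xComp]
  split_ifs <;> simp

/-- Linearity of an additive map modulo `J` need only be checked on monomial scalars. -/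
theorem linear_of_monomial {φ : MvPoly K (Fin n) →+ MvPoly K (Fin n)}
    {I J : Ideal (MvPoly K (Fin n))}
    (h : ∀ s c, ∀ f ∈ I, φ (monomial s c * f) - monomial s c * φ f ∈ J) (r : MvPoly K (Fin n)) :
    ∀ f ∈ I, φ (r * f) - r * φ f ∈ J := by
  intro f hf
  induction r using MvPolynomial.induction_on' with
  | monomial s c => exact h s c f hf
  | add p q hp hq =>
    have := add_mem hp hq
    rw [add_mul, add_mul, map_add]
    convert this using 1
    ring

/-- The combinatorial relation between the monomials of `I` (exponents in `U`) and those of the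
ideal `L` (exponents in `W`) when the generators of the top `x_i`-degree `k + 1` of `I` are divided
by `x_i`. -/
structure Step (i : Fin n) (k : ℕ) (U W : Set (Fin n →₀ ℕ)) : Prop where
  upU : ∀ m ∈ U, ∀ m', m ≤ m' → m' ∈ U
  upW : ∀ m ∈ W, ∀ m', m ≤ m' → m' ∈ W
  sub : U ⊆ W
  up : ∀ m ∈ W, Finsupp.single i 1 + m ∈ U
  down : ∀ m, Finsupp.single i 1 + m ∈ U → m i = k → m ∈ W
  eq : ∀ m ∈ W, m i ≠ k → m ∈ U

variable {i : Fin n} {k : ℕ} {U W : Set (Fin n →₀ ℕ)} {I L : Ideal (MvPoly K (Fin n))}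

theorem Step.le (h : Step i k U W) (hI : IsMon I U) (hL : IsMon L W) : I ≤ L :=
  fun f hf => (hL f).2 fun m hm => h.sub ((hI f).1 hf m hm)

theorem Step.X_mul_mem (h : Step i k U W) (hI : IsMon I U) (hL : IsMon L W) :
    ∀ f ∈ L, X i * f ∈ I := by
  intro f hf
  refine (hI _).2 fun m hm => ?_
  obtain ⟨u, hu, rfl⟩ := (hL.xMul (X i * f)).1 (X_mul_mem_xMul.2 hf) m hm
  exact h.up u hu

theorem Step.xMul_le (h : Step i k U W) (hI : IsMon I U) (hL : IsMon L W) : xMul i L ≤ I := by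
  intro f hf
  obtain ⟨g, hg, rfl⟩ := mem_xMul.1 hf
  exact h.X_mul_mem hI hL g hg

/-- The retraction of multiplication by `x_i`, `L/I → I/x_iI`, that takes the component of
`x_i`-degree `k + 1` and divides it by `x_i`. -/
def Step.retr (h : Step i k U W) (hI : IsMon I U) (hL : IsMon L W) :
    SubQuot (xMul i I) I →ₗ[MvPoly K (Fin n)] SubQuot I L :=
  SubQuot.map (xLower i k)
    (by
      intro f hf
      refine (hL _).2 fun m hm => ?_
      rw [coeff_xLower] at hm
      split_ifs at hm with hk
      · exact h.down m ((hI f).1 hf _ hm) hk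
      · exact absurd rfl hm)
    (linear_of_monomial fun s c f hf => by
      refine (hI _).2 fun m hm => ?_
      -- every surviving coefficient comes from a monomial `x_i x^{m-s}` of `f` with `x_i ∣ x^s`
      rw [coeff_sub, coeff_xLower, coeff_monomial_mul', coeff_monomial_mul', coeff_xLower] at hm
      have key : ∀ u, u + s = Finsupp.single i 1 + m → s i ≠ 0 → coeff u f ≠ 0 → m ∈ U := by
        intro u hu hs hc
        refine h.upU u ((hI f).1 hf u hc) m fun l => ?_
        have := DFunLike.congr_fun hu l
        by_cases hl : i = l
        · subst hl; simp at this; lia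
        · simp [hl] at this; lia
      by_cases hs : s i = 0
      · exfalso
        apply hm
        have e1 : s ≤ Finsupp.single i 1 + m ↔ s ≤ m := by
          constructor
          · intro hle l
            have := hle l
            by_cases hl : i = l
            · subst hl; simp [hs]
            · simpa [Finsupp.single_apply, hl] using this
          · exact fun hle => hle.trans le_add_self
        by_cases hle : s ≤ m
        · rw [if_pos (e1.2 hle), if_pos hle, add_tsub_assoc_of_le hle]
          simp [hs]
        · rw [if_neg (fun h => hle (e1.1 h)), if_neg hle]
          simp
      · by_cases hc : s ≤ Finsupp.single i 1 + m ∧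
          coeff (Finsupp.single i 1 + m - s) f ≠ 0
        · exact key _ (tsub_add_cancel_of_le hc.1) hs hc.2
        · exfalso
          apply hm
          have e1 : (if s ≤ Finsupp.single i 1 + m then
              c * coeff (Finsupp.single i 1 + m - s) f else 0) = 0 := by
            split_ifs with h1
            · rw [not_not.1 fun h2 => hc ⟨h1, h2⟩, mul_zero]
            · rfl
          rw [e1]
          by_cases hle : s ≤ m
          · rw [← add_tsub_assoc_of_le hle]
            rw [if_pos (hle.trans le_add_self)] at e1
            rw [if_pos hle]
            split_ifs <;> simp_all
          · simp [hle])
    (by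
      intro f _ hf
      refine (hI _).2 fun m hm => ?_
      rw [coeff_xLower] at hm
      split_ifs at hm with hk
      · obtain ⟨u, hu, he⟩ := (hI.xMul f).1 hf _ hm
        rwa [← add_left_cancel he]
      · exact absurd rfl hm)

/-- The split short exact sequence `0 → L/I → I/x_iI → I/x_iL → 0`. -/
theorem Step.extVan_left (h : Step i k U W) (hI : IsMon I U) (hL : IsMon L W)
    (Y : ModuleCat.{0} (MvPoly K (Fin n))) (j : ℕ) :
    ExtVan Y (SubQuot (xMul i I) I) j ↔
      ExtVan Y (SubQuot I L) j ∧ ExtVan Y (SubQuot (xMul i L) I) j := by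
  refine extVan_iff_of_split
    (f := SubQuot.mulMap (X i) (h.X_mul_mem hI hL) fun f _ hf => X_mul_mem_xMul.2 hf)
    (g := SubQuot.incl le_rfl fun f _ hf => xMul_mono (h.le hI hL) hf) ?_ ?_ ?_
    (h.retr hI hL) ?_
  · refine (injective_iff_map_eq_zero _).2 fun z hz => ?_
    obtain ⟨f, hf, rfl⟩ := z.exists_rep
    exact SubQuot.mk_eq_zero.2 (X_mul_mem_xMul.1 (SubQuot.mk_eq_zero.1 hz))
  · intro z
    constructor
    · intro hz
      obtain ⟨f, hf, rfl⟩ := z.exists_rep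
      obtain ⟨g, hg, rfl⟩ := mem_xMul.1 (SubQuot.mk_eq_zero.1 hz)
      exact ⟨SubQuot.mk I g hg, rfl⟩
    · rintro ⟨y, rfl⟩
      obtain ⟨f, hf, rfl⟩ := y.exists_rep
      exact SubQuot.mk_eq_zero.2 (X_mul_mem_xMul.2 hf)
  · intro z
    obtain ⟨f, hf, rfl⟩ := z.exists_rep
    exact ⟨SubQuot.mk _ f hf, rfl⟩
  · refine LinearMap.ext fun z => ?_
    obtain ⟨f, hf, rfl⟩ := z.exists_rep
    refine SubQuot.mk_eq_mk.2 ((hI _).2 fun m hm => ?_)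
    have e : coeff m (xLower i k (X i * f) - f) =
        (if m i = k then coeff m f else 0) - coeff m f := by
      rw [coeff_sub, coeff_xLower, coeff_X_mul]
    have hm' : (if m i = k then coeff m f else 0) - coeff m f ≠ 0 := fun h0 => hm (e.trans h0)
    split_ifs at hm' with hk
    · simp at hm'
    · exact h.eq m ((hL f).1 hf m (by simpa using hm')) hk

/-- The map `L/x_iL → I/x_iL` that removes the component of `x_i`-degree `k`; it becomes a retraction
of the inclusion once all monomials of `I` of `x_i`-degree `k` lie in `x_iL`. -/
def Step.retr₂ (h : Step i k U W) (hI : IsMon I U) (hL : IsMon L W) :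
    SubQuot (xMul i L) L →ₗ[MvPoly K (Fin n)] SubQuot (xMul i L) I :=
  SubQuot.map (dropComp i k)
    (by
      intro f hf
      refine (hI _).2 fun m hm => ?_
      rw [coeff_dropComp] at hm
      split_ifs at hm with hk
      · exact absurd rfl hm
      · exact h.eq m ((hL f).1 hf m hm) hk)
    (linear_of_monomial fun s c f hf => by
      refine (hL.xMul _).2 fun m hm => ?_
      -- a coefficient survives only if `x_i ∣ x^s`, and then `x^{m-s}` divides `x^m / x_i`
      rw [coeff_sub, coeff_dropComp, coeff_monomial_mul', coeff_monomial_mul',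
        coeff_dropComp] at hm
      by_cases hle : s ≤ m
      · rw [if_pos hle, if_pos hle] at hm
        by_cases hs : s i = 0
        · exfalso; apply hm
          simp [hs]
        · have hc : coeff (m - s) f ≠ 0 := by
            intro h0; apply hm; simp [h0]
          refine ⟨m - Finsupp.single i 1, h.upW _ ((hL f).1 hf _ hc) _ ?_, ?_⟩
          · refine tsub_le_tsub_left ?_ m
            simpa [Nat.one_le_iff_ne_zero] using hs
          · rw [add_comm, tsub_add_cancel_of_le]
            have := hle i
            simp; lia
      · simp [hle] at hm)
    (by
      intro f _ hf
      refine (hL.xMul _).2 fun m hm => ?_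
      rw [coeff_dropComp] at hm
      split_ifs at hm with hk
      · exact absurd rfl hm
      · exact (hL.xMul f).1 hf m hm)

/-- The short exact sequence `0 → I/x_iL → L/x_iL → L/I → 0`. -/
theorem Step.shortExact_right (h : Step i k U W) (hI : IsMon I U) (hL : IsMon L W) :
    Function.Injective (SubQuot.incl (h.le hI hL) fun _ _ hf => hf :
      SubQuot (xMul i L) I →ₗ[MvPoly K (Fin n)] SubQuot (xMul i L) L) ∧
    Function.Exact (SubQuot.incl (h.le hI hL) fun _ _ hf => hf :
      SubQuot (xMul i L) I →ₗ[MvPoly K (Fin n)] SubQuot (xMul i L) L)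
      (SubQuot.incl le_rfl fun _ _ hf => h.xMul_le hI hL hf :
      SubQuot (xMul i L) L →ₗ[MvPoly K (Fin n)] SubQuot I L) ∧
    Function.Surjective (SubQuot.incl le_rfl fun _ _ hf => h.xMul_le hI hL hf :
      SubQuot (xMul i L) L →ₗ[MvPoly K (Fin n)] SubQuot I L) := by
  refine ⟨?_, ?_, ?_⟩
  · refine (injective_iff_map_eq_zero _).2 fun z hz => ?_
    obtain ⟨f, hf, rfl⟩ := z.exists_rep
    exact SubQuot.mk_eq_zero.2 (SubQuot.mk_eq_zero.1 hz)
  · intro z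
    constructor
    · intro hz
      obtain ⟨f, hf, rfl⟩ := z.exists_rep
      exact ⟨SubQuot.mk _ f (SubQuot.mk_eq_zero.1 hz), rfl⟩
    · rintro ⟨y, rfl⟩
      obtain ⟨f, hf, rfl⟩ := y.exists_rep
      exact SubQuot.mk_eq_zero.2 hf
  · intro z
    obtain ⟨f, hf, rfl⟩ := z.exists_rep
    exact ⟨SubQuot.mk _ f hf, rfl⟩

theorem Step.extVan_imp (h : Step i k U W) (hI : IsMon I U) (hL : IsMon L W)
    (Y : ModuleCat.{0} (MvPoly K (Fin n))) (j : ℕ) (hv : ExtVan Y (SubQuot (xMul i I) I) j) :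
    ExtVan Y (SubQuot (xMul i L) L) j := by
  obtain ⟨h1, h2⟩ := (h.extVan_left hI hL Y j).1 hv
  obtain ⟨e1, e2, e3⟩ := h.shortExact_right hI hL
  exact ExtVan.mid e1 e2 e3 h2 h1

theorem Step.extVan_iff (h : Step i k U W)
    (h5 : ∀ m ∈ U, m i = k → ∃ w ∈ W, Finsupp.single i 1 + w = m)
    (hI : IsMon I U) (hL : IsMon L W)
    (Y : ModuleCat.{0} (MvPoly K (Fin n))) (j : ℕ) :
    ExtVan Y (SubQuot (xMul i I) I) j ↔ ExtVan Y (SubQuot (xMul i L) L) j := by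
  obtain ⟨e1, e2, e3⟩ := h.shortExact_right hI hL
  rw [h.extVan_left hI hL Y j, extVan_iff_of_split e1 e2 e3 (h.retr₂ hI hL), and_comm]
  refine LinearMap.ext fun z => ?_
  obtain ⟨f, hf, rfl⟩ := z.exists_rep
  refine SubQuot.mk_eq_mk.2 ((hL.xMul _).2 fun m hm => ?_)
  have e : coeff m (dropComp i k f - f) = (if m i = k then 0 else coeff m f) - coeff m f := by
    rw [coeff_sub, coeff_dropComp]
  have hm' : (if m i = k then 0 else coeff m f) - coeff m f ≠ 0 := fun h0 => hm (e.trans h0)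
  split_ifs at hm' with hk
  · exact h5 m ((hI f).1 hf m (by simpa using hm')) hk
  · simp at hm'

/-- The long exact sequence of `0 → I → I → I/x_iI → 0`, in which `x_i` acts as zero. -/
theorem extVan_subQuot_iff (i : Fin n) (I : Ideal (MvPoly K (Fin n))) (j : ℕ) :
    ExtVan (resField K n) (SubQuot (xMul i I) I) j ↔
      ExtVan (resField K n) I j ∧ ExtVan (resField K n) I (j + 1) := by
  refine extVan_iff_of_smul (smul_resField K (X_mem_maxIdeal K i))
    (g := Submodule.mkQ (Submodule.comap (Submodule.subtype I) (xMul i I))) ?_ ?_ ?_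
  · rintro ⟨f, hf⟩ h
    have : X i * f = 0 := congrArg Subtype.val h
    exact Subtype.ext ((mul_eq_zero.1 this).resolve_left (X_ne_zero i))
  · rintro ⟨f, hf⟩
    refine (Submodule.Quotient.mk_eq_zero _).trans ?_
    refine (mem_xMul (f := f)).trans ⟨?_, ?_⟩
    · rintro ⟨g, hg, rfl⟩
      exact ⟨⟨g, hg⟩, rfl⟩
    · rintro ⟨⟨g, hg⟩, h⟩
      exact ⟨g, hg, congrArg Subtype.val h⟩
  · exact Submodule.mkQ_surjective _

theorem extVan_ideal_zero (i : Fin n) (I : Ideal (MvPoly K (Fin n))) :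
    ExtVan (resField K n) I 0 := by
  refine extVan_zero_of_smul (smul_resField K (X_mem_maxIdeal K i)) ?_
  rintro ⟨f, hf⟩ h
  have : X i * f = 0 := congrArg Subtype.val h
  exact Subtype.ext ((mul_eq_zero.1 this).resolve_left (X_ne_zero i))

theorem forall_extVan_quot_iff (i : Fin n) {I : Ideal (MvPoly K (Fin n))}
    (hI : I ≤ maxIdeal K (Fin n)) (d : ℕ) :
    (∀ j < d, ExtVan (resField K n) (MvPoly K (Fin n) ⧸ I) j) ↔
      (∀ j < d, ExtVan (resField K n) (MvPoly K (Fin n)) j) ∧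
      ∀ j < d, ExtVan (resField K n) (SubQuot (xMul i I) I) j := by
  simp only [extVan_quot_iff K hI, extVan_subQuot_iff]
  constructor
  · intro h
    refine ⟨fun j hj => (h j hj).1, fun j hj => ⟨?_, (h j hj).2⟩⟩
    rcases j with _ | j
    · exact extVan_ideal_zero i I
    · exact (h j (by lia)).2
  · exact fun h j hj => ⟨h.1 j hj, (h.2 j hj).2⟩

end monomialIdeals

/-! ### Comparison of depths -/

section depth
variable {K : Type} [Field K] {n : ℕ}

theorem depthQ_le_of_imp {I L : Ideal (MvPoly K (Fin n))}
    (h : ∀ d : ℕ, (∀ j < d, ExtVan (resField K n) (MvPoly K (Fin n) ⧸ I) j) →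
      ∀ j < d, ExtVan (resField K n) (MvPoly K (Fin n) ⧸ L) j) :
    depthQ K (Fin n) I ≤ depthQ K (Fin n) L := by
  refine le_sInf ?_
  rintro _ ⟨l, rfl, hl⟩
  by_contra hlt
  refine not_subsingleton_iff_nontrivial.2 hl ((ext_subsingleton_iff _ _ l).2 ?_)
  refine h (l + 1) (fun j hj => ?_) l (by lia)
  by_contra hj'
  refine hlt ((sInf_le ⟨j, rfl, ?_⟩ : depthQ K (Fin n) I ≤ j).trans
    (by exact_mod_cast Nat.le_of_lt_succ hj))
  exact not_subsingleton_iff_nontrivial.1 fun hs => hj' ((ext_subsingleton_iff _ _ j).1 hs)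

variable {i : Fin n} {k : ℕ} {U W : Set (Fin n →₀ ℕ)} {I L : Ideal (MvPoly K (Fin n))}

theorem IsMon.le_maxIdeal (hI : IsMon I U) (h0 : (0 : Fin n →₀ ℕ) ∉ U) :
    I ≤ maxIdeal K (Fin n) := by
  intro f hf
  rw [maxIdeal, ← Set.image_univ, mem_ideal_span_X_image]
  intro m hm
  by_contra! hc
  have : m = 0 := Finsupp.ext fun l => hc l (Set.mem_univ l)
  subst this
  exact h0 ((hI f).1 hf 0 (mem_support_iff.1 hm))

theorem IsMon.eq_top (hI : IsMon I U) (hup : ∀ m ∈ U, ∀ m', m ≤ m' → m' ∈ U)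
    (h0 : (0 : Fin n →₀ ℕ) ∈ U) : I = ⊤ :=
  eq_top_iff.2 fun f _ => (hI f).2 fun m _ => hup 0 h0 m (zero_le)

theorem Step.depth_le (h : Step i k U W) (hI : IsMon I U) (hL : IsMon L W) :
    depthQ K (Fin n) I ≤ depthQ K (Fin n) L := by
  refine depthQ_le_of_imp fun d hd => ?_
  by_cases h0 : (0 : Fin n →₀ ℕ) ∈ W
  · intro j _
    have hs : Subsingleton (MvPoly K (Fin n) ⧸ L) :=
      Submodule.Quotient.subsingleton_iff.2 (hL.eq_top h.upW h0)
    have hz := ModuleCat.isZero_of_subsingleton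
      (ModuleCat.of (MvPoly K (Fin n)) (MvPoly K (Fin n) ⧸ L))
    exact subsingleton_of_forall_eq 0 fun x => by
      rw [← Abelian.Ext.comp_mk₀_id x, hz.eq_of_src (𝟙 _) 0, Abelian.Ext.mk₀_zero,
        Abelian.Ext.comp_zero]
  · have hLm := hL.le_maxIdeal h0
    rw [forall_extVan_quot_iff i ((h.le hI hL).trans hLm)] at hd
    rw [forall_extVan_quot_iff i hLm]
    exact ⟨hd.1, fun j hj => h.extVan_imp hI hL _ j (hd.2 j hj)⟩

/-- The hypothesis `hk` serves only to make `I` the unit ideal when `L` is. -/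
theorem Step.depth_eq (h : Step i k U W) (hk : k ≠ 0)
    (h5 : ∀ m ∈ U, m i = k → ∃ w ∈ W, Finsupp.single i 1 + w = m)
    (hI : IsMon I U) (hL : IsMon L W) :
    depthQ K (Fin n) I = depthQ K (Fin n) L := by
  refine le_antisymm (h.depth_le hI hL) ?_
  by_cases h0 : (0 : Fin n →₀ ℕ) ∈ W
  · rw [hL.eq_top h.upW h0, hI.eq_top h.upU (h.eq 0 h0 (by simpa using hk.symm))]
  · have hLm := hL.le_maxIdeal h0
    refine depthQ_le_of_imp fun d hd => ?_
    rw [forall_extVan_quot_iff i hLm] at hd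
    rw [forall_extVan_quot_iff i ((h.le hI hL).trans hLm)]
    exact ⟨hd.1, fun j hj => (h.extVan_iff h5 hI hL _ j).2 (hd.2 j hj)⟩

end depth

/-! ### The family of ideals between `I` and its lowerings -/

section family
variable (K : Type) [Field K] {n : ℕ} (A B : Finset (Fin n →₀ ℕ)) (i : Fin n)

/-- The monomial ideal generated by the monomials with exponents in `A`, and by the monomials with
exponents in `B` divided by `x_i^c`. -/
def lowered (c : ℕ) : Ideal (MvPoly K (Fin n)) :=
  Ideal.span (mono K '' ↑((B.image fun a => a - Finsupp.single i c) ∪ A))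

/-- The exponents of the monomials in `lowered K A B i c`. -/
def loweredExp (c : ℕ) : Set (Fin n →₀ ℕ) :=
  {m | (∃ a ∈ A, a ≤ m) ∨ ∃ b ∈ B, b ≤ m + Finsupp.single i c}

theorem isMon_lowered (c : ℕ) : IsMon (lowered K A B i c) (loweredExp A B i c) := by
  intro f
  have : f ∈ lowered K A B i c ↔ _ := mem_ideal_span_monomial_image
  rw [this]
  refine forall_congr' fun m => ?_
  rw [mem_support_iff]
  refine imp_congr_right fun _ => ?_
  constructor
  · rintro ⟨a, ha, hle⟩
    rcases Finset.mem_union.1 (Finset.mem_coe.1 ha) with ha | ha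
    · obtain ⟨b, hb, rfl⟩ := Finset.mem_image.1 ha
      exact Or.inr ⟨b, hb, tsub_le_iff_right.1 hle⟩
    · exact Or.inl ⟨a, ha, hle⟩
  · rintro (⟨a, ha, hle⟩ | ⟨b, hb, hle⟩)
    · exact ⟨a, by simp [ha], hle⟩
    · refine ⟨b - Finsupp.single i c, ?_, tsub_le_iff_right.2 hle⟩
      simp only [Finset.coe_union, Finset.coe_image, Set.mem_union]
      exact Or.inl ⟨b, hb, rfl⟩

variable {A B i}

theorem single_add_apply (i l : Fin n) (c : ℕ) (m : Fin n →₀ ℕ) :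
    (m + Finsupp.single i c) l = m l + if l = i then c else 0 := by
  simp [Finsupp.single_apply, eq_comm]

theorem step_lowered {q p c k : ℕ} (hA : ∀ a ∈ A, a i ≤ p) (hB : ∀ b ∈ B, b i = q)
    (hk : q = c + k + 1) (hp : p ≤ k) :
    Step i k (loweredExp A B i c) (loweredExp A B i (c + 1)) where
  upU := by
    rintro m (⟨a, ha, h⟩ | ⟨b, hb, h⟩) m' hm
    · exact Or.inl ⟨a, ha, h.trans hm⟩
    · exact Or.inr ⟨b, hb, h.trans (add_le_add_left hm _)⟩
  upW := by
    rintro m (⟨a, ha, h⟩ | ⟨b, hb, h⟩) m' hm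
    · exact Or.inl ⟨a, ha, h.trans hm⟩
    · exact Or.inr ⟨b, hb, h.trans (add_le_add_left hm _)⟩
  sub := by
    rintro m (⟨a, ha, h⟩ | ⟨b, hb, h⟩)
    · exact Or.inl ⟨a, ha, h⟩
    · refine Or.inr ⟨b, hb, h.trans fun l => ?_⟩
      simp only [single_add_apply]
      split_ifs <;> lia
  up := by
    rintro m (⟨a, ha, h⟩ | ⟨b, hb, h⟩)
    · exact Or.inl ⟨a, ha, h.trans le_add_self⟩
    · refine Or.inr ⟨b, hb, h.trans fun l => ?_⟩
      rw [add_comm (Finsupp.single i 1) m]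
      simp only [single_add_apply]
      split_ifs <;> lia
  down := by
    rintro m (⟨a, ha, h⟩ | ⟨b, hb, h⟩) hm
    · refine Or.inl ⟨a, ha, fun l => ?_⟩
      have h1 := h l
      have h2 := hA a ha
      rw [add_comm, single_add_apply] at h1
      split_ifs at h1 with hl
      · subst hl; lia
      · exact h1
    · refine Or.inr ⟨b, hb, h.trans fun l => ?_⟩
      rw [add_comm (Finsupp.single i 1) m]
      simp only [single_add_apply]
      split_ifs <;> lia
  eq := by
    rintro m (⟨a, ha, h⟩ | ⟨b, hb, h⟩) hm
    · exact Or.inl ⟨a, ha, h⟩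
    · refine Or.inr ⟨b, hb, fun l => ?_⟩
      have h1 := h l
      have h2 := hB b hb
      have h3 := h i
      rw [single_add_apply] at h1 h3 ⊢
      rw [if_pos rfl] at h3
      by_cases hl : l = i
      · subst hl
        rw [if_pos rfl]
        lia
      · rw [if_neg hl] at h1 ⊢
        exact h1

theorem depth_lowered_succ {q p c k : ℕ} (hA : ∀ a ∈ A, a i ≤ p) (hB : ∀ b ∈ B, b i = q)
    (hk : q = c + k + 1) (hp : p + 1 ≤ k) :
    depthQ K (Fin n) (lowered K A B i c) = depthQ K (Fin n) (lowered K A B i (c + 1)) := by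
  refine (step_lowered hA hB hk (by lia)).depth_eq (by lia) ?_
    (isMon_lowered K A B i c) (isMon_lowered K A B i (c + 1))
  rintro m hm hmk
  have hle : Finsupp.single i 1 ≤ m := by simp; lia
  refine ⟨m - Finsupp.single i 1, ?_, by rw [add_comm, tsub_add_cancel_of_le hle]⟩
  rcases hm with ⟨a, ha, h⟩ | ⟨b, hb, h⟩
  · refine Or.inl ⟨a, ha, fun l => ?_⟩
    have h1 := h l
    have h2 := hA a ha
    rw [Finsupp.tsub_apply, Finsupp.single_apply]
    split_ifs with hl
    · subst hl; lia
    · simpa using h1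
  · -- such an `m` is too small in the variable `x_i` to lie above an element of `B`
    exfalso
    have h1 := h i
    have h2 := hB b hb
    rw [single_add_apply] at h1
    simp at h1
    lia

theorem depth_lowered {q : ℕ} (hA : ∀ a ∈ A, a i ≤ 0) (hB : ∀ b ∈ B, b i = q) (c : ℕ)
    (hc : c + 1 ≤ q) :
    depthQ K (Fin n) (lowered K A B i 0) = depthQ K (Fin n) (lowered K A B i c) := by
  induction c with
  | zero => rfl
  | succ c ih =>
    rw [ih (by lia)]
    exact depth_lowered_succ K hA hB (k := q - c - 1) (by lia) (by lia)

end family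

end

/-- behaviour of the depth when lowering the top degree of a variable
`x_i` in the minimal generators of a monomial ideal `I`. -/
theorem stmt6 (K : Type) [Field K] (n : ℕ) (I : Ideal (MvPoly K (Fin n)))
    (S : Finset (Fin n →₀ ℕ)) (hmin : ∀ a ∈ S, ∀ b ∈ S, a ≤ b → a = b)
    (hI : I = Ideal.span (mono K '' ↑S)) (i : Fin n) (hocc : ∃ a ∈ S, a i ≠ 0)
    (q p : ℕ) (hq : q = S.sup fun a => a i)
    (B A : Finset (Fin n →₀ ℕ))
    (hB : B = S.filter fun a => a i = q) (hA : A = S \ B)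
    (hp : p = A.sup fun a => a i)
    (L L' : Ideal (MvPoly K (Fin n)))
    (hL : L = Ideal.span (mono K '' ↑((B.image fun a => a - Finsupp.single i 1) ∪ A)))
    (hL' : L' =
      Ideal.span (mono K '' ↑((B.image fun a => a - Finsupp.single i (q - 1)) ∪ A))) :
    ((1 ≤ p ∧ p + 2 ≤ q) → depthQ K (Fin n) I = depthQ K (Fin n) L) ∧
    (q = p + 1 → depthQ K (Fin n) L ≥ depthQ K (Fin n) I) ∧
    ((p = 0 ∧ 2 ≤ q) → depthQ K (Fin n) I = depthQ K (Fin n) L') := by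
  have hAp : ∀ a ∈ A, a i ≤ p := fun a ha => hp ▸ Finset.le_sup (f := fun a => a i) ha
  have hBq : ∀ b ∈ B, b i = q := fun b hb => by
    rw [hB] at hb
    exact (Finset.mem_filter.1 hb).2
  have hBS : B ⊆ S := hB ▸ Finset.filter_subset _ _
  have hI0 : I = lowered K A B i 0 := by
    have : (B.image fun a => a - Finsupp.single i 0) ∪ A = S := by
      simp only [Finsupp.single_zero, tsub_zero, Finset.image_id', hA]
      exact Finset.union_sdiff_of_subset hBS
    rw [lowered, this, hI]
  have hL1 : L = lowered K A B i (0 + 1) := hL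
  have hL2 : L' = lowered K A B i (q - 1) := hL'
  rw [hI0, hL1, hL2]
  refine ⟨fun h => ?_, fun h => ?_, fun h => ?_⟩
  · exact depth_lowered_succ K hAp hBq (k := q - 1) (by lia) (by lia)
  · exact (step_lowered hAp hBq (k := p) (by lia) le_rfl).depth_le
      (isMon_lowered K A B i 0) (isMon_lowered K A B i (0 + 1))
  · exact depth_lowered K (h.1 ▸ hAp) hBq (q - 1) (by lia)
end
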